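/- (Theorem 2.1, equation (2.4).) For all positive integers a, b, s, x with x ≤ a and all integers k_1, …, k_s with 0 < k_1 < k_2 < ⋯ < k_s ≤ (2a−1)/2 such that the 2s triangular holes and the central rhombus of side 2x−1 are pairwise disjoint, the number of lozenge tilings of H_{2a−1,2b}(k_1,…,k_s; 2x−1) that are invariant under rotation by 180° about the center of the region equals the square of the number of lozenge tilings of H_{2a−1,2b}(k_1,…,k_s; 2x−1) that are invariant both under this 180° rotation and under reflection across the vertical symmetry axis; that is, M_⊙(H_{2a−1,2b}(k_1,…,k_s;2x−1)) = M_{⊙,|}(H_{2a−1,2b}(k_1,…,k_s;2x−1))². -/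

import Mathlib

/-!
Geometric setup: the triangular lattice is drawn in the plane (identified with `ℝ × ℝ`)
so that one family of lattice lines is vertical.  Lattice vertices are generated by
`v1 = (√3/2, 1/2)` and `v2 = (0,1)`, anchored so that the bottom vertex of the western
vertical side of the hexagon is at the origin.

The hexagon with side lengths `a, a, 2b, a, a, 2b` (clockwise from the northwestern side)
then has vertices `(0,0)`, `(0,2b)`, `(a√3/2, a/2+2b)`, `(a√3, 2b)`, `(a√3, 0)`,
`(a√3/2, -a/2)`; its center is `(a√3/2, b)` and its horizontal symmetry axis is `y = b`.
-/

noncomputable section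

abbrev Pt : Type := ℝ × ℝ

namespace PP

/-- √3, the ratio of the long diagonal of a unit lozenge to its side. -/
def s3 : ℝ := Real.sqrt 3

/-- The vertices of the triangular lattice (one family of lattice lines vertical). -/
def triLattice : Set Pt :=
  {p | ∃ m n : ℤ, p = ((m : ℝ) * (s3 / 2), (m : ℝ) / 2 + (n : ℝ))}

/-- The six unit vectors along lattice directions. -/
def unitVecs : Set Pt :=
  {(0, 1), (0, -1), (s3 / 2, 1 / 2), (-(s3 / 2), -(1 / 2)),
    (s3 / 2, -(1 / 2)), (-(s3 / 2), 1 / 2)}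

/-- A (unit) lozenge of the triangular lattice: the union of two unit lattice triangles
sharing an edge, i.e. the convex hull of `p, p+u, p+v, p+u+v` for a lattice vertex `p`
and two distinct non-opposite lattice unit vectors `u, v`. -/
def IsLozenge (L : Set Pt) : Prop :=
  ∃ p u v : Pt, p ∈ triLattice ∧ u ∈ unitVecs ∧ v ∈ unitVecs ∧ u ≠ v ∧ u ≠ -v ∧
    L = convexHull ℝ {p, p + u, p + v, p + u + v}

/-- A lozenge tiling of a region `R`: a set of lozenges covering `R` whose interiors
are pairwise disjoint. -/
def IsLozengeTiling (R : Set Pt) (T : Set (Set Pt)) : Prop :=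
  (∀ L ∈ T, IsLozenge L) ∧ ⋃₀ T = R ∧
    ∀ L ∈ T, ∀ L' ∈ T, L ≠ L' → interior L ∩ interior L' = ∅

/-- The hexagon with side lengths `A, A, 2b, A, A, 2b`, clockwise from the NW side. -/
def hexagon (A b : ℕ) : Set Pt :=
  convexHull ℝ
    {((0 : ℝ), (0 : ℝ)), ((0 : ℝ), 2 * (b : ℝ)),
      ((A : ℝ) * (s3 / 2), (A : ℝ) / 2 + 2 * (b : ℝ)),
      ((A : ℝ) * s3, 2 * (b : ℝ)), ((A : ℝ) * s3, (0 : ℝ)),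
      ((A : ℝ) * (s3 / 2), -((A : ℝ) / 2))}

/-- The left-pointing triangular hole of side 2 whose vertical (right) side lies at
distance `2k` (in units of `√3` times half the lattice spacing, i.e. at `x = k√3`)
from the left side of the hexagon, centered on the horizontal symmetry axis `y = b`. -/
def leftHole (b k : ℕ) : Set Pt :=
  convexHull ℝ
    {((k : ℝ) * s3, (b : ℝ) - 1), ((k : ℝ) * s3, (b : ℝ) + 1), (((k : ℝ) - 1) * s3, (b : ℝ))}

/-- The mirror image of `leftHole b k` across the vertical symmetry axis of the hexagon:
a right-pointing triangular hole of side 2. -/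
def rightHole (A b k : ℕ) : Set Pt :=
  convexHull ℝ
    {(((A : ℝ) - k) * s3, (b : ℝ) - 1), (((A : ℝ) - k) * s3, (b : ℝ) + 1),
      (((A : ℝ) - k + 1) * s3, (b : ℝ))}

/-- The region `H_{A,2b}(k_1,…,k_s)`: the hexagon with side lengths `A, A, 2b, A, A, 2b`,
with the (open) triangular holes `leftHole (k i)` and their mirror images removed. -/
def Hreg (A b s : ℕ) (k : Fin s → ℕ) : Set Pt :=
  hexagon A b \ ⋃ i : Fin s, (interior (leftHole b (k i)) ∪ interior (rightHole A b (k i)))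

/-- The horizontal lattice rhombus of side `t` centered at the center `(A√3/2, b)`
of the hexagon. -/
def centralRhombus (A b t : ℕ) : Set Pt :=
  convexHull ℝ
    {((A : ℝ) * (s3 / 2) - (t : ℝ) * (s3 / 2), (b : ℝ)),
      ((A : ℝ) * (s3 / 2) + (t : ℝ) * (s3 / 2), (b : ℝ)),
      ((A : ℝ) * (s3 / 2), (b : ℝ) - (t : ℝ) / 2),
      ((A : ℝ) * (s3 / 2), (b : ℝ) + (t : ℝ) / 2)}

/-- The region `H_{A,2b}(k_1,…,k_s; t)`: `H_{A,2b}(k_1,…,k_s)` with the (open) central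
horizontal rhombus of side `t` also removed. -/
def HregC (A b s : ℕ) (k : Fin s → ℕ) (t : ℕ) : Set Pt :=
  Hreg A b s k \ interior (centralRhombus A b t)

/-- Rotation by `180°` about the center `(A√3/2, b)` of the hexagon. -/
def rot180 (A b : ℕ) (p : Pt) : Pt := ((A : ℝ) * s3 - p.1, 2 * (b : ℝ) - p.2)

/-- Reflection across the vertical symmetry axis `x = A√3/2` of the hexagon. -/
def reflV (A : ℕ) (p : Pt) : Pt := ((A : ℝ) * s3 - p.1, p.2)

/-- A tiling is invariant under rotation by `180°` about the center of the region. -/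
def RotInvariant (A b : ℕ) (T : Set (Set Pt)) : Prop :=
  ∀ L ∈ T, rot180 A b '' L ∈ T

/-- A tiling is invariant under reflection across the vertical symmetry axis. -/
def ReflInvariant (A : ℕ) (T : Set (Set Pt)) : Prop :=
  ∀ L ∈ T, reflV A '' L ∈ T

/-- `M_⊙(R)`: the number of lozenge tilings of `R` invariant under rotation by `180°`
about the center (of the hexagon with parameters `A`, `b` from which `R` was built). -/
def Mrot (A b : ℕ) (R : Set Pt) : ℕ :=
  Nat.card {T : Set (Set Pt) // IsLozengeTiling R T ∧ RotInvariant A b T}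

/-- `M_{⊙,|}(R)`: the number of lozenge tilings of `R` invariant both under rotation by
`180°` about the center and under reflection across the vertical symmetry axis. -/
def MrotRefl (A b : ℕ) (R : Set Pt) : ℕ :=
  Nat.card {T : Set (Set Pt) //
    IsLozengeTiling R T ∧ RotInvariant A b T ∧ ReflInvariant A T}

end PP

/-!
Read column by column, a rotation-invariant tiling is determined by its left half, and the left half
is a system of particles: a particle sits at every right-pointing unit triangle that is matched
within its own column. Its lozenge moves it by `±1`, without collisions, on the way to the next
column, and each triangular hole inserts a pair of particles at `-1` and `1`. The left side of
length `2b` amounts to `b` such insertions made beforehand, which force the initial positions. The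
half-turn requires the final configuration, on the vertical symmetry axis, to be symmetric about
`0`, and the central rhombus requires it to avoid a neighbourhood of `0`. Invariance under the
vertical reflection as well requires every configuration to be symmetric.

The number of evolutions to a given endpoint is a determinant of numbers of simple walks. For a
symmetric endpoint, adding and subtracting the rows of each pair of particles factors this
determinant, up to sign, into one of "even" and one of "odd" walks. By the reflection principle,
the latter alone counts the symmetric evolutions. Summed over the endpoints, both counts have a
closed form in terms of the distances `p i` from the insertions to the axis:
* the product of the even and the odd minors is summed by the Cauchy–Binet formula to a determinant
  whose entries telescope to multiples of `1 / (p i + p j)`;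
* the odd minors are summed by recursion on the lower cut `x` of the positions, where a
  partial fraction expansion identifies the sum with a multiple of `∏ (p j - p i) / (p j + p i)`.

The theorem is then the evaluation of Cauchy's determinant,
`det (1 / (p i + p j)) = (∏ 1 / (2 p i)) (∏ (p j - p i) / (p j + p i)) ^ 2`.
-/

namespace HoleyHexagon

open Finset Matrix PP

/-! ### Cauchy's determinant and the Cauchy–Binet formula -/

section PairProducts

variable {α M R K : Type*}

/-- The product of `c (p i) (p j)` over all pairs `i < j`. -/
def pairProd [CommMonoid M] (c : α → α → M) {r : ℕ} (p : Fin r → α) : M :=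
  ∏ i, ∏ j ∈ Ioi i, c (p i) (p j)

lemma pairProd_succ [CommMonoid M] (c : α → α → M) {r : ℕ} (p : Fin (r + 1) → α) :
    pairProd c p = (∏ j : Fin r, c (p 0) (p j.succ)) * pairProd c fun i => p i.succ := by
  simp only [pairProd, Fin.prod_univ_succ (n := r), Fin.prod_Ioi_zero, Fin.prod_Ioi_succ]

lemma pairProd_succAbove [CommRing R] {c : α → α → R} (hc : ∀ u v, c u v = -c v u) {r : ℕ}
    (p : Fin (r + 1) → α) (i : Fin (r + 1)) :
    pairProd c p = (-1) ^ (i : ℕ) * (∏ j : Fin r, c (p i) (p (i.succAbove j))) *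
      pairProd c fun j => p (i.succAbove j) := by
  induction r with
  | zero => obtain rfl : i = 0 := Fin.fin_one_eq_zero i; simp [pairProd]
  | succ r ih =>
    cases i using Fin.cases with
    | zero => rw [pairProd_succ]; simp
    | succ i =>
      rw [pairProd_succ, ih (fun i => p i.succ) i,
        pairProd_succ c fun j => p (i.succ.succAbove j), Fin.prod_univ_succAbove _ i,
        Fin.prod_univ_succ (n := r)]
      simp only [Fin.succ_succAbove_zero, Fin.succ_succAbove_succ]
      rw [hc (p 0) (p i.succ), Fin.val_succ, pow_succ]
      ring

variable [Field K]

/-- The entry `(v - u) / (v + u)` of Schur's Pfaffian. -/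
def schurRatio (u v : K) : K := (v - u) / (v + u)

lemma schurRatio_antisymm (u v : K) : schurRatio u v = -schurRatio v u := by
  rw [schurRatio, schurRatio, ← neg_div, neg_sub, add_comm]

lemma det_one_div_add_succ {r : ℕ} (p : Fin (r + 1) → K) (hp : ∀ i j, p i + p j ≠ 0) :
    (of fun i j => 1 / (p i + p j)).det =
      1 / (2 * p 0) * (∏ i : Fin r, schurRatio (p 0) (p i.succ)) ^ 2 *
        (of fun i j : Fin r => 1 / (p i.succ + p j.succ)).det := by
  let B : Matrix (Fin (r + 1)) (Fin (r + 1)) K := of fun i j =>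
    if i = 0 then 1 / (p i + p j)
    else 1 / (p i + p j) - 2 * p 0 / (p i + p 0) * (1 / (p 0 + p j))
  have row_reduction : (of fun i j => 1 / (p i + p j)).det = B.det := by
    refine det_eq_of_forall_row_eq_smul_add_const
      (fun i => if i = 0 then 0 else 2 * p 0 / (p i + p 0)) 0 (by simp) fun i j => ?_
    by_cases hi : i = 0 <;> simp [B, hi]
  have first_column (i : Fin r) : B i.succ 0 = 0 := by
    have h0 : 2 * p 0 ≠ 0 := two_mul (p 0) ▸ hp 0 0
    have h2 : (2 : K) ≠ 0 := left_ne_zero_of_mul h0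
    have hp0 : p 0 ≠ 0 := right_ne_zero_of_mul h0
    have hi := hp i.succ 0
    simp only [B, of_apply, Fin.succ_ne_zero, if_false, ← two_mul]
    field_simp
    ring
  have minor : (B.submatrix Fin.succ Fin.succ).det =
      (∏ i : Fin r, schurRatio (p 0) (p i.succ)) * ((∏ i : Fin r, schurRatio (p 0) (p i.succ)) *
        (of fun i j : Fin r => 1 / (p i.succ + p j.succ)).det) := by
    rw [← det_mul_row, ← det_mul_column]
    congr 1
    ext i j
    have h1 := hp i.succ 0
    have h2 := hp j.succ 0
    have h3 := hp i.succ j.succ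
    simp only [B, submatrix_apply, of_apply, Fin.succ_ne_zero, if_false, schurRatio,
      add_comm (p 0)]
    field_simp
    ring
  rw [row_reduction, det_succ_column_zero, Fin.sum_univ_succ]
  simp only [first_column, mul_zero, zero_mul, sum_const_zero, add_zero, Fin.succAbove_zero]
  rw [minor]
  simp only [B, of_apply, if_true, ← two_mul]
  simp only [Fin.val_zero, pow_zero, one_div, one_mul]
  ring

theorem det_one_div_add {r : ℕ} (p : Fin r → K) (hp : ∀ i j, p i + p j ≠ 0) :
    (of fun i j => 1 / (p i + p j)).det = (∏ i, 1 / (2 * p i)) * pairProd schurRatio p ^ 2 := by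
  induction r with
  | zero => simp [pairProd]
  | succ r ih =>
    rw [det_one_div_add_succ p hp, ih _ fun i j => hp _ _, pairProd_succ, Fin.prod_univ_succ]
    ring

open Polynomial in
lemma prod_add_X_sub_prod_sub_X_eq_interpolate {r : ℕ} {p : Fin (r + 1) → K}
    (hp : ∀ i, p i ≠ 0) (hinj : Function.Injective p) :
    ∏ i, (C (p i) + X) - ∏ i, (C (p i) - X) =
      C 2 * X * Lagrange.interpolate univ p fun i => ∏ j : Fin r, (p i + p (i.succAbove j)) := by
  classical
  have hdeg {f : Fin (r + 1) → K[X]} (hf : ∀ i, (f i).natDegree ≤ 1) :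
      (∏ i, f i).natDegree ≤ r + 1 := by
    refine (natDegree_prod_le _ _).trans ((sum_le_card_nsmul _ _ 1 fun i _ => hf i).trans ?_)
    simp
  refine eq_of_natDegree_lt_card_of_eval_eq' _ _ (insert 0 (univ.image p)) (fun y hy => ?_) ?_
  · obtain rfl | ⟨k, -, rfl⟩ := by simpa only [mem_insert, mem_image] using hy
    · simp [eval_prod]
    · simp only [eval_sub, eval_prod, eval_add, eval_C, eval_X, eval_mul]
      rw [Lagrange.eval_interpolate_at_node _ hinj.injOn (mem_univ k),
        prod_eq_zero (f := fun i => p i - p k) (mem_univ k) (sub_self _),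
        Fin.prod_univ_succAbove _ k, sub_zero, two_mul]
      exact congrArg _ (prod_congr rfl fun j _ => add_comm _ _)
  · rw [card_insert_of_notMem (by simpa using hp), card_image_of_injective _ hinj, card_fin,
      max_lt_iff, Nat.lt_succ_iff, Nat.lt_succ_iff]
    refine ⟨(natDegree_sub_le_of_le (hdeg fun i => ?_) (hdeg fun i => ?_)).trans (max_self _).le,
      ?_⟩
    · compute_degree
    · compute_degree
    · have hX : (C (2 : K) * X).natDegree ≤ 1 := by compute_degree
      refine (natDegree_mul_le_of_le hX (natDegree_le_of_degree_le ?_)).trans (add_comm 1 r).le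
      exact (Lagrange.degree_interpolate_le _ hinj.injOn).trans (by simp)

lemma prod_erase_eq_prod_succAbove [CommMonoid M] {r : ℕ} (f : Fin (r + 1) → M)
    (i : Fin (r + 1)) : ∏ j ∈ univ.erase i, f j = ∏ j : Fin r, f (i.succAbove j) := by
  rw [Fin.univ_succAbove r i, erase_cons, prod_map]
  rfl

theorem prod_add_eq_prod_sub_add_sum {r : ℕ} {p : Fin (r + 1) → K} (hp : ∀ i, p i ≠ 0)
    (hinj : Function.Injective p) (x : K) :
    ∏ i, (p i + x) = ∏ i, (p i - x) + 2 * x * ∑ i, ∏ j : Fin r,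
      ((p (i.succAbove j) - x) * (p i + p (i.succAbove j)) / (p (i.succAbove j) - p i)) := by
  have h := congrArg (Polynomial.eval x) (prod_add_X_sub_prod_sub_X_eq_interpolate hp hinj)
  simp only [Polynomial.eval_sub, Polynomial.eval_prod, Polynomial.eval_add, Polynomial.eval_C,
    Polynomial.eval_X, Polynomial.eval_mul, Lagrange.interpolate_apply,
    Polynomial.eval_finsetSum, Lagrange.basis, Lagrange.basisDivisor,
    prod_erase_eq_prod_succAbove, ← prod_mul_distrib] at h
  rw [sub_eq_iff_eq_add'.mp h]
  congr! 4 with i _ j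
  rw [← neg_sub (p i), div_neg, div_eq_mul_inv]
  ring

end PairProducts

section IncreasingSums

variable {M : Type*} [AddCommMonoid M] {r : ℕ} {n : Type*}

instance [LinearOrder n] [Fintype n] : Fintype (Fin r ↪o n) :=
  Fintype.ofInjective (fun h => (h : Fin r → n)) DFunLike.coe_injective

instance [LinearOrder n] : Unique (Fin 0 ↪o n) where
  default := RelEmbedding.ofIsEmpty _ _
  uniq _ := RelEmbedding.ext fun i => i.elim0

lemma sum_orderEmb_fin_succ (N : ℕ) (g : (Fin (r + 1) → Fin (N + 1)) → M) :
    ∑ h : Fin (r + 1) ↪o Fin (N + 1), g h =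
      ∑ h : Fin (r + 1) ↪o Fin N, g (fun i => (h i).succ) +
        ∑ h : Fin r ↪o Fin N, g (Fin.cons 0 fun i => (h i).succ) := by
  let e : (Fin (r + 1) ↪o Fin N) ⊕ (Fin r ↪o Fin N) → (Fin (r + 1) ↪o Fin (N + 1)) := Sum.elim
    (fun h => h.trans (Fin.succOrderEmb N))
    (fun h => OrderEmbedding.ofStrictMono (Fin.cons 0 fun i => (h i).succ)
      (Fin.strictMono_cons.2 ⟨fun i => Fin.succ_pos _, Fin.strictMono_succ.comp h.strictMono⟩))
  have hinj : Function.Injective e := by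
    rintro (h | h) (h' | h') hh
    · exact congrArg _ (DFunLike.ext _ _ fun i =>
        Fin.succ_injective _ (DFunLike.congr_fun hh i))
    · exact absurd (DFunLike.congr_fun hh 0) (Fin.succ_ne_zero _)
    · exact absurd (DFunLike.congr_fun hh 0) (Fin.succ_ne_zero _).symm
    · exact congrArg _ (DFunLike.ext _ _ fun i =>
        Fin.succ_injective _ (DFunLike.congr_fun hh i.succ))
  have hsurj : Function.Surjective e := fun h => by
    by_cases h0 : h 0 = 0
    · have hne (i : Fin r) : h i.succ ≠ 0 :=
        ((Fin.zero_le _).trans_lt (h.strictMono (Fin.succ_pos i))).ne'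
      refine ⟨Sum.inr (OrderEmbedding.ofStrictMono (fun i => (h i.succ).pred (hne i))
        fun i j hij => Fin.pred_lt_pred_iff.2 (h.strictMono (Fin.succ_lt_succ_iff.2 hij))),
        DFunLike.ext _ _ fun i => ?_⟩
      cases i using Fin.cases with
      | zero => exact h0.symm
      | succ i => exact Fin.succ_pred _ (hne i)
    · have hne (i : Fin (r + 1)) : h i ≠ 0 :=
        ((Fin.pos_of_ne_zero h0).trans_le (h.monotone (Fin.zero_le i))).ne'
      exact ⟨Sum.inl (OrderEmbedding.ofStrictMono (fun i => (h i).pred (hne i))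
        fun i j hij => Fin.pred_lt_pred_iff.2 (h.strictMono hij)),
        DFunLike.ext _ _ fun i => Fin.succ_pred _ (hne i)⟩
  rw [← (Equiv.ofBijective e ⟨hinj, hsurj⟩).sum_comp, Fintype.sum_sum_type]
  rfl

variable [LinearOrder n] [Fintype n]

lemma sum_filter_injective_eq_sum_orderEmb_perm [DecidablePred (Function.Injective (α := Fin r)
    (β := n))] (g : (Fin r → n) → M) :
    ∑ f with Function.Injective f, g f =
      ∑ h : Fin r ↪o n, ∑ σ : Equiv.Perm (Fin r), g (h ∘ σ) := by
  rw [← Fintype.sum_prod_type']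
  symm
  refine sum_bij (fun q _ => q.1 ∘ q.2) (fun q _ => ?_) ?_ (fun f hf => ?_) (fun _ _ => rfl)
  · simpa using q.1.injective.comp q.2.injective
  · rintro ⟨h, σ⟩ - ⟨h', σ'⟩ - hq
    have hh : h = h' := DFunLike.coe_injective <| (h.strictMono.range_inj h'.strictMono).1 <| by
      simpa only [EquivLike.range_comp] using congrArg Set.range hq
    subst hh
    exact congrArg _ (Equiv.ext fun i => h.injective (congrFun hq i))
  · have hf : Function.Injective f := by simpa using hf
    refine ⟨⟨OrderEmbedding.ofStrictMono (f ∘ Tuple.sort f)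
      ((Tuple.monotone_sort f).strictMono_of_injective (hf.comp (Tuple.sort f).injective)),
      (Tuple.sort f)⁻¹⟩, mem_univ _, ?_⟩
    funext i
    simp

theorem det_mul_transpose_eq_sum_orderEmb {R : Type*} [CommRing R]
    (A B : Matrix (Fin r) n R) :
    (A * Bᵀ).det = ∑ h : Fin r ↪o n, (A.submatrix id h).det * (B.submatrix id h).det := by
  classical
  have expand : (A * Bᵀ).det =
      ∑ f : Fin r → n, (∏ i, A i (f i)) * (B.submatrix id f).det := by
    have hrows : A * Bᵀ = fun i => ∑ k, A i k • fun j => B j k := by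
      ext i j; simp [mul_apply, Finset.sum_apply]
    rw [hrows]
    refine ((detRowAlternating (n := Fin r) (R := R)).map_sum fun i k => A i k • fun j => B j k
      ).trans (sum_congr rfl fun f _ => ?_)
    rw [← det_transpose (B.submatrix id f)]
    exact (detRowAlternating (n := Fin r) (R := R)).map_smul_univ (fun i => A i (f i))
      fun i j => B j (f i)
  have repeated (f : Fin r → n) (hf : ¬Function.Injective f) : (B.submatrix id f).det = 0 := by
    obtain ⟨i, j, hij, hne⟩ := by simpa only [Function.Injective, not_forall] using hf
    exact det_zero_of_column_eq hne fun k => by simp [hij]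
  rw [expand, ← sum_filter_of_ne fun f _ hf => not_not.1 fun hf' =>
    hf (by rw [repeated f hf', mul_zero]), sum_filter_injective_eq_sum_orderEmb_perm]
  refine sum_congr rfl fun h _ => ?_
  rw [← det_transpose (A.submatrix id h), det_apply, sum_mul]
  refine sum_congr rfl fun σ _ => ?_
  rw [show B.submatrix id (h ∘ σ) = (B.submatrix id h).submatrix id σ from rfl, det_permute',
    Units.smul_def, zsmul_eq_mul]
  simp only [transpose_apply, submatrix_apply, id, Function.comp_apply]
  ring

end IncreasingSums

/-! ### Minors of even and odd walks -/

section ShiftedBinomials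

/-- The number of simple walks of length `2p` from `0` to `2h`; even in `h`. -/
def evenWalk (p h : ℕ) : ℚ := (2 * p).choose (p + h)

/-- The odd counterpart of `evenWalk`: the difference of the numbers of simple walks of length
`2p - 1` to `2h` from `1` and from `-1`. -/
def oddWalk (p h : ℕ) : ℚ := h / p * evenWalk p h

/-- The value at the cut `x` of the telescoping sum of `evenWalk * oddWalk` over `h ≥ x`, up to
normalization. -/
def walkTail (x p : ℕ) : ℚ := (p + x) * evenWalk p x

/-- The closed form of the sum of the minors of `oddWalk` with rows `p` over all increasing
sequences of columns that are at least `x`. -/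
def oddMinorSum (x : ℕ) {r : ℕ} (p : Fin r → ℕ) : ℚ :=
  (∏ i, walkTail x (p i) / (2 * p i)) * pairProd schurRatio fun i => (p i : ℚ)

lemma evenWalk_eq_zero {p h : ℕ} (hph : p < h) : evenWalk p h = 0 := by
  rw [evenWalk, Nat.choose_eq_zero_of_lt (by omega), Nat.cast_zero]

lemma walkTail_eq_zero {x p : ℕ} (hpx : p < x) : walkTail x p = 0 := by
  rw [walkTail, evenWalk_eq_zero hpx, mul_zero]

lemma walkTail_succ (x p : ℕ) : walkTail (x + 1) p = (p - x) * evenWalk p x := by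
  rcases le_or_gt x p with h | h
  · have key := congrArg (Nat.cast : ℕ → ℚ) (Nat.choose_succ_right_eq (2 * p) (p + x))
    rw [show 2 * p - (p + x) = p - x by omega] at key
    push_cast [Nat.cast_sub h] at key
    rw [walkTail, evenWalk, evenWalk, ← add_assoc]
    push_cast
    linear_combination key
  · rw [walkTail_eq_zero (h.trans (lt_add_one x)), evenWalk_eq_zero h, mul_zero]

lemma oddMinorSum_eq_prod_add_mul (x : ℕ) {r : ℕ} (p : Fin r → ℕ) :
    oddMinorSum x p = (∏ i, ((p i : ℚ) + x)) *
      ((∏ i, evenWalk (p i) x / (2 * p i)) * pairProd schurRatio fun i => (p i : ℚ)) := by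
  rw [oddMinorSum, ← mul_assoc, ← prod_mul_distrib]
  simp only [walkTail, mul_div_assoc]

lemma oddMinorSum_succ_eq_prod_sub_mul (x : ℕ) {r : ℕ} (p : Fin r → ℕ) :
    oddMinorSum (x + 1) p = (∏ i, ((p i : ℚ) - x)) *
      ((∏ i, evenWalk (p i) x / (2 * p i)) * pairProd schurRatio fun i => (p i : ℚ)) := by
  rw [oddMinorSum, ← mul_assoc, ← prod_mul_distrib]
  simp only [walkTail_succ, mul_div_assoc]

variable {r N : ℕ}

lemma oddWalk_mul_oddMinorSum_succAbove (x : ℕ) {p : Fin (r + 1) → ℕ} (hp : ∀ i, 0 < p i)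
    (hinj : Function.Injective p) (i : Fin (r + 1)) :
    (-1) ^ (i : ℕ) * oddWalk (p i) x * oddMinorSum (x + 1) (fun j => p (i.succAbove j)) =
      2 * x * (∏ j : Fin r, ((p (i.succAbove j) : ℚ) - x) * (p i + p (i.succAbove j)) /
          (p (i.succAbove j) - p i)) *
        ((∏ i, evenWalk (p i) x / (2 * p i)) * pairProd schurRatio fun i => (p i : ℚ)) := by
  have hq (i) : (0 : ℚ) < p i := Nat.cast_pos.2 (hp i)
  have cancel : (∏ j : Fin r, ((p i : ℚ) + p (i.succAbove j)) / (p (i.succAbove j) - p i)) *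
      ∏ j : Fin r, schurRatio (p i : ℚ) (p (i.succAbove j)) = 1 := by
    rw [← prod_mul_distrib]
    refine prod_eq_one fun j _ => ?_
    have hi := hq i
    have hj := hq (i.succAbove j)
    have hne : (p (i.succAbove j) : ℚ) - p i ≠ 0 :=
      sub_ne_zero.2 fun h => Fin.succAbove_ne i j (hinj (Nat.cast_injective h))
    rw [schurRatio]
    field_simp
    ring
  have split : (∏ j : Fin r, ((p (i.succAbove j) : ℚ) - x) * (p i + p (i.succAbove j)) /
      (p (i.succAbove j) - p i)) = (∏ j : Fin r, ((p (i.succAbove j) : ℚ) - x)) *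
        ∏ j : Fin r, ((p i : ℚ) + p (i.succAbove j)) / (p (i.succAbove j) - p i) := by
    simp only [← prod_mul_distrib, mul_div_assoc]
  have hodd : oddWalk (p i) x = 2 * x * (evenWalk (p i) x / (2 * p i)) := by
    rw [oddWalk, mul_div_assoc', mul_assoc, mul_div_mul_left _ _ two_ne_zero, mul_div_right_comm]
  rw [pairProd_succAbove schurRatio_antisymm (fun i => (p i : ℚ)) i,
    Fin.prod_univ_succAbove (fun i => evenWalk (p i) x / (2 * p i)) i,
    oddMinorSum_succ_eq_prod_sub_mul, split, hodd]
  set P := ∏ j : Fin r, ((p (i.succAbove j) : ℚ) - x)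
  set E := ∏ j : Fin r, evenWalk (p (i.succAbove j)) x / (2 * p (i.succAbove j) : ℚ)
  set Q := pairProd schurRatio fun j => (p (i.succAbove j) : ℚ)
  linear_combination
    (-(2 * x * (evenWalk (p i) x / (2 * p i)) * (-1) ^ (i : ℕ) * P * E * Q)) * cancel

lemma oddMinorSum_eq_succ_add_sum (x : ℕ) {p : Fin (r + 1) → ℕ} (hp : ∀ i, 0 < p i)
    (hinj : Function.Injective p) :
    oddMinorSum x p = oddMinorSum (x + 1) p + ∑ i : Fin (r + 1), (-1) ^ (i : ℕ) *
      oddWalk (p i) x * oddMinorSum (x + 1) (fun j => p (i.succAbove j)) := by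
  have partial_fractions := prod_add_eq_prod_sub_add_sum (p := fun i => (p i : ℚ))
    (fun i => Nat.cast_ne_zero.2 (hp i).ne') (Nat.cast_injective.comp hinj) x
  simp only [oddWalk_mul_oddMinorSum_succAbove x hp hinj]
  rw [oddMinorSum_eq_prod_add_mul, oddMinorSum_succ_eq_prod_sub_mul, partial_fractions, ← sum_mul,
    ← mul_sum, add_mul]

theorem sum_det_oddWalk (x : ℕ) {p : Fin r → ℕ} (hp : ∀ i, 0 < p i)
    (hinj : Function.Injective p) (hN : ∀ i, p i < x + N) :
    ∑ h : Fin r ↪o Fin N, (of fun i j => oddWalk (p i) (x + h j)).det = oddMinorSum x p := by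
  induction N generalizing r x with
  | zero =>
    cases r with
    | zero => simp [oddMinorSum, pairProd]
    | succ r =>
      have : IsEmpty (Fin (r + 1) ↪o Fin 0) := ⟨fun h => (h 0).elim0⟩
      rw [Fintype.sum_empty, oddMinorSum, prod_eq_zero (mem_univ 0), zero_mul]
      rw [walkTail_eq_zero (by simpa using hN 0), zero_div]
  | succ N ih =>
    cases r with
    | zero => simp [oddMinorSum, pairProd]
    | succ r =>
      have reindex {m : ℕ} (k : Fin N) : oddWalk m (x + (k.succ : Fin (N + 1))) =
          oddWalk m (x + 1 + k) := by
        rw [Fin.val_succ, add_assoc, add_comm 1]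
      rw [sum_orderEmb_fin_succ N fun h => (of fun i j => oddWalk (p i) (x + h j)).det,
        oddMinorSum_eq_succ_add_sum x hp hinj, ← ih (x + 1) hp hinj fun i => by grind]
      simp only [reindex]
      congr 1
      simp only [det_succ_column_zero]
      rw [sum_comm]
      refine sum_congr rfl fun i _ => ?_
      rw [← ih (x + 1) (fun j => hp _) (hinj.comp Fin.succAbove_right_injective)
        fun j => by grind, mul_sum]
      refine sum_congr rfl fun h _ => ?_
      congr 2
      ext k l
      simp [add_assoc, add_comm 1]

lemma sum_evenWalk_mul_oddWalk (x : ℕ) {p q : ℕ} (hp : 0 < p) (hq : 0 < q) (hN : p < x + N) :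
    ∑ k : Fin N, evenWalk p (x + k) * oddWalk q (x + k) =
      walkTail x p * walkTail x q * (1 / (p + q)) * (1 / (2 * q)) := by
  have : (0 : ℚ) < p := Nat.cast_pos.2 hp
  have : (0 : ℚ) < q := Nat.cast_pos.2 hq
  induction N generalizing x with
  | zero => rw [walkTail_eq_zero (by simpa using hN)]; simp
  | succ N ih =>
    have tail := ih (x + 1) (by omega)
    simp only [add_assoc, add_comm 1] at tail
    simp only [Fin.sum_univ_succ, Fin.val_succ]
    rw [tail, walkTail_succ, walkTail_succ]
    simp only [Fin.val_zero, add_zero, oddWalk, walkTail]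
    field_simp
    ring

theorem sum_det_evenWalk_mul_det_oddWalk (x : ℕ) {p : Fin r → ℕ} (hp : ∀ i, 0 < p i)
    (hN : ∀ i, p i < x + N) :
    ∑ h : Fin r ↪o Fin N, (of fun i j => evenWalk (p i) (x + h j)).det *
      (of fun i j => oddWalk (p i) (x + h j)).det = oddMinorSum x p ^ 2 := by
  let A : Matrix (Fin r) (Fin N) ℚ := of fun i k => evenWalk (p i) (x + k)
  let B : Matrix (Fin r) (Fin N) ℚ := of fun i k => oddWalk (p i) (x + k)
  have entries : A * Bᵀ = of fun i j => walkTail x (p i) *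
      (of fun i j => walkTail x (p j) * (1 / (2 * p j)) *
        (of fun i j => 1 / ((p i : ℚ) + p j)) i j) i j := by
    ext i j
    have := sum_evenWalk_mul_oddWalk x (hp i) (hp j) (hN i)
    simp only [A, B, mul_apply, transpose_apply, of_apply, this]
    ring
  calc _ = (A * Bᵀ).det := (det_mul_transpose_eq_sum_orderEmb A B).symm
    _ = _ := by
      rw [entries, det_mul_column, det_mul_row, det_one_div_add (fun i => (p i : ℚ))
        fun i j => (add_pos (Nat.cast_pos.2 (hp i)) (Nat.cast_pos.2 (hp j))).ne', oddMinorSum,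
        mul_pow, ← mul_assoc, ← mul_assoc, ← prod_mul_distrib, ← prod_mul_distrib, ← prod_pow]
      congr! 2 with i
      ring

end ShiftedBinomials

/-! ### Evolving particle configurations -/

section Moves

/-- `f` moves every particle of the configuration `Z` by `±1`, without collisions. -/
def IsMove (f : ℤ → ℤ) (Z : Finset ℤ) : Prop :=
  (∀ z ∈ Z, f z = z - 1 ∨ f z = z + 1) ∧ Set.InjOn f Z

/-- The configuration `X` can occur immediately to the left of the configuration `Z`. -/
def Precedes (X Z : Finset ℤ) : Prop :=
  ∃ f, IsMove f Z ∧ Z.image f = X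

lemma Precedes.card_eq {X Z : Finset ℤ} (h : Precedes X Z) : X.card = Z.card := by
  obtain ⟨f, hf, rfl⟩ := h
  exact card_image_of_injOn hf.2

lemma IsMove.ne_sub_one {f g : ℤ → ℤ} {Z : Finset ℤ} (hf : IsMove f Z) (hg : IsMove g Z)
    (hfg : Z.image f = Z.image g) {z : ℤ} (hz : z ∈ Z) (hne : f z ≠ g z)
    (hlt : ∀ w ∈ Z, w < z → f w = g w) : f z ≠ z - 1 := by
  intro hfz
  obtain ⟨w, hw, hgw⟩ := mem_image.1 (hfg ▸ mem_image_of_mem f hz)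
  have hwz : w ≠ z := by
    rintro rfl
    exact hne hgw.symm
  have hwz' : w < z := by
    have := hg.1 w hw
    omega
  exact hwz (hf.2 hw hz ((hlt w hw hwz').trans hgw))

lemma IsMove.eqOn_of_image_eq {f g : ℤ → ℤ} {Z : Finset ℤ} (hf : IsMove f Z) (hg : IsMove g Z)
    (hfg : Z.image f = Z.image g) : Set.EqOn f g Z := by
  by_contra hne
  have hne : {z ∈ Z | f z ≠ g z}.Nonempty := by
    simpa [Set.EqOn, Finset.Nonempty] using hne
  obtain ⟨z, hz, hmin⟩ := exists_minimal hne
  obtain ⟨hz, hfgz⟩ := mem_filter.1 hz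
  have hlt (w) (hw : w ∈ Z) (hwz : w < z) : f w = g w := by
    by_contra h
    exact hwz.not_ge (hmin (mem_filter.2 ⟨hw, h⟩) hwz.le)
  have := hf.ne_sub_one hg hfg hz hfgz hlt
  have := hg.ne_sub_one hf hfg.symm hz hfgz.symm fun w hw h => (hlt w hw h).symm
  have := hf.1 z hz
  have := hg.1 z hz
  omega

open Classical in
/-- The configurations that can occur immediately to the left of `Z`. -/
def predecessors (Z : Finset ℤ) : Finset (Finset ℤ) :=
  {X ∈ (Z.image (· - 1) ∪ Z.image (· + 1)).powerset | Precedes X Z}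

lemma mem_predecessors {X Z : Finset ℤ} : X ∈ predecessors Z ↔ Precedes X Z := by
  classical
  rw [predecessors, mem_filter, and_iff_right_iff_imp, mem_powerset]
  rintro ⟨f, hf, rfl⟩ y hy
  obtain ⟨z, hz, rfl⟩ := mem_image.1 hy
  rw [mem_union, mem_image, mem_image]
  exact (hf.1 z hz).imp (fun h => ⟨z, hz, h.symm⟩) fun h => ⟨z, hz, h.symm⟩

variable {n t : ℕ} {h : Fin n → ℤ}

lemma precedes_image_iff (hinj : Function.Injective h) {X : Finset ℤ} :
    Precedes X (univ.image h) ↔ ∃ ε : Fin n → ℤˣ,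
      Function.Injective (fun i => h i + ε i) ∧ univ.image (fun i => h i + ε i) = X := by
  constructor
  · rintro ⟨f, hf, rfl⟩
    have hstep (i) : ∃ e : ℤˣ, h i + e = f (h i) := by
      rcases hf.1 (h i) (mem_image_of_mem h (mem_univ i)) with e | e
      · exact ⟨-1, by simp [e, sub_eq_add_neg]⟩
      · exact ⟨1, by simp [e]⟩
    choose ε hε using hstep
    refine ⟨ε, fun i j hij => hinj (hf.2 (by simp) (by simp) ?_), ?_⟩
    · simpa only [hε] using hij
    · simp only [hε, image_image, Function.comp_def]
  · rintro ⟨ε, hε, rfl⟩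
    have hext (i) : Function.extend h (fun i => h i + ε i) 0 (h i) = h i + ε i :=
      hinj.extend_apply ..
    refine ⟨Function.extend h (fun i => h i + ε i) 0, ⟨fun z hz => ?_, ?_⟩, ?_⟩
    · obtain ⟨i, -, rfl⟩ := mem_image.1 hz
      rw [hext]
      rcases Int.units_eq_one_or (ε i) with e | e <;> simp [e, sub_eq_add_neg]
    · intro z hz w hw hzw
      obtain ⟨i, -, rfl⟩ := mem_image.1 (mem_coe.1 hz)
      obtain ⟨j, -, rfl⟩ := mem_image.1 (mem_coe.1 hw)
      rw [hext, hext] at hzw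
      rw [hε hzw]
    · rw [image_image]
      exact image_congr fun i _ => hext i

/-- At time `t` all particles sit at positions of the parity opposite to that of `t`. -/
def OppositeParity (t : ℕ) (h : Fin n → ℤ) : Prop :=
  ∀ i, (h i + t) % 2 = 1

lemma OppositeParity.add_units (hpar : OppositeParity (t + 1) h) (ε : Fin n → ℤˣ) :
    OppositeParity t fun i => h i + ε i := by
  intro i
  have := hpar i
  rcases Int.units_eq_one_or (ε i) with e | e <;>
    simp only [e, Units.val_one, Units.val_neg] <;> grind

lemma OppositeParity.monotone_add_units (hpar : OppositeParity t h) (hmono : StrictMono h)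
    (ε : Fin n → ℤˣ) : Monotone fun i => h i + ε i := by
  intro i j hij
  rcases hij.eq_or_lt with rfl | hlt
  · rfl
  · have := hmono hlt
    have := hpar i
    have := hpar j
    rcases Int.units_eq_one_or (ε i) with ei | ei <;>
      rcases Int.units_eq_one_or (ε j) with ej | ej <;>
        simp only [ei, ej, Units.val_one, Units.val_neg] <;> grind

open Classical in
lemma sum_predecessors {M : Type*} [AddCommMonoid M] (hpar : OppositeParity t h)
    (hmono : StrictMono h) (g : Finset ℤ → M) :
    ∑ X ∈ predecessors (univ.image h), g X =
      ∑ ε : Fin n → ℤˣ with StrictMono (fun i => h i + ε i),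
        g (univ.image fun i => h i + ε i) := by
  symm
  refine sum_bij (fun ε _ => univ.image fun i => h i + ε i) (fun ε hε => ?_)
    (fun ε hε ε' hε' e => ?_) (fun X hX => ?_) fun _ _ => rfl
  · rw [mem_predecessors, precedes_image_iff hmono.injective]
    exact ⟨ε, (mem_filter.1 hε).2.injective, rfl⟩
  · have hrange := congrArg (fun s : Finset ℤ => (s : Set ℤ)) e
    simp only [coe_image, coe_univ, Set.image_univ] at hrange
    funext i
    exact Units.ext (add_left_cancel (congrFun
      (((mem_filter.1 hε).2.range_inj (mem_filter.1 hε').2).1 hrange) i))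
  · obtain ⟨ε, hε, rfl⟩ := (precedes_image_iff hmono.injective).1 (mem_predecessors.1 hX)
    exact ⟨ε, mem_filter.2 ⟨mem_univ _,
      (hpar.monotone_add_units hmono ε).strictMono_of_injective hε⟩, rfl⟩

end Moves

section SymmetricConfigurations

/-- A configuration that is symmetric about `0`. -/
def IsSymm (Y : Finset ℤ) : Prop :=
  ∀ y ∈ Y, -y ∈ Y

/-- A configuration of particles at positive positions. -/
def IsPos (A : Finset ℤ) : Prop :=
  ∀ y ∈ A, 0 < y

/-- The union of a configuration with its mirror image. -/
def symmetrize (A : Finset ℤ) : Finset ℤ :=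
  A ∪ A.image (-·)

lemma mem_symmetrize {A : Finset ℤ} {y : ℤ} : y ∈ symmetrize A ↔ y ∈ A ∨ -y ∈ A := by
  simp [symmetrize, neg_eq_iff_eq_neg]

lemma symmetrize_eq_empty {A : Finset ℤ} : symmetrize A = ∅ ↔ A = ∅ := by
  rw [symmetrize, union_eq_empty, image_eq_empty, and_self]

lemma isSymm_symmetrize (A : Finset ℤ) : IsSymm (symmetrize A) := by
  intro y hy
  rw [mem_symmetrize, neg_neg]
  exact (mem_symmetrize.1 hy).symm

variable {A B : Finset ℤ}

lemma IsPos.filter_symmetrize (hA : IsPos A) : {y ∈ symmetrize A | 0 < y} = A := by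
  ext y
  rw [mem_filter, mem_symmetrize]
  have := hA (-y)
  have := hA y
  grind

lemma IsPos.symmetrize_inj (hA : IsPos A) (hB : IsPos B) (h : symmetrize A = symmetrize B) :
    A = B := by
  rw [← hA.filter_symmetrize, h, hB.filter_symmetrize]

lemma IsPos.symmetrize_subset_iff (hA : IsPos A) (hB : IsPos B) :
    symmetrize A ⊆ symmetrize B ↔ A ⊆ B := by
  refine ⟨fun h => ?_, fun h => union_subset_union h (image_subset_image h)⟩
  rw [← hA.filter_symmetrize, ← hB.filter_symmetrize]
  exact filter_subset_filter _ h

lemma IsPos.symmetrize_sdiff (hA : IsPos A) (hB : IsPos B) :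
    symmetrize A \ symmetrize B = symmetrize (A \ B) := by
  ext y
  simp only [mem_sdiff, mem_symmetrize]
  have := hA y
  have := hA (-y)
  have := hB y
  have := hB (-y)
  grind

lemma IsPos.precedes_symmetrize (hA : IsPos A) (hB : IsPos B) (h : Precedes A B) :
    Precedes (symmetrize A) (symmetrize B) := by
  obtain ⟨f, hf, rfl⟩ := h
  let g (z : ℤ) : ℤ := if 0 < z then f z else -f (-z)
  have pos (z) (hz : z ∈ B) : 0 < z ∧ 0 < f z := ⟨hB z hz, hA _ (mem_image_of_mem f hz)⟩
  have hg (z) (hz : z ∈ B) : g z = f z := if_pos (hB z hz)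
  have hg_neg (z) (hz : z ∈ B) : g (-z) = -f z := by
    have := hB z hz
    rw [show g (-z) = _ from if_neg (by omega), neg_neg]
  refine ⟨g, ⟨fun z hz => ?_, fun z hz w hw h => ?_⟩, ?_⟩
  · rcases mem_symmetrize.1 hz with hz | hz
    · rw [hg z hz]
      exact hf.1 z hz
    · have := hf.1 _ hz
      have hgz := hg_neg _ hz
      rw [neg_neg] at hgz
      omega
  · have hinj (z w) (hz : z ∈ B) (hw : w ∈ B) (e : f z = f w) : z = w := hf.2 hz hw e
    have := mem_symmetrize.1 (mem_coe.1 hz)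
    have := mem_symmetrize.1 (mem_coe.1 hw)
    grind
  · rw [symmetrize, symmetrize, image_union, image_image, image_image]
    exact congrArg₂ _ (image_congr hg) (image_congr hg_neg)

lemma IsMove.map_neg {f : ℤ → ℤ} {Z : Finset ℤ} (hf : IsMove f Z) (hZ : IsSymm Z)
    (hX : IsSymm (Z.image f)) {z : ℤ} (hz : z ∈ Z) : f (-z) = -f z := by
  have hneg : IsMove (fun z => -f (-z)) Z := by
    refine ⟨fun z hz => ?_, fun z hz w hw h => neg_injective (hf.2 (hZ z hz) (hZ w hw) ?_)⟩
    · have := hf.1 _ (hZ z hz)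
      grind
    · exact neg_injective h
  have himage : Z.image f = Z.image fun z => -f (-z) := by
    refine (eq_of_subset_of_card_le (image_subset_iff.2 fun z hz => ?_) ?_).symm
    · exact hX _ (mem_image_of_mem f (hZ z hz))
    · rw [card_image_of_injOn hf.2, card_image_of_injOn hneg.2]
  have := hf.eqOn_of_image_eq hneg himage hz
  simp only at this
  omega

lemma IsPos.exists_eq_symmetrize_of_precedes (hB : IsPos B) {X : Finset ℤ} (hX : IsSymm X)
    (h : Precedes X (symmetrize B)) : ∃ A, IsPos A ∧ Precedes A B ∧ symmetrize A = X := by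
  obtain ⟨f, hf, rfl⟩ := h
  have hmem (z) (hz : z ∈ B) : z ∈ symmetrize B := mem_symmetrize.2 (Or.inl hz)
  have hodd (z) (hz : z ∈ B) : f (-z) = -f z :=
    hf.map_neg (isSymm_symmetrize B) hX (hmem z hz)
  refine ⟨B.image f, fun y hy => ?_, ⟨f, ⟨fun z hz => hf.1 z (hmem z hz),
    hf.2.mono fun z hz => hmem z hz⟩, rfl⟩, ?_⟩
  · obtain ⟨z, hz, rfl⟩ := mem_image.1 hy
    have hpos := hB z hz
    have hstep := hf.1 z (hmem z hz)
    have hne : f z ≠ 0 := fun h0 => by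
      have : z = -z := hf.2 (hmem z hz) (isSymm_symmetrize B z (hmem z hz))
        (by rw [hodd z hz, h0, neg_zero])
      omega
    omega
  · rw [symmetrize, symmetrize, image_union, image_image, image_image]
    exact congrArg _ (image_congr fun z hz => (hodd z hz).symm)

end SymmetricConfigurations

section ChainCount

open Classical in
/-- The particles that are inserted at time `t`: a copy of `S` at the times `2 * κ` with
`κ ∈ K`. -/
def insertions (S : Finset ℤ) (K : Finset ℕ) (t : ℕ) : Finset ℤ :=
  if ∃ κ ∈ K, t = 2 * κ then S else ∅

open Classical in
/-- The number of sequences of configurations satisfying `P` that evolve from the empty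
configuration at time `0` to `Y` at time `t` by moves and insertions. -/
def chainCount (S : Finset ℤ) (K : Finset ℕ) (P : Finset ℤ → Prop) : ℕ → Finset ℤ → ℕ
  | 0, Y => if P Y ∧ Y = ∅ then 1 else 0
  | t + 1, Y =>
    if P Y ∧ insertions S K (t + 1) ⊆ Y then
      ∑ X ∈ predecessors (Y \ insertions S K (t + 1)), chainCount S K P t X
    else 0

variable {S : Finset ℤ} {K : Finset ℕ} {P : Finset ℤ → Prop} {t : ℕ} {Y : Finset ℤ}

lemma insertions_eq_of_mem {κ : ℕ} (h : κ ∈ K) : insertions S K (2 * κ) = S :=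
  if_pos ⟨κ, h, rfl⟩

lemma insertions_eq_empty (h : ∀ κ ∈ K, t ≠ 2 * κ) : insertions S K t = ∅ :=
  if_neg fun ⟨κ, hκ, e⟩ => h κ hκ e

lemma chainCount_eq_zero_of_not (h : ¬P Y) : chainCount S K P t Y = 0 := by
  cases t <;> simp [chainCount, h]

lemma exists_precedes_of_chainCount_ne_zero (h : chainCount S K P (t + 1) Y ≠ 0) :
    insertions S K (t + 1) ⊆ Y ∧
      ∃ X, Precedes X (Y \ insertions S K (t + 1)) ∧ chainCount S K P t X ≠ 0 := by
  rw [chainCount] at h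
  split_ifs at h with hY
  · obtain ⟨X, hX, hne⟩ := exists_ne_zero_of_sum_ne_zero h
    exact ⟨hY.2, X, mem_predecessors.1 hX, hne⟩
  · exact absurd rfl h

lemma isPos_insertions (hS : IsPos S) : IsPos (insertions S K t) := by
  rw [insertions]
  split_ifs
  · exact hS
  · simp [IsPos]

lemma insertions_symmetrize : insertions (symmetrize S) K t = symmetrize (insertions S K t) := by
  rw [insertions, insertions]
  split_ifs
  · rfl
  · simp [symmetrize]

theorem chainCount_symmetrize (hS : IsPos S) {A : Finset ℤ} (hA : IsPos A) :
    chainCount (symmetrize S) K IsSymm t (symmetrize A) = chainCount S K IsPos t A := by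
  classical
  induction t generalizing A with
  | zero => simp [chainCount, isSymm_symmetrize A, hA, symmetrize_eq_empty]
  | succ t ih =>
    have hI : IsPos (insertions S K (t + 1)) := isPos_insertions hS
    have hB : IsPos (A \ insertions S K (t + 1)) := fun y hy => hA y (mem_sdiff.1 hy).1
    simp only [chainCount, isSymm_symmetrize, hA, true_and, insertions_symmetrize,
      hI.symmetrize_subset_iff hA, hA.symmetrize_sdiff hI]
    congr 1
    rw [← sum_filter_of_ne fun X _ hX => not_not.1 fun h => hX (chainCount_eq_zero_of_not h),
      ← sum_filter_of_ne (s := predecessors (A \ _)) fun X _ hX =>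
        not_not.1 fun h => hX (chainCount_eq_zero_of_not h)]
    symm
    refine sum_bij (fun X _ => symmetrize X) (fun X hX => ?_) (fun X hX X' hX' => ?_)
      (fun X hX => ?_) fun X hX => ?_ <;> simp only [mem_filter, mem_predecessors] at *
    · exact ⟨hX.2.precedes_symmetrize hB hX.1, isSymm_symmetrize X⟩
    · exact hX.2.symmetrize_inj hX'.2
    · obtain ⟨X', hpos, hprec, rfl⟩ := hB.exists_eq_symmetrize_of_precedes hX.2 hX.1
      exact ⟨X', ⟨hprec, hpos⟩, rfl⟩
    · exact (ih hX.2).symm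

end ChainCount

/-! ### Determinants of walk counts -/

section ConfigDet

variable {n : ℕ} {u : Fin n → ℤ → ℤ}

/-- The generalized Vandermonde determinant of the functions `u` at the positions `h`. -/
def configDet (u : Fin n → ℤ → ℤ) (h : Fin n → ℤ) : ℤ :=
  (of fun j i => u i (h j)).det

/-- The sum of the values of `u` at the two neighbours of a position. -/
def neighborSum (u : ℤ → ℤ) (y : ℤ) : ℤ :=
  u (y - 1) + u (y + 1)

lemma configDet_eq_zero_of_not_injective {h : Fin n → ℤ} (hh : ¬Function.Injective h) :
    configDet u h = 0 := by
  rw [Function.not_injective_iff] at hh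
  obtain ⟨i, j, hij, hne⟩ := hh
  exact det_zero_of_row_eq hne (funext fun k => congrArg (u k) hij)

lemma configDet_eq_zero_of_forall_eq_zero {h : Fin n → ℤ} (j : Fin n) (hj : ∀ i, u i (h j) = 0) :
    configDet u h = 0 :=
  det_eq_zero_of_row_eq_zero j hj

lemma configDet_neighborSum (u : Fin n → ℤ → ℤ) (h : Fin n → ℤ) :
    configDet (fun i => neighborSum (u i)) h =
      ∑ ε : Fin n → ℤˣ, configDet u fun j => h j + ε j := by
  have hrow : (fun j i => neighborSum (u i) (h j)) =
      fun j => ∑ e : ℤˣ, fun i => u i (h j + e) := by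
    funext j i
    rw [Finset.sum_apply, neighborSum, show (univ : Finset ℤˣ) = {-1, 1} by decide,
      sum_pair (by decide), Units.val_neg, Units.val_one, sub_eq_add_neg]
  rw [configDet, hrow]
  exact (detRowAlternating.toMultilinearMap.map_sum fun j (e : ℤˣ) i => u i (h j + e))

lemma configDet_cons_single {s : ℤ} {h : Fin (n + 1) → ℤ} (hh : Function.Injective h)
    {j : Fin (n + 1)} (hj : h j = s) :
    configDet (Fin.cons (Pi.single s 1) u) h =
      (-1) ^ (j : ℕ) * configDet u (h ∘ j.succAbove) := by
  rw [configDet, det_succ_column_zero, sum_eq_single j]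
  · simp [configDet, hj, submatrix]
  · intro i _ hij
    have : h i ≠ s := fun h => hij (hh (h.trans hj.symm))
    simp [this]
  · simp

lemma configDet_cons_single_eq_zero {s : ℤ} {h : Fin (n + 1) → ℤ} (hs : ∀ j, h j ≠ s) :
    configDet (Fin.cons (Pi.single s 1) u) h = 0 :=
  det_eq_zero_of_column_eq_zero 0 fun j => by simp [hs j]

lemma image_comp_succAbove {h : Fin (n + 1) → ℤ} (hh : Function.Injective h) (j : Fin (n + 1)) :
    univ.image (h ∘ j.succAbove) = univ.image h \ {h j} := by
  rw [← image_image, Fin.image_succAbove_univ, compl_eq_univ_sdiff, image_sdiff _ _ hh,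
    image_singleton]

end ConfigDet

section CountedBy

variable {n t : ℕ} {S : Finset ℤ} {K : Finset ℕ} {P : Finset ℤ → Prop} {u : Fin n → ℤ → ℤ}

/-- The number of evolutions to a configuration at time `t` is the determinant of `u` at its
positions. -/
def CountedBy (S : Finset ℤ) (K : Finset ℕ) (P : Finset ℤ → Prop) (t : ℕ) {n : ℕ}
    (u : Fin n → ℤ → ℤ) : Prop :=
  ∀ h : Fin n → ℤ, StrictMono h → OppositeParity t h → P (univ.image h) →
    (chainCount S K P t (univ.image h) : ℤ) = configDet u h

lemma CountedBy.cast_sum_predecessors (hu : CountedBy S K P t u) {h : Fin n → ℤ}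
    (hmono : StrictMono h) (hpar : OppositeParity (t + 1) h)
    (hexit : ∀ ε : Fin n → ℤˣ, ¬P (univ.image fun i => h i + ε i) →
      configDet u (fun i => h i + ε i) = 0) :
    ((∑ X ∈ predecessors (univ.image h), chainCount S K P t X : ℕ) : ℤ) =
      configDet (fun i => neighborSum (u i)) h := by
  classical
  have hpar' (ε : Fin n → ℤˣ) : OppositeParity t fun i => h i + ε i := hpar.add_units ε
  rw [sum_predecessors hpar hmono, configDet_neighborSum, Nat.cast_sum]
  refine sum_subset_zero_on_sdiff (filter_subset _ _) (fun ε hε => ?_) fun ε hε => ?_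
  · refine configDet_eq_zero_of_not_injective fun hinj => (mem_sdiff.1 hε).2 (mem_filter.2
      ⟨mem_univ _, (hpar.monotone_add_units hmono ε).strictMono_of_injective hinj⟩)
  · by_cases hP : P (univ.image fun i => h i + ε i)
    · exact hu _ (mem_filter.1 hε).2 (hpar' ε) hP
    · rw [chainCount_eq_zero_of_not hP, hexit ε hP, Nat.cast_zero]

lemma CountedBy.step (hu : CountedBy S K P t u) (hK : insertions S K (t + 1) = ∅)
    (hexit : ∀ h : Fin n → ℤ, OppositeParity (t + 1) h → P (univ.image h) → ∀ ε : Fin n → ℤˣ,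
      ¬P (univ.image fun i => h i + ε i) → configDet u (fun i => h i + ε i) = 0) :
    CountedBy S K P (t + 1) fun i => neighborSum (u i) := by
  intro h hmono hpar hP
  rw [chainCount, hK, sdiff_empty, if_pos ⟨hP, empty_subset _⟩]
  exact hu.cast_sum_predecessors hmono hpar (hexit h hpar hP)

lemma exists_succ_of_neg_one_one_mem {h : Fin (n + 2) → ℤ} (hmono : StrictMono h)
    (hodd : ∀ j, h j ≠ 0) (hmem : {-1, 1} ⊆ univ.image h) :
    ∃ j : Fin (n + 1), h j.castSucc = -1 ∧ h j.succ = 1 := by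
  obtain ⟨i, -, hi⟩ := mem_image.1 (hmem (mem_insert_self _ _))
  obtain ⟨k, -, hk⟩ := mem_image.1 (hmem (mem_insert_of_mem (mem_singleton_self 1)))
  have hik : i < k := hmono.lt_iff_lt.1 (by omega)
  obtain ⟨j, rfl⟩ := Fin.exists_castSucc_eq.2 (hik.trans_le (Fin.le_last k)).ne
  refine ⟨j, hi, ?_⟩
  rcases (Fin.castSucc_lt_iff_succ_le.1 hik).eq_or_lt with rfl | hlt
  · exact hk
  · have := hmono hlt
    have := hmono (Fin.castSucc_lt_succ (i := j))
    have := hodd j.succ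
    omega

lemma CountedBy.insert_neg_one_one (hu : CountedBy {-1, 1} K (fun _ => True) t u)
    (hK : insertions {-1, 1} K (t + 1) = {-1, 1}) (ht : Odd t) :
    CountedBy {-1, 1} K (fun _ => True) (t + 1)
      (Fin.cons (Pi.single (-1) 1) (Fin.cons (Pi.single 1 1) fun i => neighborSum (u i)) :
        Fin (n + 2) → ℤ → ℤ) := by
  intro h hmono hpar _
  rw [chainCount, hK]
  by_cases hmem : {-1, 1} ⊆ univ.image h
  · have hodd (j) : h j ≠ 0 := by
      have := hpar j
      grind
    obtain ⟨j, hj, hj'⟩ := exists_succ_of_neg_one_one_mem hmono hodd hmem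
    have hmono' : StrictMono (h ∘ j.castSucc.succAbove) := hmono.comp (Fin.strictMono_succAbove _)
    have hj'' : (h ∘ j.castSucc.succAbove) j = 1 := by simpa using hj'
    have himage : univ.image h \ {-1, 1} =
        univ.image ((h ∘ j.castSucc.succAbove) ∘ j.succAbove) := by
      rw [image_comp_succAbove hmono'.injective, image_comp_succAbove hmono.injective, hj, hj'',
        sdiff_sdiff_left]
      rfl
    rw [if_pos ⟨trivial, hmem⟩, himage, configDet_cons_single hmono.injective hj,
      configDet_cons_single hmono'.injective hj'', Fin.val_castSucc, ← mul_assoc, ← mul_pow,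
      neg_one_mul, neg_neg, one_pow, one_mul]
    exact hu.cast_sum_predecessors (hmono'.comp (Fin.strictMono_succAbove _))
      (fun i => hpar _) (by simp)
  · rw [if_neg (by simp [hmem]), Nat.cast_zero]
    by_cases hneg : ∃ j, h j = -1
    · obtain ⟨j, hj⟩ := hneg
      have hone (k) : h k ≠ 1 := fun hk => hmem (by
        rw [insert_subset_iff, singleton_subset_iff, ← hj, ← hk]
        exact ⟨mem_image_of_mem h (mem_univ j), mem_image_of_mem h (mem_univ k)⟩)
      rw [configDet_cons_single hmono.injective hj,
        configDet_cons_single_eq_zero (h := h ∘ j.succAbove) fun k => hone _, mul_zero]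
    · exact (configDet_cons_single_eq_zero fun j hj => hneg ⟨j, hj⟩).symm

lemma configDet_eq_zero_of_not_isPos (hzero : ∀ i, u i 0 = 0) {h : Fin n → ℤ}
    (hpos : IsPos (univ.image h)) (ε : Fin n → ℤˣ)
    (hexit : ¬IsPos (univ.image fun i => h i + ε i)) : configDet u (fun i => h i + ε i) = 0 := by
  simp only [IsPos, forall_mem_image, mem_univ, true_imp_iff, not_forall] at hexit
  obtain ⟨j, hj⟩ := hexit
  have hjpos := hpos _ (mem_image_of_mem h (mem_univ j))
  refine configDet_eq_zero_of_forall_eq_zero j fun i => ?_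
  rw [show h j + ε j = 0 by rcases Int.units_eq_one_or (ε j) with e | e <;>
    simp only [e, Units.val_one, Units.val_neg] at hj ⊢ <;> omega, hzero]

lemma CountedBy.insert_one (hu : CountedBy {1} K IsPos t u) (hzero : ∀ i, u i 0 = 0)
    (hK : insertions {1} K (t + 1) = {1}) :
    CountedBy {1} K IsPos (t + 1)
      (Fin.cons (Pi.single 1 1) fun i => neighborSum (u i) : Fin (n + 1) → ℤ → ℤ) := by
  intro h hmono hpar hP
  have hpos (j) : 0 < h j := hP _ (mem_image_of_mem h (mem_univ j))
  rw [chainCount, hK]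
  by_cases hmem : {1} ⊆ univ.image h
  · obtain ⟨j, -, hj⟩ := mem_image.1 (singleton_subset_iff.1 hmem)
    have hj0 : h 0 = 1 := le_antisymm (hj ▸ hmono.monotone (Fin.zero_le j)) (hpos 0)
    have himage : univ.image h \ {1} = univ.image (h ∘ (0 : Fin (n + 1)).succAbove) := by
      rw [image_comp_succAbove hmono.injective, hj0]
    have hpos' : IsPos (univ.image (h ∘ (0 : Fin (n + 1)).succAbove)) :=
      himage ▸ fun y hy => hP y (mem_sdiff.1 hy).1
    rw [if_pos ⟨hP, hmem⟩, himage, configDet_cons_single hmono.injective hj0, Fin.val_zero,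
      pow_zero, one_mul]
    exact hu.cast_sum_predecessors (hmono.comp (Fin.strictMono_succAbove _)) (fun i => hpar _)
      (configDet_eq_zero_of_not_isPos hzero hpos')
  · rw [if_neg fun h => hmem h.2, Nat.cast_zero]
    exact (configDet_cons_single_eq_zero fun j hj => hmem (singleton_subset_iff.2
      (mem_image.2 ⟨j, mem_univ j, hj⟩))).symm

end CountedBy

section Walks

/-- The number of simple walks of length `n` from `0` to `y`. -/
def walkCount : ℕ → ℤ → ℤ
  | 0 => Pi.single 0 1
  | n + 1 => neighborSum (walkCount n)

lemma walkCount_neg (n : ℕ) (y : ℤ) : walkCount n (-y) = walkCount n y := by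
  induction n generalizing y with
  | zero => simp [walkCount, Pi.single_apply]
  | succ n ih =>
    rw [walkCount, neighborSum, neighborSum, ← ih (y - 1), ← ih (y + 1), add_comm]
    ring_nf

lemma walkCount_eq_zero (n : ℕ) {y : ℤ} (hy : y < -n) : walkCount n y = 0 := by
  induction n generalizing y with
  | zero => exact Pi.single_eq_of_ne (by simpa using hy.ne) 1
  | succ n ih =>
    push_cast at hy
    rw [walkCount, neighborSum, ih (by omega), ih (by omega), add_zero]

lemma walkCount_eq_choose (n k : ℕ) : walkCount n (2 * k - n) = n.choose k := by
  induction n generalizing k with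
  | zero => cases k <;> simp [walkCount, Pi.single_apply]; omega
  | succ n ih =>
    rw [walkCount, neighborSum]
    cases k with
    | zero =>
      rw [walkCount_eq_zero n (by push_cast; omega), zero_add,
        show 2 * ((0 : ℕ) : ℤ) - (n + 1 : ℕ) + 1 = 2 * (0 : ℕ) - n by push_cast; ring, ih,
        Nat.choose_zero_right, Nat.choose_zero_right]
    | succ k =>
      rw [Nat.choose_succ_succ, Nat.cast_add (n.choose k), ← ih k, ← ih (k + 1)]
      congr 2 <;> push_cast <;> ring

lemma walkCount_add_eq_evenWalk {p h : ℕ} (hp : 0 < p) :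
    ((walkCount (2 * p - 1) (2 * h - 1) + walkCount (2 * p - 1) (2 * h + 1) : ℤ) : ℚ) =
      evenWalk p h := by
  have hsucc : walkCount (2 * p) = neighborSum (walkCount (2 * p - 1)) := by
    rw [show 2 * p = 2 * p - 1 + 1 by omega, walkCount, Nat.add_sub_cancel]
  have key := walkCount_eq_choose (2 * p) (p + h)
  rw [hsucc, neighborSum, show 2 * ((p + h : ℕ) : ℤ) - (2 * p : ℕ) = 2 * h by push_cast; ring]
    at key
  rw [key, evenWalk, Int.cast_natCast]

lemma walkCount_sub_eq_oddWalk {p h : ℕ} (hp : 0 < p) (hh : 0 < h) :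
    ((walkCount (2 * p - 1) (2 * h - 1) - walkCount (2 * p - 1) (2 * h + 1) : ℤ) : ℚ) =
      oddWalk p h := by
  obtain ⟨q, rfl⟩ : ∃ q, p = q + 1 := ⟨p - 1, by omega⟩
  obtain ⟨g, rfl⟩ : ∃ g, h = g + 1 := ⟨h - 1, by omega⟩
  have hfst := walkCount_eq_choose (2 * q + 1) (q + g + 1)
  have hsnd := walkCount_eq_choose (2 * q + 1) (q + g + 2)
  have hpascal : (2 * (q + 1)).choose (q + 1 + (g + 1)) =
      (2 * q + 1).choose (q + g + 1) + (2 * q + 1).choose (q + g + 2) := by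
    rw [show 2 * (q + 1) = 2 * q + 1 + 1 by ring, show q + 1 + (g + 1) = q + g + 1 + 1 by ring,
      Nat.choose_succ_succ]
  have hratio : ((2 * q + 1).choose (q + g + 2) : ℚ) * (q + g + 2) =
      (2 * q + 1).choose (q + g + 1) * (q - g) := by
    rcases le_or_gt g q with hgq | hgq
    · have := congrArg (Nat.cast : ℕ → ℚ) (Nat.choose_succ_right_eq (2 * q + 1) (q + g + 1))
      rw [show 2 * q + 1 - (q + g + 1) = q - g by omega] at this
      push_cast [Nat.cast_sub hgq] at this
      linear_combination this
    · rw [Nat.choose_eq_zero_of_lt (by omega), Nat.choose_eq_zero_of_lt (by omega)]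
      simp
  rw [show 2 * (q + 1) - 1 = 2 * q + 1 by omega,
    show 2 * ((g + 1 : ℕ) : ℤ) - 1 = 2 * (q + g + 1 : ℕ) - (2 * q + 1 : ℕ) by push_cast; ring,
    show 2 * ((g + 1 : ℕ) : ℤ) + 1 = 2 * (q + g + 2 : ℕ) - (2 * q + 1 : ℕ) by push_cast; ring,
    hfst, hsnd, oddWalk, evenWalk, hpascal]
  push_cast
  have : (q : ℚ) + 1 ≠ 0 := by positivity
  field_simp
  linear_combination -hratio

end Walks

section WalkRows

variable {r t k : ℕ} {K : Finset ℕ} {κ : Fin r → ℕ}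

/-- The rows `2i` and `2i + 1` count the walks from the particles `-1` and `1` inserted at time
`2 * κ i`. -/
def walkRows (t : ℕ) {r : ℕ} (κ : Fin r → ℕ) (i : Fin (2 * r)) (y : ℤ) : ℤ :=
  walkCount (t - 2 * κ ⟨i / 2, by omega⟩) (if (i : ℕ) % 2 = 0 then y + 1 else y - 1)

/-- By the reflection principle, row `i` counts, at positive positions, the walks from the particle
`1` inserted at time `2 * κ i` that stay positive. -/
def oddRows (t : ℕ) {r : ℕ} (κ : Fin r → ℕ) (i : Fin r) (y : ℤ) : ℤ :=
  walkCount (t - 2 * κ i) (y - 1) - walkCount (t - 2 * κ i) (y + 1)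

lemma oddRows_zero (t : ℕ) (κ : Fin r → ℕ) (i : Fin r) : oddRows t κ i 0 = 0 := by
  rw [oddRows, zero_sub, walkCount_neg, zero_add, sub_self]

lemma neighborSum_walkRows {κ : Fin r → ℕ} (hκ : ∀ i, 2 * κ i ≤ t) :
    (fun i => neighborSum (walkRows t κ i)) = walkRows (t + 1) κ := by
  funext i y
  rw [neighborSum, walkRows, walkRows, walkRows, Nat.succ_sub (hκ _), walkCount, neighborSum]
  split_ifs <;> ring_nf

lemma neighborSum_oddRows {κ : Fin r → ℕ} (hκ : ∀ i, 2 * κ i ≤ t) :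
    (fun i => neighborSum (oddRows t κ i)) = oddRows (t + 1) κ := by
  funext i y
  rw [neighborSum, oddRows, oddRows, oddRows, Nat.succ_sub (hκ _), walkCount, neighborSum,
    neighborSum]
  ring_nf

lemma walkRows_cons (k : ℕ) (κ : Fin r → ℕ) :
    walkRows (2 * k) (Fin.cons k κ : Fin (r + 1) → ℕ) =
      (Fin.cons (Pi.single (-1) 1) (Fin.cons (Pi.single 1 1) (walkRows (2 * k) κ)) :
        Fin (2 * r + 2) → ℤ → ℤ) := by
  funext i y
  refine Fin.cases ?_ (fun i => Fin.cases ?_ (fun i => ?_) i) i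
  · simp [walkRows, walkCount, Pi.single_apply, add_eq_zero_iff_eq_neg]
  · have hval : ((0 : Fin (2 * r + 1)).succ : ℕ) = 1 := rfl
    have hdiv : (⟨((0 : Fin (2 * r + 1)).succ : ℕ) / 2, by omega⟩ : Fin (r + 1)) = 0 :=
      Fin.ext (by simp only [hval]; rfl)
    rw [Fin.cons_succ, Fin.cons_zero]
    refine (congrArg (fun j => walkCount (2 * k - 2 * (Fin.cons k κ : Fin (r + 1) → ℕ) j) (y - 1))
      hdiv).trans ?_
    simp [walkCount, Pi.single_apply, sub_eq_zero]
  · have hi : (i : ℕ) < 2 * r := i.isLt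
    have hdiv : (⟨(i.succ.succ : ℕ) / 2, by simp only [Fin.val_succ]; omega⟩ : Fin (r + 1)) =
        Fin.succ ⟨i / 2, by omega⟩ := Fin.ext (Nat.add_div_right (i : ℕ) two_pos)
    have hmod : (i.succ.succ : ℕ) % 2 = i % 2 := Nat.add_mod_right i 2
    rw [Fin.cons_succ, Fin.cons_succ, walkRows, walkRows, hmod]
    exact congrArg (fun j => walkCount (2 * k - 2 * (Fin.cons k κ : Fin (r + 1) → ℕ) j) _) hdiv

lemma configDet_oddRows_cons (k : ℕ) (κ : Fin r → ℕ) {h : Fin (r + 1) → ℤ} (hpos : ∀ j, 0 < h j) :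
    configDet (oddRows (2 * k) (Fin.cons k κ : Fin (r + 1) → ℕ)) h =
      configDet (Fin.cons (Pi.single 1 1) (oddRows (2 * k) κ)) h := by
  rw [configDet, configDet]
  congr 2
  funext j i
  refine Fin.cases ?_ (fun i => rfl) i
  have := hpos j
  simp [oddRows, walkCount, Pi.single_apply, sub_eq_zero, show h j + 1 ≠ 0 by omega]

lemma CountedBy.walkRows_cons (hall : CountedBy {-1, 1} K (fun _ => True) t (walkRows t κ))
    (hκ : ∀ i, 2 * κ i ≤ t) (hk : k ∈ K) (htk : t + 1 = 2 * k) :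
    CountedBy {-1, 1} K (fun _ => True) (t + 1)
      (walkRows (t + 1) (Fin.cons k κ : Fin (r + 1) → ℕ)) := by
  rw [htk, HoleyHexagon.walkRows_cons, ← htk, ← neighborSum_walkRows hκ]
  exact hall.insert_neg_one_one (htk ▸ insertions_eq_of_mem hk) (by grind)

lemma CountedBy.oddRows_cons (hpos : CountedBy {1} K IsPos t (oddRows t κ))
    (hκ : ∀ i, 2 * κ i ≤ t) (hk : k ∈ K) (htk : t + 1 = 2 * k) :
    CountedBy {1} K IsPos (t + 1) (oddRows (t + 1) (Fin.cons k κ : Fin (r + 1) → ℕ)) := by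
  intro h hmono hpar hP
  rw [hpos.insert_one (oddRows_zero t κ) (htk ▸ insertions_eq_of_mem hk) h hmono hpar hP,
    neighborSum_oddRows hκ, htk,
    configDet_oddRows_cons k κ fun j => hP _ (mem_image_of_mem h (mem_univ j))]

lemma CountedBy.walkRows_succ (hall : CountedBy {-1, 1} K (fun _ => True) t (walkRows t κ))
    (hκ : ∀ i, 2 * κ i ≤ t) (hK : ∀ k ∈ K, t + 1 ≠ 2 * k) :
    CountedBy {-1, 1} K (fun _ => True) (t + 1) (walkRows (t + 1) κ) := by
  rw [← neighborSum_walkRows hκ]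
  exact hall.step (insertions_eq_empty hK) (by simp)

lemma CountedBy.oddRows_succ (hpos : CountedBy {1} K IsPos t (oddRows t κ))
    (hκ : ∀ i, 2 * κ i ≤ t) (hK : ∀ k ∈ K, t + 1 ≠ 2 * k) :
    CountedBy {1} K IsPos (t + 1) (oddRows (t + 1) κ) := by
  rw [← neighborSum_oddRows hκ]
  exact hpos.step (insertions_eq_empty hK) fun h _ =>
    configDet_eq_zero_of_not_isPos (oddRows_zero t κ)

theorem exists_countedBy (hK : 0 ∉ K) (t : ℕ) : ∃ (r : ℕ) (κ : Fin r → ℕ), Function.Injective κ ∧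
    univ.image κ = {k ∈ K | 2 * k ≤ t} ∧
    CountedBy {-1, 1} K (fun _ => True) t (walkRows t κ) ∧
    CountedBy {1} K IsPos t (oddRows t κ) := by
  induction t with
  | zero =>
    refine ⟨0, Fin.elim0, Function.injective_of_subsingleton _, ?_, ?_, ?_⟩
    · ext k
      simpa using fun hk (h0 : k = 0) => hK (h0 ▸ hk)
    · intro h _ _ _
      simp [chainCount, configDet]
    · intro h _ _ _
      simp [chainCount, configDet, IsPos]
  | succ t ih =>
    obtain ⟨r, κ, hinj, himage, hall, hpos⟩ := ih
    have hκ (i) : 2 * κ i ≤ t := by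
      have hmem := himage ▸ mem_image_of_mem κ (mem_univ i)
      exact (mem_filter.1 hmem).2
    by_cases hins : ∃ k ∈ K, t + 1 = 2 * k
    · obtain ⟨k, hk, htk⟩ := hins
      have hnew : k ∉ Set.range κ := by
        rintro ⟨i, rfl⟩
        have := hκ i
        omega
      refine ⟨r + 1, Fin.cons k κ, Fin.cons_injective_iff.2 ⟨hnew, hinj⟩, ?_,
        hall.walkRows_cons hκ hk htk, hpos.oddRows_cons hκ hk htk⟩
      ext m
      have := congrArg (m ∈ ·) himage
      simp only [mem_image, mem_univ, true_and, mem_filter, eq_iff_iff, Fin.exists_fin_succ,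
        Fin.cons_zero, Fin.cons_succ] at this ⊢
      grind
    · push Not at hins
      refine ⟨r, κ, hinj, ?_, hall.walkRows_succ hκ hins, hpos.oddRows_succ hκ hins⟩
      rw [himage]
      exact filter_congr fun k hk => ⟨fun h => by omega, fun h => by grind⟩

end WalkRows

section Factorization

lemma det_fromBlocks_symm {R m : Type*} [CommRing R] [Fintype m] [DecidableEq m]
    (A B : Matrix m m R) : (fromBlocks A B B A).det = (A + B).det * (A - B).det := by
  have h : fromBlocks 1 1 0 1 * fromBlocks A B B A * fromBlocks 1 (-1) 0 1 =
      fromBlocks (A + B) 0 B (A - B) := by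
    rw [fromBlocks_multiply, fromBlocks_multiply]
    congr 1 <;> simp <;> abel
  simpa using congrArg det h

lemma det_submatrix_equiv_equiv {R m n : Type*} [CommRing R] [Fintype m] [DecidableEq m]
    [Fintype n] [DecidableEq n] (e f : m ≃ n) (M : Matrix n n R) :
    (M.submatrix e f).det = Equiv.Perm.sign (e.symm.trans f) * M.det := by
  rw [← det_permute', ← det_submatrix_equiv_self e (M.submatrix id _), submatrix_submatrix]
  congr 2
  funext i
  simp

variable {r : ℕ}

/-- The sorted enumeration of the positions `-h` and `h`. -/
def negAppend (h : Fin r → ℤ) (i : Fin (2 * r)) : ℤ :=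
  Fin.append (fun j => -h j.rev) h (i.cast (two_mul r))

lemma strictMono_negAppend {h : Fin r → ℤ} (hmono : StrictMono h) (hpos : ∀ j, 0 < h j) :
    StrictMono (negAppend h) := by
  suffices hm : StrictMono (Fin.append (fun j => -h j.rev) h) from fun i j hij =>
    hm (show i.cast (two_mul r) < j.cast (two_mul r) from hij)
  intro i j
  refine Fin.addCases (fun i => ?_) (fun i => ?_) i <;>
    refine Fin.addCases (fun j => ?_) (fun j => ?_) j <;> intro hij <;>
    simp only [Fin.append_left, Fin.append_right]
  · exact neg_lt_neg (hmono (Fin.rev_lt_rev.2 ((Fin.strictMono_castAdd r).lt_iff_lt.1 hij)))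
  · linarith [hpos i.rev, hpos j]
  · simp only [Fin.lt_def, Fin.val_natAdd, Fin.val_castAdd] at hij
    omega
  · exact hmono (by simpa using hij)

/-- Lists the negative positions of `negAppend h` before the positive ones, each in the order
of `h`. -/
def signedColumns (r : ℕ) : Fin r ⊕ Fin r ≃ Fin (2 * r) :=
  (Equiv.sumCongr Fin.revPerm (Equiv.refl _)).trans
    (finSumFinEquiv.trans (finCongr (two_mul r).symm))

lemma negAppend_signedColumns (h : Fin r → ℤ) (j : Fin r ⊕ Fin r) :
    negAppend h (signedColumns r j) = Sum.elim (-h) h j := by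
  rcases j with j | j
  · simp [negAppend, signedColumns]
  · exact Fin.append_right _ h j

lemma image_negAppend (h : Fin r → ℤ) : univ.image (negAppend h) = symmetrize (univ.image h) := by
  ext y
  simp only [mem_image, mem_univ, true_and, mem_symmetrize, (signedColumns r).surjective.exists,
    Sum.exists, negAppend_signedColumns, Sum.elim_inl, Sum.elim_inr, Pi.neg_apply,
    neg_eq_iff_eq_neg]
  exact or_comm

/-- Lists the rows of `walkRows` for the particles inserted at `-1` before those inserted
at `1`. -/
def signedRows (r : ℕ) : Fin r ⊕ Fin r ≃ Fin (2 * r) :=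
  Equiv.ofBijective (Sum.elim (fun i => ⟨2 * i, by omega⟩) fun i => ⟨2 * i + 1, by omega⟩) <| by
    refine (Fintype.bijective_iff_injective_and_card _).2 ⟨?_, by simp [two_mul]⟩
    rintro (i | i) (j | j) h <;> simp only [Sum.elim_inl, Sum.elim_inr, Fin.mk.injEq] at h
    · exact congrArg _ (Fin.ext (by omega))
    · omega
    · omega
    · exact congrArg _ (Fin.ext (by omega))

lemma walkRows_signedRows (t : ℕ) (κ : Fin r → ℕ) (i : Fin r ⊕ Fin r) (y : ℤ) :
    walkRows t κ (signedRows r i) y = Sum.elim (fun i => walkCount (t - 2 * κ i) (y + 1))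
      (fun i => walkCount (t - 2 * κ i) (y - 1)) i := by
  rcases i with i | i
  · have hval : (signedRows r (Sum.inl i) : ℕ) = 2 * i := rfl
    simp [walkRows, hval]
  · have hval : (signedRows r (Sum.inr i) : ℕ) = 2 * i + 1 := rfl
    simp [walkRows, hval, show (2 * (i : ℕ) + 1) / 2 = i by omega]

/-- The symmetric counterpart of `oddRows`. -/
def evenRows (t : ℕ) {r : ℕ} (κ : Fin r → ℕ) (i : Fin r) (y : ℤ) : ℤ :=
  walkCount (t - 2 * κ i) (y - 1) + walkCount (t - 2 * κ i) (y + 1)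

lemma configDet_walkRows_negAppend (t : ℕ) (κ : Fin r → ℕ) (h : Fin r → ℤ) :
    Equiv.Perm.sign ((signedColumns r).symm.trans (signedRows r)) *
        configDet (walkRows t κ) (negAppend h) =
      configDet (evenRows t κ) h * configDet (oddRows t κ) h := by
  have hblocks : (of fun j i => walkRows t κ i (negAppend h j)).submatrix
      (signedColumns r) (signedRows r) =
        fromBlocks (of fun j i => walkCount (t - 2 * κ i) (h j - 1))
          (of fun j i => walkCount (t - 2 * κ i) (h j + 1))
          (of fun j i => walkCount (t - 2 * κ i) (h j + 1))
          (of fun j i => walkCount (t - 2 * κ i) (h j - 1)) := by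
    have hneg (n : ℕ) (y : ℤ) : walkCount n (-y + 1) = walkCount n (y - 1) ∧
        walkCount n (-y - 1) = walkCount n (y + 1) := by
      rw [← walkCount_neg n (y - 1), ← walkCount_neg n (y + 1)]
      constructor <;> ring_nf
    ext (j | j) (i | i) <;>
      simp [negAppend_signedColumns, walkRows_signedRows, hneg]
  have hsign := det_submatrix_equiv_equiv (signedColumns r) (signedRows r)
    (of fun j i => walkRows t κ i (negAppend h j))
  rw [hblocks, det_fromBlocks_symm, Int.cast_id] at hsign
  exact hsign.symm

variable {c : ℕ} {κ : Fin r → ℕ}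

lemma cast_configDet_evenRows (hκ : ∀ i, κ i < c) (h : Fin r → ℕ) :
    (configDet (evenRows (2 * c - 1) κ) (fun j => 2 * h j) : ℚ) =
      (of fun i j => evenWalk (c - κ i) (h j)).det := by
  rw [configDet, ← det_transpose, ← eq_intCast (Int.castRingHom ℚ), RingHom.map_det]
  congr 1
  ext i j
  rw [of_apply, ← walkCount_add_eq_evenWalk (Nat.sub_pos_of_lt (hκ i)),
    show 2 * (c - κ i) - 1 = 2 * c - 1 - 2 * κ i by omega]
  rfl

lemma cast_configDet_oddRows (hκ : ∀ i, κ i < c) {h : Fin r → ℕ} (hpos : ∀ j, 0 < h j) :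
    (configDet (oddRows (2 * c - 1) κ) (fun j => 2 * h j) : ℚ) =
      (of fun i j => oddWalk (c - κ i) (h j)).det := by
  rw [configDet, ← det_transpose, ← eq_intCast (Int.castRingHom ℚ), RingHom.map_det]
  congr 1
  ext i j
  rw [of_apply, ← walkCount_sub_eq_oddWalk (Nat.sub_pos_of_lt (hκ i)) (hpos j),
    show 2 * (c - κ i) - 1 = 2 * c - 1 - 2 * κ i by omega]
  rfl

end Factorization

section Support

variable {S : Finset ℤ} {K : Finset ℕ} {P : Finset ℤ → Prop} {t : ℕ} {Y : Finset ℤ}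

lemma emod_two_of_chainCount_ne_zero (hS : ∀ s ∈ S, s % 2 = 1) (hY : chainCount S K P t Y ≠ 0) :
    ∀ y ∈ Y, (y + t) % 2 = 1 := by
  induction t generalizing Y with
  | zero => simp_all [chainCount]
  | succ t ih =>
    obtain ⟨-, X, ⟨f, hf, rfl⟩, hX⟩ := exists_precedes_of_chainCount_ne_zero hY
    intro y hy
    by_cases hins : y ∈ insertions S K (t + 1)
    · rw [insertions] at hins
      split_ifs at hins with h
      · have := hS y hins
        grind
      · simp at hins
    · have hmem := mem_sdiff.2 ⟨hy, hins⟩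
      have := ih hX _ (mem_image_of_mem f hmem)
      have := hf.1 y hmem
      grind

lemma card_insertions : #(insertions S K (t + 1)) + #S * #{k ∈ K | 2 * k ≤ t} =
    #S * #{k ∈ K | 2 * k ≤ t + 1} := by
  by_cases h : ∃ k ∈ K, t + 1 = 2 * k
  · obtain ⟨k, hk, htk⟩ := h
    have hinsert : {m ∈ K | 2 * m ≤ t + 1} = insert k {m ∈ K | 2 * m ≤ t} := by
      ext m
      simp only [mem_filter, mem_insert]
      grind
    rw [hinsert, card_insert_of_notMem (by simp; omega), htk, insertions_eq_of_mem hk]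
    ring
  · rw [insertions_eq_empty fun k hk e => h ⟨k, hk, e⟩, card_empty, zero_add]
    congr 2
    exact filter_congr fun k hk => ⟨fun h => by omega, fun h => by grind⟩

lemma card_of_chainCount_ne_zero (hK : 0 ∉ K) (hY : chainCount S K P t Y ≠ 0) :
    #Y = #S * #{k ∈ K | 2 * k ≤ t} := by
  induction t generalizing Y with
  | zero =>
    obtain ⟨-, rfl⟩ : P Y ∧ Y = ∅ := by simpa [chainCount] using hY
    have hempty : #{k ∈ K | 2 * k ≤ 0} = 0 := card_eq_zero.2 <| filter_eq_empty_iff.2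
      fun k hk h0 => hK ((show k = 0 by omega) ▸ hk)
    rw [hempty, card_empty, mul_zero]
  | succ t ih =>
    obtain ⟨hins, X, hX, hne⟩ := exists_precedes_of_chainCount_ne_zero hY
    have := hX.card_eq
    rw [ih hne, card_sdiff_of_subset hins] at this
    have := card_le_card hins
    have := card_insertions (S := S) (K := K) (t := t)
    omega

end Support

section SymmetricEndpoints

lemma IsPos.card_symmetrize {A : Finset ℤ} (hA : IsPos A) : #(symmetrize A) = 2 * #A := by
  rw [symmetrize, card_union_of_disjoint, card_image_of_injective _ neg_injective, two_mul]
  rw [disjoint_left]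
  intro y hy hy'
  obtain ⟨z, hz, rfl⟩ := mem_image.1 hy'
  have := hA _ hy
  have := hA _ hz
  omega

lemma IsSymm.symmetrize_filter {Y : Finset ℤ} (hY : IsSymm Y) (h0 : 0 ∉ Y) :
    symmetrize {y ∈ Y | 0 < y} = Y := by
  ext y
  rw [mem_symmetrize, mem_filter, mem_filter]
  have := hY y
  have := hY (-y)
  grind

open Classical in
/-- The symmetric configurations in `[-L, L]` that avoid the central rhombus of side `2 * x - 1`. -/
def symmetricEndpoints (x L : ℕ) : Finset (Finset ℤ) :=
  {Y ∈ (Icc (-(L : ℤ)) L).powerset | IsSymm Y ∧ ∀ y ∈ Y, 2 * (x : ℤ) - 2 < |y|}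

variable {x N r : ℕ}

lemma mem_symmetricEndpoints {L : ℕ} {Y : Finset ℤ} : Y ∈ symmetricEndpoints x L ↔
    IsSymm Y ∧ ∀ y ∈ Y, |y| ≤ L ∧ 2 * (x : ℤ) - 2 < |y| := by
  classical
  rw [symmetricEndpoints, mem_filter, mem_powerset]
  simp only [subset_iff, mem_Icc, ← abs_le, forall_and]
  tauto

/-- The even positions `2 * (x + h j)`, which form the positive half of a symmetric endpoint
configuration if `h` is increasing. -/
def evenPositions (x : ℕ) {N r : ℕ} (h : Fin r → Fin N) (j : Fin r) : ℤ :=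
  2 * (x + h j : ℕ)

lemma strictMono_evenPositions (x : ℕ) (h : Fin r ↪o Fin N) : StrictMono (evenPositions x h) :=
  fun i j hij => by
    have : (h i : ℕ) < h j := h.strictMono hij
    simp only [evenPositions]
    omega

lemma evenPositions_pos (hx : 0 < x) (h : Fin r → Fin N) (j : Fin r) : 0 < evenPositions x h j := by
  rw [evenPositions]
  omega

lemma isPos_image_evenPositions (hx : 0 < x) (h : Fin r → Fin N) :
    IsPos (univ.image (evenPositions x h)) :=
  forall_mem_image.2 fun j _ => evenPositions_pos hx h j

lemma symmetrize_evenPositions_mem (hx : 0 < x) (h : Fin r → Fin N) :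
    symmetrize (univ.image (evenPositions x h)) ∈ symmetricEndpoints x (2 * (x + N) - 1) := by
  refine mem_symmetricEndpoints.2 ⟨isSymm_symmetrize _, fun y hy => ?_⟩
  have hbound (j : Fin r) : |evenPositions x h j| ≤ (2 * (x + N) - 1 : ℕ) ∧
      2 * (x : ℤ) - 2 < |evenPositions x h j| := by
    rw [abs_of_pos (evenPositions_pos hx h j), evenPositions]
    omega
  rcases mem_symmetrize.1 hy with hy | hy <;> obtain ⟨j, -, hj⟩ := mem_image.1 hy
  · exact hj ▸ hbound j
  · rw [← abs_neg, ← hj]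
    exact hbound j

lemma injective_symmetrize_evenPositions (hx : 0 < x) : Function.Injective
    fun h : Fin r ↪o Fin N => symmetrize (univ.image (evenPositions x h)) := by
  intro h g hhg
  have himage :=
    (isPos_image_evenPositions hx h).symmetrize_inj (isPos_image_evenPositions hx g) hhg
  have hinj : Function.Injective fun n : Fin N => (2 * (x + n : ℕ) : ℤ) := fun m n hmn =>
    Fin.ext (by simp only at hmn; omega)
  refine OrderEmbedding.range_inj.1 (Set.image_injective.2 hinj ?_)
  rw [← Set.range_comp, ← Set.range_comp]
  rwa [← coe_inj, coe_image, coe_image, coe_univ, Set.image_univ, Set.image_univ] at himage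

lemma exists_symmetrize_evenPositions_eq {Y : Finset ℤ} (hx : 0 < x)
    (hY : Y ∈ symmetricEndpoints x (2 * (x + N) - 1)) (hcard : #Y = 2 * r)
    (heven : ∀ y ∈ Y, y % 2 = 0) :
    ∃ h : Fin r ↪o Fin N, symmetrize (univ.image (evenPositions x h)) = Y := by
  obtain ⟨hsymm, hbound⟩ := mem_symmetricEndpoints.1 hY
  have h0 : 0 ∉ Y := fun h => by
    have := (hbound 0 h).2
    rw [abs_zero] at this
    omega
  set T : Finset (Fin N) := {n | (2 * (x + n : ℕ) : ℤ) ∈ Y}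
  have hinj : Function.Injective fun n : Fin N => (2 * (x + n : ℕ) : ℤ) := fun m n hmn =>
    Fin.ext (by simp only at hmn; omega)
  have himage : T.image (fun n : Fin N => (2 * (x + n : ℕ) : ℤ)) = {y ∈ Y | 0 < y} := by
    ext y
    simp only [T, mem_image, mem_filter, mem_univ, true_and]
    refine ⟨?_, fun ⟨hy, hpos⟩ => ?_⟩
    · rintro ⟨n, hn, rfl⟩
      exact ⟨hn, by omega⟩
    · have := hbound y hy
      rw [abs_of_pos hpos] at this
      have := heven y hy
      have hval : (2 * (x + (y / 2 - x).toNat : ℕ) : ℤ) = y := by omega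
      exact ⟨⟨(y / 2 - x).toNat, by omega⟩, by simpa only [hval], hval⟩
  have hT : #T = r := by
    have := IsPos.card_symmetrize (A := {y ∈ Y | 0 < y}) fun y hy => (mem_filter.1 hy).2
    rw [hsymm.symmetrize_filter h0, hcard, ← himage, card_image_of_injective _ hinj] at this
    omega
  refine ⟨T.orderEmbOfFin hT, ?_⟩
  rw [← hsymm.symmetrize_filter h0, ← himage]
  conv_rhs => rw [← T.image_orderEmbOfFin_univ hT, image_image]
  rfl

lemma sum_symmetricEndpoints (hx : 0 < x) {g : Finset ℤ → ℚ}
    (hg : ∀ Y, g Y ≠ 0 → #Y = 2 * r ∧ ∀ y ∈ Y, y % 2 = 0) :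
    ∑ Y ∈ symmetricEndpoints x (2 * (x + N) - 1), g Y =
      ∑ h : Fin r ↪o Fin N, g (symmetrize (univ.image (evenPositions x h))) := by
  refine (sum_of_injOn _ (injective_symmetrize_evenPositions hx).injOn
    (fun h _ => symmetrize_evenPositions_mem hx h) (fun Y hY hne => ?_) fun h _ => rfl).symm
  by_contra hgY
  obtain ⟨h, rfl⟩ := exists_symmetrize_evenPositions_eq hx hY (hg Y hgY).1 (hg Y hgY).2
  exact hne ⟨h, mem_coe.2 (mem_univ h), rfl⟩

end SymmetricEndpoints

section Endpoints

variable {K : Finset ℕ} {c x N r t : ℕ} {κ : Fin r → ℕ} {h : Fin r → ℤ}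

lemma CountedBy.chainCount_isSymm (hu : CountedBy {1} K IsPos t (oddRows t κ))
    (hmono : StrictMono h) (hpar : OppositeParity t h) (hpos : ∀ j, 0 < h j) :
    (chainCount {-1, 1} K IsSymm t (symmetrize (univ.image h)) : ℤ) =
      configDet (oddRows t κ) h := by
  have hP : IsPos (univ.image h) := forall_mem_image.2 fun j _ => hpos j
  rw [show ({-1, 1} : Finset ℤ) = symmetrize {1} by decide,
    chainCount_symmetrize (by simp [IsPos]) hP, hu h hmono hpar hP]

lemma CountedBy.sign_mul_chainCount
    (hu : CountedBy {-1, 1} K (fun _ => True) t (walkRows t κ)) (hmono : StrictMono h)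
    (hpar : OppositeParity t h) (hpos : ∀ j, 0 < h j) :
    Equiv.Perm.sign ((signedColumns r).symm.trans (signedRows r)) *
        (chainCount {-1, 1} K (fun _ => True) t (symmetrize (univ.image h)) : ℤ) =
      configDet (evenRows t κ) h * configDet (oddRows t κ) h := by
  have hpar' : OppositeParity t (negAppend h) := fun i => by
    obtain ⟨j | j, rfl⟩ := (signedColumns r).surjective i <;> rw [negAppend_signedColumns]
    · have := hpar j
      simp only [Sum.elim_inl, Pi.neg_apply]
      omega
    · exact hpar j
  rw [← configDet_walkRows_negAppend, ← image_negAppend,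
    hu _ (strictMono_negAppend hmono hpos) hpar' trivial]

lemma oppositeParity_evenPositions (hc : 0 < c) (h : Fin r → Fin N) :
    OppositeParity (2 * c - 1) (evenPositions x h) := fun j => by
  rw [evenPositions]
  omega

lemma lt_of_image_eq (hκ : univ.image κ = {k ∈ K | 2 * k ≤ 2 * c - 1}) (hc : 0 < c) (i : Fin r) :
    κ i < c := by
  have := mem_image_of_mem κ (mem_univ i)
  rw [hκ, mem_filter] at this
  omega

lemma card_and_even_of_chainCount_ne_zero (hK : 0 ∉ K) (hinj : Function.Injective κ)
    (hκ : univ.image κ = {k ∈ K | 2 * k ≤ 2 * c - 1}) (hc : 0 < c) {P : Finset ℤ → Prop}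
    {Y : Finset ℤ} (hY : (chainCount {-1, 1} K P (2 * c - 1) Y : ℚ) ≠ 0) :
    #Y = 2 * r ∧ ∀ y ∈ Y, y % 2 = 0 := by
  rw [Nat.cast_ne_zero] at hY
  refine ⟨?_, fun y hy => ?_⟩
  · rw [card_of_chainCount_ne_zero hK hY, ← hκ, card_image_of_injective _ hinj, card_univ,
      Fintype.card_fin]
    rfl
  · have := emod_two_of_chainCount_ne_zero (by simp) hY y hy
    omega

lemma CountedBy.sum_chainCount_isSymm
    (hu : CountedBy {1} K IsPos (2 * c - 1) (oddRows (2 * c - 1) κ))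
    (hK : 0 ∉ K) (hinj : Function.Injective κ)
    (hκ : univ.image κ = {k ∈ K | 2 * k ≤ 2 * c - 1}) (hc : 0 < c) (hx : 0 < x) (hN : c ≤ N) :
    ∑ Y ∈ symmetricEndpoints x (2 * (x + N) - 1),
      (chainCount {-1, 1} K IsSymm (2 * c - 1) Y : ℚ) = oddMinorSum x fun i => c - κ i := by
  have hlt := lt_of_image_eq hκ hc
  rw [← sum_det_oddWalk (N := N) x (fun i => Nat.sub_pos_of_lt (hlt i)) _ fun i => by omega,
    sum_symmetricEndpoints hx fun Y => card_and_even_of_chainCount_ne_zero hK hinj hκ hc]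
  · refine sum_congr rfl fun h _ => ?_
    rw [← cast_configDet_oddRows hlt fun j => Nat.add_pos_left hx _, ← Int.cast_natCast,
      hu.chainCount_isSymm (strictMono_evenPositions x h) (oppositeParity_evenPositions hc h)
        (evenPositions_pos hx h)]
    rfl
  · intro i j hij
    have := hlt i
    have := hlt j
    exact hinj (by simp only at hij; omega)

lemma CountedBy.sign_mul_sum_chainCount
    (hall : CountedBy {-1, 1} K (fun _ => True) (2 * c - 1) (walkRows (2 * c - 1) κ))
    (hK : 0 ∉ K) (hinj : Function.Injective κ)
    (hκ : univ.image κ = {k ∈ K | 2 * k ≤ 2 * c - 1}) (hc : 0 < c) (hx : 0 < x) (hN : c ≤ N) :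
    Equiv.Perm.sign ((signedColumns r).symm.trans (signedRows r)) *
      ∑ Y ∈ symmetricEndpoints x (2 * (x + N) - 1),
        (chainCount {-1, 1} K (fun _ => True) (2 * c - 1) Y : ℚ) =
      oddMinorSum x (fun i => c - κ i) ^ 2 := by
  have hlt := lt_of_image_eq hκ hc
  rw [← sum_det_evenWalk_mul_det_oddWalk (N := N) x (fun i => Nat.sub_pos_of_lt (hlt i))
      fun i => by omega,
    sum_symmetricEndpoints hx fun Y => card_and_even_of_chainCount_ne_zero hK hinj hκ hc, mul_sum]
  refine sum_congr rfl fun h _ => ?_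
  rw [← cast_configDet_oddRows hlt fun j => Nat.add_pos_left hx _, ← cast_configDet_evenRows hlt]
  exact_mod_cast hall.sign_mul_chainCount (strictMono_evenPositions x h)
    (oppositeParity_evenPositions hc h) (evenPositions_pos hx h)

lemma eq_sq_of_units_mul_eq_sq {ε : ℤˣ} {m n : ℕ} (h : (ε : ℤ) * (m : ℚ) = n ^ 2) :
    m = n ^ 2 := by
  rcases Int.units_eq_one_or ε with rfl | rfl
  · rw [Units.val_one, Int.cast_one, one_mul] at h
    exact_mod_cast h
  · rw [Units.val_neg, Units.val_one, Int.cast_neg, Int.cast_one, neg_one_mul] at h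
    exact_mod_cast (show (m : ℚ) = n ^ 2 by
      linarith [Nat.cast_nonneg (α := ℚ) m, sq_nonneg (n : ℚ)])

theorem sum_chainCount_eq_sq (hK : 0 ∉ K) (hc : 0 < c) (hx : 0 < x) (hN : c ≤ N) :
    ∑ Y ∈ symmetricEndpoints x (2 * (x + N) - 1),
        chainCount {-1, 1} K (fun _ => True) (2 * c - 1) Y =
      (∑ Y ∈ symmetricEndpoints x (2 * (x + N) - 1),
        chainCount {-1, 1} K IsSymm (2 * c - 1) Y) ^ 2 := by
  obtain ⟨r, κ, hinj, hκ, hall, hpos⟩ := exists_countedBy hK (2 * c - 1)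
  have hsign := hall.sign_mul_sum_chainCount hK hinj hκ hc hx hN
  rw [← hpos.sum_chainCount_isSymm hK hinj hκ hc hx hN, ← Nat.cast_sum, ← Nat.cast_sum] at hsign
  exact eq_sq_of_units_mul_eq_sq hsign

end Endpoints

/-! ### Evolutions in the left half of the hexagon -/

/-- `X` is a sequence of configurations starting at `X₀` and evolving up to time `n` by moves,
the particles of `I (m + 1)` being inserted at time `m + 1`. Beyond time `n` it is constantly
empty, so that `X` is determined by its values up to time `n`. -/
structure IsEvolution (X₀ : Finset ℤ) (I : ℕ → Finset ℤ) (n : ℕ) (X : ℕ → Finset ℤ) : Prop where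
  zero : X 0 = X₀
  subset : ∀ m < n, I (m + 1) ⊆ X (m + 1)
  precedes : ∀ m < n, Precedes (X m) (X (m + 1) \ I (m + 1))
  eq_empty : ∀ m, n < m → X m = ∅

/-- The finite set of evolutions from `X₀` to `Y` at time `n` through configurations
satisfying `P`. -/
def evolutions (X₀ : Finset ℤ) (I : ℕ → Finset ℤ) (P : Finset ℤ → Prop) :
    ℕ → Finset ℤ → Finset (ℕ → Finset ℤ) :=
  open Classical in fun
  | 0, Y => if P Y ∧ Y = X₀ then {Function.update (fun _ => ∅) 0 Y} else ∅
  | n + 1, Y =>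
    if P Y ∧ I (n + 1) ⊆ Y then
      (predecessors (Y \ I (n + 1))).biUnion fun X =>
        (evolutions X₀ I P n X).image (Function.update · (n + 1) Y)
    else ∅

section Evolution

variable {X₀ : Finset ℤ} {I : ℕ → Finset ℤ} {P : Finset ℤ → Prop} {n : ℕ} {X : ℕ → Finset ℤ}
  {Y : Finset ℤ}

lemma IsEvolution.update_succ (h : IsEvolution X₀ I n X) (hI : I (n + 1) ⊆ Y)
    (hY : Precedes (X n) (Y \ I (n + 1))) :
    IsEvolution X₀ I (n + 1) (Function.update X (n + 1) Y) where
  zero := by rw [Function.update_of_ne (by lia), h.zero]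
  subset m hm := by
    obtain hm | rfl := Nat.lt_succ_iff_lt_or_eq.1 hm
    · rw [Function.update_of_ne (by lia)]
      exact h.subset m hm
    · rwa [Function.update_self]
  precedes m hm := by
    obtain hm | rfl := Nat.lt_succ_iff_lt_or_eq.1 hm
    · rw [Function.update_of_ne (by lia), Function.update_of_ne (by lia)]
      exact h.precedes m hm
    · rwa [Function.update_self, Function.update_of_ne (by lia)]
  eq_empty m hm := by rw [Function.update_of_ne (by lia), h.eq_empty m (by lia)]

lemma IsEvolution.truncate (h : IsEvolution X₀ I (n + 1) X) :
    IsEvolution X₀ I n (Function.update X (n + 1) ∅) where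
  zero := by rw [Function.update_of_ne (by lia), h.zero]
  subset m hm := by
    rw [Function.update_of_ne (by lia)]
    exact h.subset m (by lia)
  precedes m hm := by
    rw [Function.update_of_ne (by lia), Function.update_of_ne (by lia)]
    exact h.precedes m (by lia)
  eq_empty m hm := by
    obtain rfl | hne := eq_or_ne m (n + 1)
    · rw [Function.update_self]
    · rw [Function.update_of_ne hne, h.eq_empty m (by lia)]

lemma mem_evolutions_zero : X ∈ evolutions X₀ I P 0 Y ↔ IsEvolution X₀ I 0 X ∧ X 0 = Y ∧ P Y := by
  rw [evolutions]
  split_ifs with h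
  · rw [mem_singleton]
    constructor
    · rintro rfl
      refine ⟨⟨by simp [h.2], by simp, by simp, fun m hm => ?_⟩, by simp, h.1⟩
      rw [Function.update_of_ne hm.ne']
    · rintro ⟨hX, hXY, -⟩
      funext m
      rcases m.eq_zero_or_pos with rfl | hm
      · rw [hXY, Function.update_self]
      · rw [hX.eq_empty m hm, Function.update_of_ne hm.ne']
  · simp only [notMem_empty, false_iff]
    rintro ⟨hX, rfl, hP⟩
    exact h ⟨hP, hX.zero⟩

lemma mem_evolutions : X ∈ evolutions X₀ I P n Y ↔
    IsEvolution X₀ I n X ∧ X n = Y ∧ ∀ m ≤ n, P (X m) := by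
  induction n generalizing X Y with
  | zero =>
    simp only [mem_evolutions_zero, Nat.le_zero, forall_eq]
    exact and_congr_right fun _ => and_congr_right fun h => by rw [h]
  | succ n ih =>
    rw [evolutions]
    constructor
    · intro hX
      obtain ⟨hP, hI⟩ : P Y ∧ I (n + 1) ⊆ Y := by
        by_contra h
        simp [h] at hX
      rw [if_pos ⟨hP, hI⟩] at hX
      simp only [mem_biUnion, mem_predecessors, mem_image, ih] at hX
      obtain ⟨_, hpre, X', ⟨hX', rfl, hPX'⟩, rfl⟩ := hX
      refine ⟨hX'.update_succ hI hpre, Function.update_self .., fun m hm => ?_⟩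
      obtain hm | rfl := Nat.lt_succ_iff_lt_or_eq.1 (Nat.lt_succ_of_le hm)
      · rw [Function.update_of_ne (by lia)]
        exact hPX' m (by lia)
      · rwa [Function.update_self]
    · rintro ⟨hX, rfl, hP⟩
      rw [if_pos ⟨hP _ le_rfl, hX.subset n n.lt_succ_self⟩]
      simp only [mem_biUnion, mem_predecessors, mem_image, ih]
      refine ⟨X n, hX.precedes n n.lt_succ_self, _,
        ⟨hX.truncate, Function.update_of_ne (by lia) .., fun m hm => ?_⟩, ?_⟩
      · rw [Function.update_of_ne (by lia)]
        exact hP m (by lia)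
      · rw [Function.update_idem, Function.update_eq_self]

lemma card_evolutions_succ : #(evolutions X₀ I P (n + 1) Y) =
    open Classical in if P Y ∧ I (n + 1) ⊆ Y then
      ∑ X ∈ predecessors (Y \ I (n + 1)), #(evolutions X₀ I P n X) else 0 := by
  classical
  rw [evolutions]
  split_ifs
  · rw [card_biUnion]
    · refine sum_congr rfl fun X _ => card_image_of_injOn fun s hs t ht hst => ?_
      have hs := (mem_evolutions.1 (mem_coe.1 hs)).1
      have ht := (mem_evolutions.1 (mem_coe.1 ht)).1
      funext m
      obtain rfl | hm := eq_or_ne m (n + 1)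
      · rw [hs.eq_empty _ n.lt_succ_self, ht.eq_empty _ n.lt_succ_self]
      · simpa only [Function.update_of_ne hm] using congrFun hst m
    · intro X _ X' _ hne
      rw [Function.onFun, disjoint_left]
      intro r hr hr'
      obtain ⟨s, hs, rfl⟩ := mem_image.1 hr
      obtain ⟨t, ht, hst⟩ := mem_image.1 hr'
      have hn := congrFun hst n
      rw [Function.update_of_ne (by lia), Function.update_of_ne (by lia),
        (mem_evolutions.1 hs).2.1, (mem_evolutions.1 ht).2.1] at hn
      exact hne hn.symm
  · rfl

lemma Precedes.exists_of_mem_left {X Z : Finset ℤ} (h : Precedes X Z) {y : ℤ} (hy : y ∈ X) :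
    ∃ z ∈ Z, y = z - 1 ∨ y = z + 1 := by
  obtain ⟨f, hf, rfl⟩ := h
  obtain ⟨z, hz, rfl⟩ := mem_image.1 hy
  exact ⟨z, hz, hf.1 z hz⟩

lemma Precedes.exists_of_mem_right {X Z : Finset ℤ} (h : Precedes X Z) {z : ℤ} (hz : z ∈ Z) :
    ∃ y ∈ X, y = z - 1 ∨ y = z + 1 := by
  obtain ⟨f, hf, rfl⟩ := h
  exact ⟨f z, mem_image_of_mem f hz, hf.1 z hz⟩

end Evolution

/-- The nonzero positions of absolute value at most `t` and of parity opposite to `t`. Having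
started empty, and with particles inserted at every even time up to `t`, the particles are forced
to occupy these positions if `t` is even. -/
def block (t : ℕ) : Finset ℤ :=
  {y ∈ Icc (-(t : ℤ)) t | (y + t) % 2 = 1 ∧ y ≠ 0}

lemma mem_block {t : ℕ} {y : ℤ} :
    y ∈ block t ↔ (-(t : ℤ) ≤ y ∧ y ≤ t) ∧ (y + t) % 2 = 1 ∧ y ≠ 0 := by
  rw [block, mem_filter, mem_Icc]

lemma isSymm_block (t : ℕ) : IsSymm (block t) := by
  intro y
  simp only [mem_block]
  lia

lemma precedes_block_succ (t : ℕ) : Precedes (block t) (block (t + 1) \ {-1, 1}) := by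
  refine ⟨fun z => if 0 < z then z - 1 else z + 1, ⟨fun z _ => ?_, fun z hz w hw hzw => ?_⟩, ?_⟩
  · dsimp only
    split_ifs <;> simp
  · simp only [mem_coe, mem_sdiff, mem_block, mem_insert, mem_singleton] at hz hw hzw
    split_ifs at hzw <;> lia
  · ext y
    simp only [mem_image, mem_sdiff, mem_block, mem_insert, mem_singleton]
    constructor
    · rintro ⟨z, hz, rfl⟩
      split_ifs <;> lia
    · intro hy
      rcases lt_or_ge 0 y with hpos | hneg
      · exact ⟨y + 1, by lia, by rw [if_pos (by lia)]; lia⟩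
      · exact ⟨y - 1, by lia, by rw [if_neg (by lia)]; lia⟩

lemma Precedes.eq_block_succ_sdiff {t : ℕ} {Z : Finset ℤ} (h : Precedes (block t) Z)
    (hZ : ∀ z ∈ Z, z < -1 ∨ 1 < z) : Z = block (t + 1) \ {-1, 1} := by
  refine eq_of_subset_of_card_le (fun z hz => ?_) ?_
  · obtain ⟨y, hy, hyz⟩ := h.exists_of_mem_right hz
    have := hZ z hz
    simp only [mem_sdiff, mem_block, mem_insert, mem_singleton] at hy ⊢
    lia
  · rw [← (precedes_block_succ t).card_eq, h.card_eq]

lemma neg_one_one_subset_block {t : ℕ} (h0 : t ≠ 0) (ht : t % 2 = 0) : {-1, 1} ⊆ block t := by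
  intro y
  simp only [mem_block, mem_insert, mem_singleton]
  lia

lemma block_sdiff_of_odd {t : ℕ} (ht : t % 2 = 1) : block t \ {-1, 1} = block t := by
  ext y
  simp only [mem_sdiff, mem_block, mem_insert, mem_singleton]
  lia

lemma eq_block_of_precedes {j : ℕ} {X Y : Finset ℤ} (hX : Precedes (block (2 * j)) X)
    (hXY : Precedes X (Y \ {-1, 1})) (hY : {-1, 1} ⊆ Y) :
    X = block (2 * j + 1) ∧ Y = block (2 * j + 2) := by
  have hX_eq : X = block (2 * j + 1) := by
    rw [← block_sdiff_of_odd (by lia)]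
    refine hX.eq_block_succ_sdiff fun x hx => ?_
    obtain ⟨w, hw, hwx⟩ := hX.exists_of_mem_right hx
    obtain ⟨y, hy, hxy⟩ := hXY.exists_of_mem_left hx
    simp only [mem_sdiff, mem_block, mem_insert, mem_singleton] at hw hy
    lia
  refine ⟨hX_eq, ?_⟩
  subst hX_eq
  have hY_eq : Y \ {-1, 1} = block (2 * j + 2) \ {-1, 1} := by
    refine hXY.eq_block_succ_sdiff fun y hy => ?_
    obtain ⟨x, hx, hxy⟩ := hXY.exists_of_mem_right hy
    simp only [mem_sdiff, mem_block, mem_insert, mem_singleton] at hx hy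
    lia
  rw [← sdiff_union_of_subset hY, hY_eq,
    sdiff_union_of_subset (neg_one_one_subset_block (by lia) (by lia))]

section Counting

variable {K : Finset ℕ} {P : Finset ℤ → Prop} {b : ℕ}

lemma insertions_of_odd {S : Finset ℤ} {t : ℕ} (ht : t % 2 = 1) : insertions S K t = ∅ :=
  insertions_eq_empty fun _ _ => by lia

open Classical in
lemma chainCount_two_mul_add_one {S Z : Finset ℤ} {j : ℕ}
    (h : ∀ Y, chainCount S K P (2 * j) Y = if Y = Z then 1 else 0) (Y : Finset ℤ) :
    chainCount S K P (2 * j + 1) Y = if P Y ∧ Precedes Z Y then 1 else 0 := by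
  rw [chainCount, insertions_of_odd (by lia), sdiff_empty]
  simp only [h, sum_ite_eq', mem_predecessors, empty_subset, and_true, ite_and]

open Classical in
lemma chainCount_two_mul (hP : ∀ Y, IsSymm Y → P Y) (hK : Icc 1 b ⊆ K) {j : ℕ} (hj : j ≤ b)
    (Y : Finset ℤ) : chainCount {-1, 1} K P (2 * j) Y = if Y = block (2 * j) then 1 else 0 := by
  induction j generalizing Y with
  | zero =>
    have hblock : block (2 * 0) = ∅ := by
      ext y
      simp only [mem_block, notMem_empty]
      lia
    have hPY : Y = ∅ → P Y := by
      rintro rfl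
      exact hP ∅ fun y hy => by simp at hy
    simp only [hblock, chainCount, and_iff_right_of_imp hPY]
  | succ j ih =>
    have hins : insertions {-1, 1} K (2 * j + 2) = {-1, 1} :=
      insertions_eq_of_mem (κ := j + 1) (hK (mem_Icc.2 ⟨by lia, hj⟩))
    rw [show 2 * (j + 1) = 2 * j + 1 + 1 by ring, chainCount, hins]
    simp only [chainCount_two_mul_add_one (ih (by lia))]
    split_ifs with hPY hY hY
    · subst hY
      have hmem : block (2 * j + 1) ∈ predecessors (block (2 * j + 2) \ {-1, 1}) :=
        mem_predecessors.2 (precedes_block_succ _)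
      have hpre : Precedes (block (2 * j)) (block (2 * j + 1)) := by
        rw [← block_sdiff_of_odd (t := 2 * j + 1) (by lia)]
        exact precedes_block_succ _
      rw [sum_eq_single_of_mem _ hmem, if_pos ⟨hP _ (isSymm_block _), hpre⟩]
      exact fun X hX hne => if_neg fun h =>
        hne (eq_block_of_precedes h.2 (mem_predecessors.1 hX) hPY.2).1
    · exact sum_eq_zero fun X hX => if_neg fun h =>
        hY (eq_block_of_precedes h.2 (mem_predecessors.1 hX) hPY.2).2
    · subst hY
      exact absurd ⟨hP _ (isSymm_block _), neg_one_one_subset_block (by lia) (by lia)⟩ hPY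
    · rfl

lemma card_evolutions_block (hP : ∀ Y, IsSymm Y → P Y) (hK : Icc 1 b ⊆ K) (n : ℕ)
    (Y : Finset ℤ) :
    #(evolutions (block (2 * b)) (fun m => insertions {-1, 1} K (2 * b + m)) P n Y) =
      chainCount {-1, 1} K P (2 * b + n) Y := by
  induction n generalizing Y with
  | zero =>
    have hPY : Y = block (2 * b) → P Y := by
      rintro rfl
      exact hP _ (isSymm_block _)
    rw [Nat.add_zero, chainCount_two_mul hP hK le_rfl]
    simp only [evolutions, and_iff_right_of_imp hPY]
    split_ifs <;> simp
  | succ n ih =>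
    simp only [card_evolutions_succ, ih]
    rw [← Nat.add_assoc, chainCount]

end Counting

section Evolution

variable {K : Finset ℕ} {P : Finset ℤ → Prop} {b n x : ℕ} {X : ℕ → Finset ℤ}

/-- `X` is an evolution of the particles in the left half of a hexagon whose left side has
length `2 * b`, with pairs of particles inserted at the times prescribed by `K`, which ends in a
symmetric configuration avoiding the central rhombus of side `2 * x - 1`. -/
structure IsHalfHexagonEvolution (K : Finset ℕ) (b n x : ℕ) (X : ℕ → Finset ℤ) : Prop extends
    IsEvolution (block (2 * b)) (fun m => insertions {-1, 1} K (2 * b + m)) n X where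
  isSymm_last : IsSymm (X n)
  lt_abs_of_mem_last : ∀ y ∈ X n, 2 * (x : ℤ) - 2 < |y|

lemma mem_insertions_neg_one_one {t : ℕ} {y : ℤ} :
    y ∈ insertions {-1, 1} K t ↔ (∃ κ ∈ K, t = 2 * κ) ∧ (y = -1 ∨ y = 1) := by
  rw [insertions]
  split_ifs with h
  · simp only [mem_insert, mem_singleton, h, true_and]
  · simp [h]

lemma IsHalfHexagonEvolution.mem_Icc_and_emod_two (h : IsHalfHexagonEvolution K b n x X) {m : ℕ}
    (hm : m ≤ n) : ∀ y ∈ X m, y ∈ Icc (-(2 * b + m : ℤ)) (2 * b + m) ∧ (y - m) % 2 = 1 := by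
  simp only [mem_Icc]
  induction m with
  | zero =>
    intro y hy
    rw [h.zero, mem_block] at hy
    lia
  | succ m ih =>
    intro z hz
    by_cases hins : z ∈ insertions {-1, 1} K (2 * b + (m + 1))
    · obtain ⟨⟨κ, -, hκ⟩, hz⟩ := mem_insertions_neg_one_one.1 hins
      lia
    · obtain ⟨y, hy, hyz⟩ := (h.precedes m hm).exists_of_mem_right (mem_sdiff.2 ⟨hz, hins⟩)
      have := ih (by lia) y hy
      lia

lemma IsHalfHexagonEvolution.lt_abs_add (h : IsHalfHexagonEvolution K b n x X) {i m : ℕ}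
    (hm : m + i = n) : ∀ y ∈ X m, 2 * (x : ℤ) - 2 < |y| + i := by
  induction i generalizing m with
  | zero =>
    obtain rfl : m = n := hm
    simpa using h.lt_abs_of_mem_last
  | succ i ih =>
    intro y hy
    obtain ⟨z, hz, hyz⟩ := (h.precedes m (by lia)).exists_of_mem_left hy
    have := ih (m := m + 1) (by lia) z (mem_sdiff.1 hz).1
    have := abs_sub_abs_le_abs_sub z y
    have : |z - y| = 1 := by
      rcases hyz with rfl | rfl <;> simp
    lia

lemma card_isHalfHexagonEvolution (hP : ∀ Y, IsSymm Y → P Y) (hK : Icc 1 b ⊆ K) {L : ℕ}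
    (hL : 2 * b + n ≤ L) :
    Nat.card {X // IsHalfHexagonEvolution K b n x X ∧ ∀ m, P (X m)} =
      ∑ Y ∈ symmetricEndpoints x L, chainCount {-1, 1} K P (2 * b + n) Y := by
  classical
  have hmem : ∀ X, IsHalfHexagonEvolution K b n x X ∧ (∀ m, P (X m)) ↔
      X ∈ (symmetricEndpoints x L).biUnion
        (evolutions (block (2 * b)) (fun m => insertions {-1, 1} K (2 * b + m)) P n) := by
    intro X
    simp only [mem_biUnion, mem_evolutions, mem_symmetricEndpoints]
    constructor
    · rintro ⟨hX, hPX⟩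
      refine ⟨X n, ⟨hX.isSymm_last, fun y hy => ⟨?_, hX.lt_abs_of_mem_last y hy⟩⟩,
        hX.toIsEvolution, rfl, fun m _ => hPX m⟩
      have := mem_Icc.1 (hX.mem_Icc_and_emod_two le_rfl y hy).1
      rw [abs_le]
      lia
    · rintro ⟨_, ⟨hsymm, hY⟩, hX, rfl, hPX⟩
      refine ⟨⟨hX, hsymm, fun y hy => (hY y hy).2⟩, fun m => ?_⟩
      rcases le_or_gt m n with hm | hm
      · exact hPX m hm
      · rw [hX.eq_empty m hm]
        exact hP ∅ fun y hy => by simp at hy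
  rw [Nat.card_congr (Equiv.subtypeEquivRight hmem), Nat.card_eq_fintype_card, Fintype.card_coe,
    card_biUnion]
  · exact sum_congr rfl fun Y _ => card_evolutions_block hP hK n Y
  · intro Y _ Y' _ hne
    rw [Function.onFun, disjoint_left]
    exact fun X hX hX' => hne ((mem_evolutions.1 hX).2.1.symm.trans (mem_evolutions.1 hX').2.1)

theorem card_isHalfHexagonEvolution_eq_sq (hK0 : 0 ∉ K) (hK : Icc 1 b ⊆ K) {a : ℕ} (ha : 0 < a)
    (hx : 0 < x) :
    Nat.card {X // IsHalfHexagonEvolution K b (2 * a - 1) x X ∧ ∀ _ : ℕ, True} =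
      Nat.card {X // IsHalfHexagonEvolution K b (2 * a - 1) x X ∧ ∀ m, IsSymm (X m)} ^ 2 := by
  have hL : 2 * b + (2 * a - 1) ≤ 2 * (x + (a + b)) - 1 := by lia
  rw [card_isHalfHexagonEvolution (P := fun _ => True) (fun _ _ => trivial) hK hL,
    card_isHalfHexagonEvolution (fun _ h => h) hK hL,
    show 2 * b + (2 * a - 1) = 2 * (a + b) - 1 by lia]
  exact sum_chainCount_eq_sq hK0 (by lia) hx le_rfl

end Evolution

/-! ### Perfect matchings of unit triangles -/

/-- A unit triangle of the lattice: the pair of its column and of its height, in units of half the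
lattice spacing. It points to the left if the two coordinates have the same parity, and to the
right otherwise. -/
abbrev Cell := ℤ × ℤ

/-- Two cells are adjacent if the unit triangles share an edge, which is the right (left) edge
of the cell on the left (right) if the cells lie in different columns. -/
def Cell.Adj (c d : Cell) : Prop :=
  (d.1 = c.1 ∧ (d.2 = c.2 + 1 ∨ d.2 = c.2 - 1)) ∨
    (d.2 = c.2 ∧ ((d.1 = c.1 + 1 ∧ (c.2 - c.1) % 2 = 0) ∨ (d.1 = c.1 - 1 ∧ (c.2 - c.1) % 2 = 1)))

lemma Cell.Adj.symm {c d : Cell} (h : c.Adj d) : d.Adj c := by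
  simp only [Adj] at *
  lia

lemma Cell.Adj.of_even {c d : Cell} (h : c.Adj d) (hc : (c.2 - c.1) % 2 = 0) :
    (d = (c.1, c.2 - 1) ∨ d = (c.1, c.2 + 1)) ∨ d = (c.1 + 1, c.2) := by
  simp only [Adj] at h
  simp only [Prod.ext_iff]
  lia

lemma Cell.Adj.of_odd {c d : Cell} (h : c.Adj d) (hc : (c.2 - c.1) % 2 = 1) :
    (d = (c.1, c.2 - 1) ∨ d = (c.1, c.2 + 1)) ∨ d = (c.1 - 1, c.2) := by
  simp only [Adj] at h
  simp only [Prod.ext_iff]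
  lia

lemma Cell.Adj.emod_two {c d : Cell} (h : c.Adj d) : (d.2 - d.1) % 2 = 1 - (c.2 - c.1) % 2 := by
  simp only [Adj] at h
  lia

/-- `M` is the relation "is matched with" of a perfect matching of the adjacency graph of the
cells in `D`. -/
structure IsPerfectMatching (D : Set Cell) (M : Cell → Cell → Prop) : Prop where
  adj : ∀ {c d}, M c d → c.Adj d
  symm : ∀ {c d}, M c d → M d c
  mem : ∀ {c d}, M c d → c ∈ D
  exists_partner : ∀ {c}, c ∈ D → ∃ d, M c d
  unique : ∀ {c d e}, M c d → M c e → d = e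

/-- The cell `c` is matched with a cell of the same column. -/
def IsVertical (M : Cell → Cell → Prop) (c : Cell) : Prop :=
  ∃ y, M c (c.1, y)

section IsPerfectMatching

variable {D : Set Cell} {M : Cell → Cell → Prop} {c : Cell}

lemma IsPerfectMatching.not_isVertical_iff_of_even (hM : IsPerfectMatching D M) (hc : c ∈ D)
    (hpar : (c.2 - c.1) % 2 = 0) : ¬ IsVertical M c ↔ M c (c.1 + 1, c.2) := by
  constructor
  · intro hv
    obtain ⟨d, hd⟩ := hM.exists_partner hc
    rcases (hM.adj hd).of_even hpar with (rfl | rfl) | rfl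
    · exact absurd ⟨_, hd⟩ hv
    · exact absurd ⟨_, hd⟩ hv
    · exact hd
  · rintro h ⟨y, hy⟩
    simpa using congrArg Prod.fst (hM.unique h hy)

lemma IsPerfectMatching.not_isVertical_iff_of_odd (hM : IsPerfectMatching D M) (hc : c ∈ D)
    (hpar : (c.2 - c.1) % 2 = 1) : ¬ IsVertical M c ↔ M c (c.1 - 1, c.2) := by
  constructor
  · intro hv
    obtain ⟨d, hd⟩ := hM.exists_partner hc
    rcases (hM.adj hd).of_odd hpar with (rfl | rfl) | rfl
    · exact absurd ⟨_, hd⟩ hv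
    · exact absurd ⟨_, hd⟩ hv
    · exact hd
  · rintro h ⟨y, hy⟩
    simpa using congrArg Prod.fst (hM.unique h hy)

end IsPerfectMatching

/-- The left half of a region that is invariant under the half-turn and under the reflection in
the horizontal axis. The columns of the left half are numbered `0, …, width - 1`; `black m` and
`white m` are the heights of the left-pointing and of the right-pointing cells of column `m`. The
white cells of column `m + 1` whose left edge is on the boundary of the region are the ones with
height in `hole (m + 1)`. -/
structure HalfRegion where
  width : ℕ
  black : ℕ → Finset ℤ
  white : ℕ → Finset ℤ
  hole : ℕ → Finset ℤ
  black_emod_two : ∀ m, ∀ y ∈ black m, (y - m) % 2 = 0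
  white_emod_two : ∀ m, ∀ y ∈ white m, (y - m) % 2 = 1
  white_succ : ∀ m, m + 1 < width → white (m + 1) = black m ∪ hole (m + 1)
  disjoint_hole : ∀ m < width, Disjoint (black m) (hole (m + 1))
  hole_width : hole width = ∅
  isSymm_black : ∀ m, IsSymm (black m)
  isSymm_white : ∀ m, IsSymm (white m)
  isSymm_hole : ∀ m, IsSymm (hole m)

namespace HalfRegion

variable (S : HalfRegion)

/-- The rotation by 180° about the center of the region, on cells. -/
def rot (c : Cell) : Cell := (2 * S.width - 1 - c.1, -c.2)

/-- The reflection in the vertical symmetry axis of the region, on cells. -/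
def mirror (c : Cell) : Cell := (2 * S.width - 1 - c.1, c.2)

/-- The cells of the left half of the region. -/
def leftCells : Set Cell := {c | ∃ m < S.width, c.1 = m ∧ (c.2 ∈ S.black m ∨ c.2 ∈ S.white m)}

/-- The cells of the region. -/
def cells : Set Cell := {c | c ∈ S.leftCells ∨ S.rot c ∈ S.leftCells}

/-- The relation `M` is invariant under the half-turn. -/
def IsRotInvariant (M : Cell → Cell → Prop) : Prop := ∀ c d, M c d → M (S.rot c) (S.rot d)

/-- The relation `M` is invariant under the reflection in the vertical symmetry axis. -/
def IsMirrorInvariant (M : Cell → Cell → Prop) : Prop :=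
  ∀ c d, M c d → M (S.mirror c) (S.mirror d)

variable {S}

@[simp]
lemma rot_rot (c : Cell) : S.rot (S.rot c) = c := by
  ext <;> simp [rot]

lemma adj_rot {c d : Cell} (h : c.Adj d) : (S.rot c).Adj (S.rot d) := by
  simp only [Cell.Adj, rot] at *
  lia

lemma adj_mirror {c d : Cell} (h : c.Adj d) : (S.mirror c).Adj (S.mirror d) := by
  simp only [Cell.Adj, mirror] at *
  lia

lemma rot_mem_cells {c : Cell} (h : c ∈ S.cells) : S.rot c ∈ S.cells := by
  rcases h with h | h
  · exact Or.inr (by rwa [rot_rot])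
  · exact Or.inl h

lemma fst_nonneg {c : Cell} (h : c ∈ S.cells) : 0 ≤ c.1 := by
  rcases h with ⟨m, -, h, -⟩ | ⟨m, hm, h, -⟩
  · lia
  · simp only [rot] at h
    lia

lemma natCast_mem_cells {m : ℕ} (hm : m < S.width) {y : ℤ} :
    ((m : ℤ), y) ∈ S.cells ↔ y ∈ S.black m ∨ y ∈ S.white m := by
  constructor
  · rintro (⟨n, -, hmn, h⟩ | ⟨n, hn, hmn, -⟩)
    · obtain rfl : m = n := Nat.cast_injective hmn
      exact h
    · simp only [rot] at hmn
      lia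
  · exact fun h => Or.inl ⟨m, hm, rfl, h⟩

lemma mem_black_iff {m : ℕ} (hm : m < S.width) {y : ℤ} :
    y ∈ S.black m ↔ ((m : ℤ), y) ∈ S.cells ∧ (y - m) % 2 = 0 := by
  rw [natCast_mem_cells hm]
  constructor
  · exact fun h => ⟨Or.inl h, S.black_emod_two m y h⟩
  · rintro ⟨h | h, hpar⟩
    · exact h
    · have := S.white_emod_two m y h
      lia

lemma mem_white_iff {m : ℕ} (hm : m < S.width) {y : ℤ} :
    y ∈ S.white m ↔ ((m : ℤ), y) ∈ S.cells ∧ (y - m) % 2 = 1 := by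
  rw [natCast_mem_cells hm]
  constructor
  · exact fun h => ⟨Or.inr h, S.white_emod_two m y h⟩
  · rintro ⟨h | h, hpar⟩
    · have := S.black_emod_two m y h
      lia
    · exact h

lemma forall_mem_cells {p : Cell → Prop} (hrot : ∀ c, p c → p (S.rot c))
    (hblack : ∀ m < S.width, ∀ y ∈ S.black m, p (m, y))
    (hwhite : ∀ m < S.width, ∀ y ∈ S.white m, p (m, y)) : ∀ c ∈ S.cells, p c := by
  have hleft : ∀ c ∈ S.leftCells, p c := by
    rintro ⟨_, y⟩ ⟨m, hm, rfl, h | h⟩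
    · exact hblack m hm y h
    · exact hwhite m hm y h
  rintro c (h | h)
  · exact hleft c h
  · simpa using hrot _ (hleft _ h)

variable (S) in
/-- The evolutions encoding the rotation-invariant perfect matchings of the region: `X m` is the
set of heights of the white cells of column `m` that are matched with a cell of the same
column. -/
structure IsPathSystem (X : ℕ → Finset ℤ) : Prop extends
    IsEvolution (S.white 0) S.hole S.width X where
  subset_white : ∀ m < S.width, X m ⊆ S.white m
  sdiff_subset_black : ∀ m < S.width, X (m + 1) \ S.hole (m + 1) ⊆ S.black m
  isSymm_last : IsSymm (X S.width)

section Partner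

variable (S) in
open Classical in
/-- The partner of a cell of the left half of the region in the perfect matching encoded by `X`,
where `f m` is the move from `X (m + 1) \ hole (m + 1)` to `X m`. -/
def leftPartner (f : ℕ → ℤ → ℤ) (X : ℕ → Finset ℤ) (c : Cell) : Cell :=
  let m := c.1.toNat
  let Z := X (m + 1) \ S.hole (m + 1)
  if c.2 ∈ S.black m then if c.2 ∈ Z then (c.1, f m c.2) else (c.1 + 1, c.2)
  else if c.2 ∈ X m then (c.1, Function.invFunOn (f m) Z c.2) else (c.1 - 1, c.2)

variable (S) in
/-- The extension of `leftPartner` to the whole region by rotation invariance. -/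
def partner (f : ℕ → ℤ → ℤ) (X : ℕ → Finset ℤ) (c : Cell) : Cell :=
  if c.1 < S.width then S.leftPartner f X c else S.rot (S.leftPartner f X (S.rot c))

variable {f : ℕ → ℤ → ℤ} {X : ℕ → Finset ℤ} {m : ℕ} {y z : ℤ}

lemma partner_rot (c : Cell) : S.partner f X (S.rot c) = S.rot (S.partner f X c) := by
  have hlt : (S.rot c).1 < S.width ↔ ¬ c.1 < S.width := by
    simp only [rot]
    lia
  by_cases h : c.1 < S.width <;> simp [partner, h, hlt]

lemma partner_black (hm : m < S.width) (hz : z ∈ S.black m) : S.partner f X (m, z) =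
    if z ∈ X (m + 1) \ S.hole (m + 1) then ((m : ℤ), f m z) else ((m : ℤ) + 1, z) := by
  simp only [partner, leftPartner, Int.toNat_natCast, Nat.cast_lt, if_pos hm, if_pos hz]

lemma partner_white (hm : m < S.width) (hy : y ∈ S.white m) : S.partner f X (m, y) =
    if y ∈ X m then ((m : ℤ), Function.invFunOn (f m) (X (m + 1) \ S.hole (m + 1) : Finset ℤ) y)
    else ((m : ℤ) - 1, y) := by
  have hblack : y ∉ S.black m := fun h => by
    have := S.black_emod_two m y h
    have := S.white_emod_two m y hy
    lia
  simp only [partner, leftPartner, Int.toNat_natCast, Nat.cast_lt, if_pos hm, if_neg hblack]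

variable (S f X) in
/-- The function `partner` matches the cell `c` with an adjacent cell of the region. -/
def IsPaired (c : Cell) : Prop :=
  c.Adj (S.partner f X c) ∧ S.partner f X c ∈ S.cells ∧ S.partner f X (S.partner f X c) = c

lemma IsPaired.rot {c : Cell} (h : S.IsPaired f X c) : S.IsPaired f X (S.rot c) := by
  obtain ⟨hadj, hmem, hinv⟩ := h
  refine ⟨?_, ?_, ?_⟩
  · rw [partner_rot]
    exact adj_rot hadj
  · rw [partner_rot]
    exact rot_mem_cells hmem
  · rw [partner_rot, partner_rot, hinv]

lemma isPaired_vertical (hX : S.IsPathSystem X) (hm : m < S.width)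
    (hf : IsMove (f m) (X (m + 1) \ S.hole (m + 1)))
    (himage : (X (m + 1) \ S.hole (m + 1)).image (f m) = X m)
    (hz : z ∈ X (m + 1) \ S.hole (m + 1)) :
    S.IsPaired f X (m, z) ∧ S.IsPaired f X (m, f m z) := by
  have hblack := hX.sdiff_subset_black m hm hz
  have hfz : f m z ∈ X m := himage ▸ mem_image_of_mem _ hz
  have hwhite := hX.subset_white m hm hfz
  have hzf : S.partner f X (m, z) = ((m : ℤ), f m z) := by
    rw [partner_black hm hblack, if_pos hz]
  have hfz : S.partner f X (m, f m z) = ((m : ℤ), z) := by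
    rw [partner_white hm hwhite, if_pos hfz, hf.2.leftInvOn_invFunOn (mem_coe.2 hz)]
  have hmove := hf.1 z hz
  refine ⟨⟨?_, ?_, by rw [hzf, hfz]⟩, ⟨?_, ?_, by rw [hfz, hzf]⟩⟩
  · rw [hzf]
    exact Or.inl ⟨rfl, by lia⟩
  · rw [hzf]
    exact (natCast_mem_cells hm).2 (Or.inr hwhite)
  · rw [hfz]
    exact Or.inl ⟨rfl, by lia⟩
  · rw [hfz]
    exact (natCast_mem_cells hm).2 (Or.inl hblack)

lemma isPaired_horizontal (hm : m + 1 < S.width) (hy : y ∈ S.black m)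
    (hyX : y ∉ X (m + 1) \ S.hole (m + 1)) :
    S.IsPaired f X (m, y) ∧ S.IsPaired f X ((m : ℤ) + 1, y) := by
  have hwhite : y ∈ S.white (m + 1) := by
    rw [S.white_succ m hm]
    exact mem_union_left _ hy
  have hyX' : y ∉ X (m + 1) := fun h =>
    hyX (mem_sdiff.2 ⟨h, disjoint_left.1 (S.disjoint_hole m (by lia)) hy⟩)
  have hleft : S.partner f X (m, y) = ((m : ℤ) + 1, y) := by
    rw [partner_black (by lia) hy, if_neg hyX]
  have hright : S.partner f X ((m : ℤ) + 1, y) = ((m : ℤ), y) := by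
    have := partner_white (f := f) (X := X) hm hwhite
    rw [if_neg hyX'] at this
    push_cast at this
    rw [this, add_sub_cancel_right]
  have hpar := S.black_emod_two m y hy
  refine ⟨⟨?_, ?_, by rw [hleft, hright]⟩, ⟨?_, ?_, by rw [hright, hleft]⟩⟩
  · rw [hleft]
    exact Or.inr ⟨rfl, Or.inl ⟨rfl, hpar⟩⟩
  · rw [hleft]
    exact_mod_cast (natCast_mem_cells hm).2 (Or.inr hwhite)
  · rw [hright]
    exact Or.inr ⟨rfl, Or.inr ⟨by simp, by dsimp only; lia⟩⟩
  · rw [hright]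
    exact (natCast_mem_cells (by lia)).2 (Or.inl hy)

lemma isPaired_middle (hX : S.IsPathSystem X) (hm : m + 1 = S.width) (hy : y ∈ S.black m)
    (hyX : y ∉ X (m + 1) \ S.hole (m + 1)) : S.IsPaired f X (m, y) := by
  have hneg : -y ∈ S.black m := S.isSymm_black m y hy
  have hnegX : -y ∉ X (m + 1) \ S.hole (m + 1) := by
    rw [hm, S.hole_width, sdiff_empty] at hyX ⊢
    exact fun h => hyX (by simpa using hX.isSymm_last _ h)
  have hmid : ∀ y, ((m : ℤ) + 1, y) = S.rot (m, -y) := fun y => by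
    ext <;> simp only [rot, neg_neg]
    lia
  have hpartner : S.partner f X (m, y) = S.rot (m, -y) := by
    rw [partner_black (by lia) hy, if_neg hyX, hmid]
  refine ⟨?_, ?_, ?_⟩
  · rw [hpartner, ← hmid]
    exact Or.inr ⟨rfl, Or.inl ⟨rfl, S.black_emod_two m y hy⟩⟩
  · rw [hpartner]
    exact rot_mem_cells ((natCast_mem_cells (by lia)).2 (Or.inl hneg))
  · rw [hpartner, partner_rot, partner_black (by lia) hneg, if_neg hnegX, hmid, rot_rot, neg_neg]

lemma isPaired_of_mem_cells (hX : S.IsPathSystem X)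
    (hf : ∀ m < S.width, IsMove (f m) (X (m + 1) \ S.hole (m + 1)) ∧
      (X (m + 1) \ S.hole (m + 1)).image (f m) = X m) : ∀ c ∈ S.cells, S.IsPaired f X c := by
  refine forall_mem_cells (fun _ => IsPaired.rot) (fun m hm y hy => ?_) (fun m hm y hy => ?_)
  · by_cases hyX : y ∈ X (m + 1) \ S.hole (m + 1)
    · exact (isPaired_vertical hX hm (hf m hm).1 (hf m hm).2 hyX).1
    obtain hm | hm := Nat.lt_or_eq_of_le hm
    · exact (isPaired_horizontal hm hy hyX).1
    · exact isPaired_middle hX hm hy hyX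
  · by_cases hyX : y ∈ X m
    · rw [← (hf m hm).2] at hyX
      obtain ⟨z, hz, rfl⟩ := mem_image.1 hyX
      exact (isPaired_vertical hX hm (hf m hm).1 (hf m hm).2 hz).2
    · obtain _ | m := m
      · exact absurd (hX.zero ▸ hy) hyX
      rw [S.white_succ m hm, mem_union] at hy
      have hblack := hy.resolve_right fun h => hyX (hX.subset m (by lia) h)
      have := (isPaired_horizontal (f := f) hm hblack fun h => hyX (mem_sdiff.1 h).1).2
      exact_mod_cast this

lemma isPerfectMatching_partner (h : ∀ c ∈ S.cells, S.IsPaired f X c) :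
    IsPerfectMatching S.cells (fun c d => c ∈ S.cells ∧ S.partner f X c = d) where
  adj := by
    rintro c _ ⟨hc, rfl⟩
    exact (h c hc).1
  symm := by
    rintro c _ ⟨hc, rfl⟩
    exact (h c hc).2
  mem h := h.1
  exists_partner hc := ⟨_, hc, rfl⟩
  unique h h' := h.2.symm.trans h'.2

lemma isRotInvariant_partner :
    S.IsRotInvariant (fun c d => c ∈ S.cells ∧ S.partner f X c = d) := by
  rintro c _ ⟨hc, rfl⟩
  exact ⟨rot_mem_cells hc, partner_rot c⟩

end Partner

section Configurations

variable {M M' : Cell → Cell → Prop} {m : ℕ} {y : ℤ}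

variable (S) in
open Classical in
/-- The heights of the black cells of column `m` that `M` matches with a cell of the same
column. -/
def blackVerticals (M : Cell → Cell → Prop) (m : ℕ) : Finset ℤ :=
  {y ∈ S.black m | IsVertical M (m, y)}

variable (S) in
/-- The evolution encoding the perfect matching `M`. -/
def configurations (M : Cell → Cell → Prop) : ℕ → Finset ℤ
  | 0 => S.white 0
  | m + 1 => if m < S.width then S.blackVerticals M m ∪ S.hole (m + 1) else ∅

lemma mem_blackVerticals :
    y ∈ S.blackVerticals M m ↔ y ∈ S.black m ∧ IsVertical M (m, y) := by
  classical
  rw [blackVerticals, mem_filter]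

lemma blackVerticals_subset : S.blackVerticals M m ⊆ S.black m :=
  fun _ h => (mem_blackVerticals.1 h).1

lemma configurations_succ (hm : m < S.width) :
    S.configurations M (m + 1) = S.blackVerticals M m ∪ S.hole (m + 1) := by
  rw [configurations, if_pos hm]

lemma configurations_succ_sdiff (hm : m < S.width) :
    S.configurations M (m + 1) \ S.hole (m + 1) = S.blackVerticals M m := by
  rw [configurations_succ hm]
  exact union_sdiff_cancel_right ((S.disjoint_hole m hm).mono_left blackVerticals_subset)

lemma configurations_eq_empty (hm : S.width < m) : S.configurations M m = ∅ := by
  obtain _ | m := m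
  · lia
  · rw [configurations, if_neg (by lia)]

lemma configurations_subset_white (hm : m < S.width) : S.configurations M m ⊆ S.white m := by
  obtain _ | m := m
  · exact subset_rfl
  · rw [configurations_succ (by lia), S.white_succ m hm]
    exact union_subset_union_left blackVerticals_subset

lemma mem_configurations (hM : IsPerfectMatching S.cells M) (hm : m < S.width)
    (hy : y ∈ S.white m) : y ∈ S.configurations M m ↔ IsVertical M (m, y) := by
  have hnot := hM.not_isVertical_iff_of_odd (c := (m, y)) ((mem_white_iff hm).1 hy).1
    (S.white_emod_two m y hy)
  obtain _ | m := m
  · refine iff_of_true hy (by_contra fun h => ?_)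
    have := fst_nonneg (hM.mem (hM.symm (hnot.1 h)))
    simp at this
  rw [configurations_succ (by lia), mem_union, mem_blackVerticals, ← not_iff_not, hnot]
  push_cast
  rw [add_sub_cancel_right]
  rw [S.white_succ m hm, mem_union] at hy
  by_cases hblack : y ∈ S.black m
  · have hhole := disjoint_left.1 (S.disjoint_hole m (by lia)) hblack
    have hleft := hM.not_isVertical_iff_of_even (c := (m, y))
      ((mem_black_iff (by lia)).1 hblack).1 (S.black_emod_two m y hblack)
    simp only [hblack, hhole, true_and, or_false, hleft]
    exact ⟨hM.symm, hM.symm⟩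
  · refine iff_of_false (not_not.2 (Or.inr (hy.resolve_left hblack))) fun h => hblack ?_
    have hpar := (hM.adj h).emod_two
    refine (mem_black_iff (by lia)).2 ⟨hM.mem (hM.symm h), ?_⟩
    have := S.white_emod_two (m + 1) y (by rw [S.white_succ m hm]; exact mem_union.2 hy)
    push_cast at this
    lia

lemma exists_isMove_blackVerticals (hM : IsPerfectMatching S.cells M) (hm : m < S.width) :
    ∃ f, IsMove f (S.blackVerticals M m) ∧
      (S.blackVerticals M m).image f = S.configurations M m ∧
      ∀ z ∈ S.blackVerticals M m, M (m, z) (m, f z) := by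
  have hvertical : ∀ z ∈ S.blackVerticals M m, ∃ y, M (m, z) (m, y) := fun z hz =>
    (mem_blackVerticals.1 hz).2
  choose! f hf using hvertical
  have hpar : ∀ z ∈ S.blackVerticals M m, (z - m) % 2 = 0 := fun z hz =>
    S.black_emod_two m z (mem_blackVerticals.1 hz).1
  refine ⟨f, ⟨fun z hz => ?_, fun z hz w hw hzw => ?_⟩, ?_, hf⟩
  · have := (hM.adj (hf z hz)).of_even (hpar z hz)
    simp only [Prod.ext_iff] at this
    lia
  · have hw := hM.symm (hf w hw)
    rw [← hzw] at hw
    exact congrArg Prod.snd (hM.unique (hM.symm (hf z hz)) hw)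
  · ext y
    rw [mem_image]
    constructor
    · rintro ⟨z, hz, rfl⟩
      have hz' := hM.symm (hf z hz)
      have := (hM.adj (hf z hz)).emod_two
      have := hpar z hz
      have hwhite := (mem_white_iff hm).2 ⟨hM.mem hz', by lia⟩
      exact (mem_configurations hM hm hwhite).2 ⟨z, hz'⟩
    · intro hy
      have hwhite := configurations_subset_white hm hy
      obtain ⟨z, hz⟩ := (mem_configurations hM hm hwhite).1 hy
      have := (hM.adj hz).emod_two
      have := S.white_emod_two m y hwhite
      have hz' := hM.symm hz
      have hzv := mem_blackVerticals.2 ⟨(mem_black_iff hm).2 ⟨hM.mem hz', by lia⟩, ⟨y, hz'⟩⟩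
      exact ⟨z, hzv, congrArg Prod.snd (hM.unique (hf z hzv) hz')⟩

lemma isSymm_configurations_width (hM : IsPerfectMatching S.cells M) (hR : S.IsRotInvariant M) :
    IsSymm (S.configurations M S.width) := by
  obtain hS | ⟨m, hm⟩ : S.width = 0 ∨ ∃ m, S.width = m + 1 := by
    cases S.width <;> simp
  · rw [hS]
    exact S.isSymm_white 0
  have hconf : S.configurations M S.width = S.blackVerticals M m := by
    rw [← configurations_succ_sdiff (by lia), ← hm, S.hole_width, sdiff_empty]
  rw [hconf]
  intro y hy
  obtain ⟨hblack, hv⟩ := mem_blackVerticals.1 hy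
  have hneg := S.isSymm_black m y hblack
  refine mem_blackVerticals.2 ⟨hneg, by_contra fun hnot => ?_⟩
  have hpar := S.black_emod_two m
  rw [hM.not_isVertical_iff_of_even ((mem_black_iff (by lia)).1 hneg).1 (hpar _ hneg)] at hnot
  have hrot := hM.symm (hR _ _ hnot)
  have hleft : S.rot ((m : ℤ) + 1, -y) = ((m : ℤ), y) := by
    ext <;> simp only [rot, neg_neg]
    lia
  have hright : S.rot ((m : ℤ), -y) = ((m : ℤ) + 1, y) := by
    ext <;> simp only [rot, neg_neg]
    lia
  rw [hleft, hright] at hrot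
  exact (hM.not_isVertical_iff_of_even (hM.mem hrot) (hpar _ hblack)).2 hrot hv

lemma isPathSystem_configurations (hM : IsPerfectMatching S.cells M) (hR : S.IsRotInvariant M) :
    S.IsPathSystem (S.configurations M) where
  zero := rfl
  subset m hm := by
    rw [configurations_succ hm]
    exact subset_union_right
  precedes m hm := by
    rw [configurations_succ_sdiff hm]
    obtain ⟨f, hf, himage, -⟩ := exists_isMove_blackVerticals hM hm
    exact ⟨f, hf, himage⟩
  eq_empty m hm := configurations_eq_empty hm
  subset_white m hm := configurations_subset_white hm
  sdiff_subset_black m hm := by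
    rw [configurations_succ_sdiff hm]
    exact blackVerticals_subset
  isSymm_last := isSymm_configurations_width hM hR

lemma configurations_partner {f : ℕ → ℤ → ℤ} {X : ℕ → Finset ℤ} (hX : S.IsPathSystem X) :
    S.configurations (fun c d => c ∈ S.cells ∧ S.partner f X c = d) = X := by
  funext m
  obtain _ | m := m
  · exact hX.zero.symm
  rcases lt_or_ge m S.width with hm | hm
  · rw [configurations_succ hm]
    suffices h : S.blackVerticals _ m = X (m + 1) \ S.hole (m + 1) by
      rw [h, sdiff_union_of_subset (hX.subset m hm)]
    ext z
    rw [mem_blackVerticals]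
    constructor
    · rintro ⟨hz, y, -, hzy⟩
      by_contra hzX
      rw [partner_black hm hz, if_neg hzX] at hzy
      simpa using congrArg Prod.fst hzy
    · intro hzX
      have hz := hX.sdiff_subset_black m hm hzX
      exact ⟨hz, f m z, (natCast_mem_cells hm).2 (Or.inl hz),
        by rw [partner_black hm hz, if_pos hzX]⟩
  · rw [configurations_eq_empty (by lia), hX.eq_empty _ (by lia)]

lemma apply_of_mem_black (hM : IsPerfectMatching S.cells M) (hM' : IsPerfectMatching S.cells M')
    (h : S.configurations M = S.configurations M') (hm : m < S.width) (hy : y ∈ S.black m)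
    {d : Cell} (hd : M (m, y) d) : M' (m, y) d := by
  have hv : S.blackVerticals M m = S.blackVerticals M' m := by
    rw [← configurations_succ_sdiff hm, h, configurations_succ_sdiff hm]
  by_cases hyv : y ∈ S.blackVerticals M m
  · obtain ⟨f, hf, himage, hMf⟩ := exists_isMove_blackVerticals hM hm
    obtain ⟨f', hf', himage', hMf'⟩ := exists_isMove_blackVerticals hM' hm
    rw [← hv] at hf' himage' hMf'
    have heq := hf.eqOn_of_image_eq hf' (himage.trans ((congrFun h m).trans himage'.symm)) hyv
    rw [hM.unique hd (hMf y hyv), heq]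
    exact hMf' y hyv
  · have hmem := ((mem_black_iff hm).1 hy).1
    have hpar := S.black_emod_two m y hy
    have hnot : ¬ IsVertical M (m, y) := fun hyM => hyv (mem_blackVerticals.2 ⟨hy, hyM⟩)
    have hnot' : ¬ IsVertical M' (m, y) := fun hyM =>
      hyv (hv ▸ mem_blackVerticals.2 ⟨hy, hyM⟩)
    rw [hM.unique hd ((hM.not_isVertical_iff_of_even hmem hpar).1 hnot)]
    exact (hM'.not_isVertical_iff_of_even hmem hpar).1 hnot'

lemma le_of_configurations_eq (hM : IsPerfectMatching S.cells M) (hR : S.IsRotInvariant M)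
    (hM' : IsPerfectMatching S.cells M') (hR' : S.IsRotInvariant M')
    (h : S.configurations M = S.configurations M') : M ≤ M' := by
  refine fun c d hcd => forall_mem_cells (p := fun c => ∀ d, M c d → M' c d) (fun c hc d hd => ?_)
    (fun m hm y hy d => apply_of_mem_black hM hM' h hm hy) (fun m hm y hy d hd => ?_) c
    (hM.mem hcd) d hcd
  · simpa using hR' _ _ (hc (S.rot d) (by simpa using hR _ _ hd))
  · have hd' := hM.symm hd
    have hpar := (hM.adj hd).emod_two
    have hwhite := S.white_emod_two m y hy
    have hd0 := fst_nonneg (hM.mem hd')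
    have hdm : d.1 ≤ m := by
      have := (hM.adj hd).of_odd hwhite
      simp only [Prod.ext_iff] at this
      lia
    obtain ⟨d₁, d₂⟩ := d
    lift d₁ to ℕ using hd0
    have hblack := (mem_black_iff (by lia)).2 ⟨hM.mem hd', by lia⟩
    exact hM'.symm (apply_of_mem_black hM hM' h (by lia) hblack hd')

lemma eq_of_configurations_eq (hM : IsPerfectMatching S.cells M) (hR : S.IsRotInvariant M)
    (hM' : IsPerfectMatching S.cells M') (hR' : S.IsRotInvariant M')
    (h : S.configurations M = S.configurations M') : M = M' :=
  le_antisymm (le_of_configurations_eq hM hR hM' hR' h)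
    (le_of_configurations_eq hM' hR' hM hR h.symm)

end Configurations

section Reflection

variable {M : Cell → Cell → Prop}

/-- The reflection in the horizontal symmetry axis, on cells. -/
def flip (c : Cell) : Cell := (c.1, -c.2)

@[simp]
lemma flip_flip (c : Cell) : flip (flip c) = c := by
  ext <;> simp [flip]

lemma flip_mem_cells {c : Cell} (h : c ∈ S.cells) : flip c ∈ S.cells := by
  have hleft : ∀ c ∈ S.leftCells, flip c ∈ S.leftCells := by
    rintro c ⟨m, hm, hc, h⟩
    exact ⟨m, hm, hc, h.imp (S.isSymm_black m _) (S.isSymm_white m _)⟩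
  exact h.imp (hleft c) (hleft (S.rot c))

lemma isPerfectMatching_flip (hM : IsPerfectMatching S.cells M) :
    IsPerfectMatching S.cells (fun c d => M (flip c) (flip d)) where
  adj h := by
    have := hM.adj h
    simp only [Cell.Adj, flip] at *
    lia
  symm h := hM.symm h
  mem h := by simpa using flip_mem_cells (hM.mem h)
  exists_partner hc := by
    obtain ⟨d, hd⟩ := hM.exists_partner (flip_mem_cells hc)
    exact ⟨flip d, by rwa [flip_flip]⟩
  unique {c d e} h h' := by rw [← flip_flip d, hM.unique h h', flip_flip]

lemma isMirrorInvariant_iff_flip (hR : S.IsRotInvariant M) :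
    S.IsMirrorInvariant M ↔ ∀ c d, M c d → M (flip c) (flip d) := by
  have hrot_mirror : ∀ c, S.rot (S.mirror c) = flip c := fun c => by
    ext <;> simp [rot, mirror, flip]
  have hrot_flip : ∀ c, S.rot (flip c) = S.mirror c := fun c => by
    ext <;> simp [rot, mirror, flip]
  constructor
  · intro h c d hcd
    simpa only [hrot_mirror] using hR _ _ (h c d hcd)
  · intro h c d hcd
    simpa only [hrot_flip] using hR _ _ (h c d hcd)

lemma mem_configurations_flip {m : ℕ} {y : ℤ} :
    y ∈ S.configurations (fun c d => M (flip c) (flip d)) m ↔ -y ∈ S.configurations M m := by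
  have hsymm : ∀ {Y : Finset ℤ}, IsSymm Y → (y ∈ Y ↔ -y ∈ Y) := fun hY =>
    ⟨hY y, fun h => by simpa using hY _ h⟩
  obtain _ | m := m
  · exact hsymm (S.isSymm_white 0)
  rcases lt_or_ge m S.width with hm | hm
  · have hv : IsVertical (fun c d => M (flip c) (flip d)) (m, y) ↔ IsVertical M (m, -y) :=
      ⟨fun ⟨z, hz⟩ => ⟨-z, hz⟩, fun ⟨z, hz⟩ => ⟨-z, by simpa [flip] using hz⟩⟩
    rw [configurations_succ hm, configurations_succ hm, mem_union, mem_union, mem_blackVerticals,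
      mem_blackVerticals, hv, hsymm (S.isSymm_black m), hsymm (S.isSymm_hole (m + 1))]
  · rw [configurations_eq_empty (by lia), configurations_eq_empty (by lia)]
    simp

lemma isMirrorInvariant_iff (hM : IsPerfectMatching S.cells M) (hR : S.IsRotInvariant M) :
    S.IsMirrorInvariant M ↔ ∀ m, IsSymm (S.configurations M m) := by
  rw [isMirrorInvariant_iff_flip hR]
  constructor
  · intro h m y hy
    have hflip : (fun c d => M (flip c) (flip d)) = M := by
      funext c d
      exact propext ⟨fun hcd => by simpa using h _ _ hcd, h c d⟩
    rw [← hflip] at hy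
    exact mem_configurations_flip.1 hy
  · intro h c d hcd
    suffices hflip : (fun c d => M (flip c) (flip d)) = M by
      rw [← hflip] at hcd
      exact hcd
    refine eq_of_configurations_eq (isPerfectMatching_flip hM) (fun c d h => hR _ _ h) hM hR ?_
    ext m y
    rw [mem_configurations_flip]
    exact ⟨fun hy => by simpa using h m _ hy, h m y⟩

end Reflection

lemma card_isPerfectMatching {P : (Cell → Cell → Prop) → Prop} {Q : Finset ℤ → Prop}
    (hPQ : ∀ M, IsPerfectMatching S.cells M → S.IsRotInvariant M →
      (P M ↔ ∀ m, Q (S.configurations M m))) :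
    Nat.card {M // IsPerfectMatching S.cells M ∧ S.IsRotInvariant M ∧ P M} =
      Nat.card {X // S.IsPathSystem X ∧ ∀ m, Q (X m)} := by
  refine Nat.card_congr (Equiv.ofBijective (fun M => ⟨S.configurations M,
    isPathSystem_configurations M.2.1 M.2.2.1, (hPQ M M.2.1 M.2.2.1).1 M.2.2.2⟩) ⟨?_, ?_⟩)
  · rintro ⟨M, hM, hR, hP⟩ ⟨M', hM', hR', hP'⟩ h
    exact Subtype.ext (eq_of_configurations_eq hM hR hM' hR' (congrArg Subtype.val h))
  · rintro ⟨X, hX, hQ⟩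
    choose! f hf using hX.precedes
    have hM := isPerfectMatching_partner (isPaired_of_mem_cells hX hf)
    have hconf := configurations_partner (f := f) hX
    exact ⟨⟨_, hM, isRotInvariant_partner, (hPQ _ hM isRotInvariant_partner).2 (by rwa [hconf])⟩,
      Subtype.ext hconf⟩

end HalfRegion

/-- The times at which a pair of particles is inserted, when the particles start from the empty
configuration at time `-2 * b` relative to the left side of the hexagon. -/
def insertionTimes (ks : Finset ℕ) (b : ℕ) : Finset ℕ :=
  Icc 1 b ∪ ks.image (b + ·)

/-- The cell `c` of the left half of the hexagon lies in the triangular hole given by some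
`k ∈ ks`, or in the central rhombus of side `2 * x - 1`. -/
def IsRemoved (ks : Finset ℕ) (a x : ℕ) (c : Cell) : Prop :=
  (∃ k ∈ ks, (c.1 = 2 * k - 2 ∧ c.2 = 0) ∨ (c.1 = 2 * k - 1 ∧ -1 ≤ c.2 ∧ c.2 ≤ 1)) ∨
    (c.2 + 2 * a ≤ c.1 + 2 * x ∧ -c.2 + 2 * a ≤ c.1 + 2 * x)

open Classical in
/-- The heights of the cells with parity `p` of column `m` of the holey hexagon. -/
def columnCells (ks : Finset ℕ) (a b x : ℕ) (p : ℤ) (m : ℕ) : Finset ℤ :=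
  {y ∈ Icc (-(2 * b + m : ℤ)) (2 * b + m) | (y - m) % 2 = p ∧ ¬ IsRemoved ks a x (m, y)}

section Columns

variable {ks : Finset ℕ} {a b x m : ℕ} {p y : ℤ}

lemma mem_columnCells : y ∈ columnCells ks a b x p m ↔
    (-(2 * b + m : ℤ) ≤ y ∧ y ≤ 2 * b + m) ∧ (y - m) % 2 = p ∧ ¬ IsRemoved ks a x (m, y) := by
  classical rw [columnCells, mem_filter, mem_Icc]

lemma mem_insertions_insertionTimes :
    y ∈ insertions {-1, 1} (insertionTimes ks b) (2 * b + (m + 1)) ↔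
      (∃ k ∈ ks, m + 1 = 2 * k) ∧ (y = -1 ∨ y = 1) := by
  rw [mem_insertions_neg_one_one]
  refine and_congr_left fun _ => ⟨?_, ?_⟩
  · rintro ⟨κ, hκ, hm⟩
    rw [insertionTimes, mem_union, mem_Icc, mem_image] at hκ
    obtain hκ | ⟨k, hk, rfl⟩ := hκ
    · lia
    · exact ⟨k, hk, by lia⟩
  · rintro ⟨k, hk, hm⟩
    exact ⟨b + k, mem_union_right _ (mem_image_of_mem _ hk), by lia⟩

lemma isSymm_insertions (K : Finset ℕ) (t : ℕ) : IsSymm (insertions {-1, 1} K t) := by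
  intro y
  simp only [mem_insertions_neg_one_one]
  exact And.imp_right fun h => by lia

lemma IsRemoved.neg {c : Cell} (h : IsRemoved ks a x c) : IsRemoved ks a x (c.1, -c.2) := by
  obtain ⟨k, hk, h⟩ | h := h
  · exact Or.inl ⟨k, hk, by dsimp only; lia⟩
  · exact Or.inr (by dsimp only; lia)

lemma isSymm_columnCells : IsSymm (columnCells ks a b x p m) := by
  intro y hy
  rw [mem_columnCells] at hy ⊢
  obtain ⟨hbound, hpar, hrem⟩ := hy
  exact ⟨by lia, by lia, fun h => hrem (by simpa using h.neg)⟩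

lemma disjoint_columnCells_insertions : Disjoint (columnCells ks a b x 0 m)
    (insertions {-1, 1} (insertionTimes ks b) (2 * b + (m + 1))) := by
  rw [disjoint_left]
  intro y hy hins
  obtain ⟨⟨k, hk, hm⟩, hy1⟩ := mem_insertions_insertionTimes.1 hins
  exact (mem_columnCells.1 hy).2.2 (Or.inl ⟨k, hk, Or.inr (by dsimp only; lia)⟩)

lemma columnCells_one_succ (hk : ∀ k ∈ ks, 0 < k ∧ k + x ≤ a) :
    columnCells ks a b x 1 (m + 1) = columnCells ks a b x 0 m ∪
      insertions {-1, 1} (insertionTimes ks b) (2 * b + (m + 1)) := by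
  ext y
  rw [mem_union, mem_columnCells, mem_columnCells, mem_insertions_insertionTimes]
  push_cast
  constructor
  · rintro ⟨hbound, hpar, hrem⟩
    by_cases hins : (∃ k ∈ ks, m + 1 = 2 * k) ∧ (y = -1 ∨ y = 1)
    · exact Or.inr hins
    refine Or.inl ⟨by lia, by lia, ?_⟩
    rintro (⟨k, hkks, ⟨hm, hy⟩ | ⟨hm, hy⟩⟩ | h)
    · exact hrem (Or.inl ⟨k, hkks, Or.inr (by dsimp only at *; lia)⟩)
    · exact hins ⟨⟨k, hkks, by dsimp only at *; lia⟩, by dsimp only at *; lia⟩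
    · exact hrem (Or.inr (by dsimp only at *; lia))
  · rintro (⟨hbound, hpar, hrem⟩ | ⟨⟨k, hkks, hm⟩, hy⟩)
    · refine ⟨by lia, by lia, ?_⟩
      rintro (⟨k, hkks, h⟩ | h)
      · exact hrem (Or.inl ⟨k, hkks, by dsimp only at *; lia⟩)
      · exact hrem (Or.inr (by dsimp only at *; lia))
    · have := hk k hkks
      refine ⟨by lia, by lia, ?_⟩
      rintro (⟨k', -, h⟩ | h) <;> dsimp only at h <;> lia

lemma columnCells_one_zero (hxa : x ≤ a) (hk : ∀ k ∈ ks, 0 < k ∧ k + x ≤ a) :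
    columnCells ks a b x 1 0 = block (2 * b) := by
  ext y
  rw [mem_columnCells, mem_block]
  push_cast
  constructor
  · rintro ⟨hbound, hpar, -⟩
    lia
  · rintro ⟨hbound, hpar, -⟩
    refine ⟨by lia, by lia, ?_⟩
    rintro (⟨k, hkks, h⟩ | h)
    · have := hk k hkks
      dsimp only at h
      lia
    · dsimp only at h
      lia

end Columns

/-- The left half of the hexagon with sides `2 * a - 1`, `2 * a - 1`, `2 * b`, with the triangular
holes given by `ks` and the central rhombus of side `2 * x - 1` removed. -/
def holeyHalfHexagon (ks : Finset ℕ) (a b x : ℕ) (ha : 0 < a)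
    (hk : ∀ k ∈ ks, 0 < k ∧ k + x ≤ a) : HalfRegion where
  width := 2 * a - 1
  black := columnCells ks a b x 0
  white := columnCells ks a b x 1
  hole m := insertions {-1, 1} (insertionTimes ks b) (2 * b + m)
  black_emod_two _ _ h := (mem_columnCells.1 h).2.1
  white_emod_two _ _ h := (mem_columnCells.1 h).2.1
  white_succ _ _ := columnCells_one_succ hk
  disjoint_hole _ _ := disjoint_columnCells_insertions
  hole_width := insertions_of_odd (by lia)
  isSymm_black _ := isSymm_columnCells
  isSymm_white _ := isSymm_columnCells
  isSymm_hole _ := isSymm_insertions _ _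

section PathSystems

variable {ks : Finset ℕ} {a b x : ℕ} {X : ℕ → Finset ℤ}

lemma IsHalfHexagonEvolution.zero_notMem {K : Finset ℕ} {n κ m : ℕ}
    (h : IsHalfHexagonEvolution K b n x X) (hm : m < n) (hκ : κ ∈ K)
    (hmκ : 2 * b + (m + 1) = 2 * κ) : 0 ∉ X m := by
  intro hzero
  obtain ⟨z, hz, hz0⟩ := (h.precedes m hm).exists_of_mem_left hzero
  exact (mem_sdiff.1 hz).2 (mem_insertions_neg_one_one.2 ⟨⟨κ, hκ, hmκ⟩, by lia⟩)

lemma IsHalfHexagonEvolution.not_isRemoved (hk : ∀ k ∈ ks, 0 < k ∧ k + x ≤ a)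
    (h : IsHalfHexagonEvolution (insertionTimes ks b) b (2 * a - 1) x X) {m : ℕ}
    (hm : m < 2 * a - 1) {y : ℤ} (hy : y ∈ X m) : ¬ IsRemoved ks a x (m, y) := by
  have hpar := (h.mem_Icc_and_emod_two hm.le y hy).2
  rintro (⟨k, hkks, hrem⟩ | hrem) <;> dsimp only at hrem
  · have := hk k hkks
    obtain rfl : y = 0 := by lia
    exact h.zero_notMem hm (mem_union_right _ (mem_image_of_mem _ hkks)) (by lia) hy
  · have hlt := h.lt_abs_add (i := 2 * a - 1 - m) (by lia) y hy
    have : |y| ≤ m + 2 * x - 2 * a - 1 := abs_le.2 (by lia)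
    lia

lemma IsHalfHexagonEvolution.not_isRemoved_pred (hx : 0 < x)
    (hk : ∀ k ∈ ks, 0 < k ∧ k + x ≤ a)
    (h : IsHalfHexagonEvolution (insertionTimes ks b) b (2 * a - 1) x X) {m : ℕ}
    (hm : m < 2 * a - 1) {y : ℤ} (hy : y ∈ X (m + 1))
    (hins : y ∉ insertions {-1, 1} (insertionTimes ks b) (2 * b + (m + 1))) :
    ¬ IsRemoved ks a x (m, y) := by
  have hpar := (h.mem_Icc_and_emod_two hm y hy).2
  rintro (⟨k, hkks, ⟨hmk, hy0⟩ | hrem⟩ | hrem)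
  · have := hk k hkks
    dsimp only at hmk hy0
    exact h.zero_notMem (κ := b + k) (by lia) (mem_union_right _ (mem_image_of_mem _ hkks))
      (by lia) (hy0 ▸ hy)
  · dsimp only at hrem
    exact hins (mem_insertions_insertionTimes.2 ⟨⟨k, hkks, by lia⟩, by lia⟩)
  · dsimp only at hrem
    have hlt := h.lt_abs_add (i := 2 * a - 1 - (m + 1)) (by lia) y hy
    have : |y| ≤ m + 2 * x - 2 * a := abs_le.2 (by lia)
    lia

lemma isPathSystem_holeyHalfHexagon_iff (ha : 0 < a) (hx : 0 < x) (hxa : x ≤ a)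
    (hk : ∀ k ∈ ks, 0 < k ∧ k + x ≤ a) :
    (holeyHalfHexagon ks a b x ha hk).IsPathSystem X ↔
      IsHalfHexagonEvolution (insertionTimes ks b) b (2 * a - 1) x X := by
  have hzero : columnCells ks a b x 1 0 = block (2 * b) := columnCells_one_zero hxa hk
  constructor
  · intro h
    refine ⟨⟨h.zero.trans hzero, h.subset, h.precedes, h.eq_empty⟩, h.isSymm_last, fun y hy => ?_⟩
    obtain ⟨n, hn⟩ : ∃ n, 2 * a - 1 = n + 1 := ⟨2 * a - 2, by lia⟩
    have hsub := h.sdiff_subset_black n (show n < 2 * a - 1 by lia)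
    have hhole := (holeyHalfHexagon ks a b x ha hk).hole_width
    change (holeyHalfHexagon ks a b x ha hk).hole (2 * a - 1) = ∅ at hhole
    rw [← hn, hhole, sdiff_empty] at hsub
    have hrem := (mem_columnCells.1 (hsub hy)).2.2
    by_contra hlt
    obtain ⟨h₁, h₂⟩ := abs_le.1 (not_lt.1 hlt)
    exact hrem (Or.inr (by dsimp only; lia))
  · intro h
    refine ⟨⟨h.zero.trans hzero.symm, h.subset, h.precedes, h.eq_empty⟩, ?_, ?_, h.isSymm_last⟩
    · intro m hm y hy
      obtain ⟨hbound, hpar⟩ := h.mem_Icc_and_emod_two (le_of_lt hm) y hy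
      exact mem_columnCells.2 ⟨mem_Icc.1 hbound, hpar, h.not_isRemoved hk hm hy⟩
    · intro m hm y hy
      obtain ⟨hy, hins⟩ := mem_sdiff.1 hy
      obtain ⟨hbound, hpar⟩ := h.mem_Icc_and_emod_two (Nat.succ_le_of_lt hm) y hy
      rw [mem_Icc] at hbound
      exact mem_columnCells.2 ⟨by lia, by lia, h.not_isRemoved_pred hx hk hm hy hins⟩

end PathSystems

theorem card_isPerfectMatching_holeyHalfHexagon (ks : Finset ℕ) (a b x : ℕ) (ha : 0 < a)
    (hx : 0 < x) (hxa : x ≤ a) (hk : ∀ k ∈ ks, 0 < k ∧ k + x ≤ a) :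
    let S := holeyHalfHexagon ks a b x ha hk
    Nat.card {M // IsPerfectMatching S.cells M ∧ S.IsRotInvariant M} =
      Nat.card {M // IsPerfectMatching S.cells M ∧ S.IsRotInvariant M ∧
        S.IsMirrorInvariant M} ^ 2 := by
  intro S
  have hrot : Nat.card {M // IsPerfectMatching S.cells M ∧ S.IsRotInvariant M} =
      Nat.card {X // S.IsPathSystem X ∧ ∀ _ : ℕ, True} := by
    rw [← HalfRegion.card_isPerfectMatching (P := fun _ => True) (Q := fun _ => True) (by simp)]
    simp only [and_true]
  rw [hrot, HalfRegion.card_isPerfectMatching fun _ => HalfRegion.isMirrorInvariant_iff]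
  simp only [S, isPathSystem_holeyHalfHexagon_iff ha hx hxa hk]
  refine card_isHalfHexagonEvolution_eq_sq ?_ subset_union_left ha hx
  simp only [mem_union, mem_Icc, mem_image, not_or, not_exists, not_and]
  exact ⟨by lia, fun k hkks => by have := hk k hkks; lia⟩

/-! ### Lattice triangles and lozenges in the plane -/

/-- The lattice coordinates of a point of the plane relative to the point `(0, b)` of the left side
of the hexagon: the lattice lines are the lines on which one of them is an integer. The last
coordinate is the sum of the other two. -/
def latticeCoord (b : ℕ) (p : Pt) : Fin 3 → ℝ :=
  ![2 * p.1 / s3, p.2 - b - p.1 / s3, p.2 - b + p.1 / s3]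

/-- The point of the plane with first two lattice coordinates `X` and `U`. -/
def latticePoint (b : ℕ) (X U : ℝ) : Pt := (X * (s3 / 2), U + X / 2 + b)

/-- The convex polygon cut out by bounds on the three lattice coordinates. -/
def latticeHexagon (b : ℕ) (l h : Fin 3 → ℤ) : Set Pt :=
  {p | ∀ i, (l i : ℝ) ≤ latticeCoord b p i ∧ latticeCoord b p i ≤ h i}

/-- The bounds on the lattice coordinates of the unit triangle which corresponds to the cell `c`:
the `i`-th coordinate lies between `c.coord i` and `c.coord i + 1`. -/
def Cell.coord (c : Cell) : Fin 3 → ℤ := ![c.1, (c.2 - c.1 - 1) / 2, (c.2 + c.1) / 2]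

/-- The closed unit triangle which corresponds to the cell `c`. -/
def triangle (b : ℕ) (c : Cell) : Set Pt := latticeHexagon b (Cell.coord c) (Cell.coord c + 1)

/-- The interior of `triangle b c`. -/
def openTriangle (b : ℕ) (c : Cell) : Set Pt :=
  {p | ∀ i, (Cell.coord c i : ℝ) < latticeCoord b p i ∧ latticeCoord b p i < Cell.coord c i + 1}

section Coordinates

variable {b : ℕ} {p q : Pt} {X U X' U' α β : ℝ} {l h : Fin 3 → ℤ} {c d : Cell}

lemma s3_pos : 0 < s3 := Real.sqrt_pos.2 (by norm_num)

lemma latticeCoord_two : latticeCoord b p 2 = latticeCoord b p 0 + latticeCoord b p 1 := by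
  simp only [latticeCoord, Matrix.cons_val]
  ring

lemma latticeCoord_latticePoint : latticeCoord b (latticePoint b X U) = ![X, U, X + U] := by
  have := s3_pos
  funext i
  fin_cases i <;>
    simp only [latticeCoord, latticePoint, Fin.mk_one, Fin.zero_eta, Fin.reduceFinMk,
      Matrix.cons_val] <;>
    field_simp <;> ring

lemma latticePoint_latticeCoord :
    latticePoint b (latticeCoord b p 0) (latticeCoord b p 1) = p := by
  have := s3_pos
  ext <;> simp only [latticeCoord, latticePoint, Matrix.cons_val] <;> field_simp
  ring

lemma smul_latticePoint_add_smul (h : α + β = 1) :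
    α • latticePoint b X U + β • latticePoint b X' U' =
      latticePoint b (α * X + β * X') (α * U + β * U') := by
  obtain rfl : β = 1 - α := by linarith
  ext <;> simp only [latticePoint, Prod.smul_mk, Prod.mk_add_mk, smul_eq_mul] <;> ring

lemma latticeCoord_smul_add_smul (h : α + β = 1) :
    latticeCoord b (α • p + β • q) = α • latticeCoord b p + β • latticeCoord b q := by
  obtain rfl : β = 1 - α := by linarith
  funext i
  fin_cases i <;> simp [latticeCoord] <;> ring

lemma continuous_latticeCoord : Continuous (latticeCoord b) := by
  refine continuous_pi fun i => ?_
  fin_cases i <;>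
    simp only [latticeCoord, Fin.mk_one, Fin.zero_eta, Fin.reduceFinMk, Matrix.cons_val] <;>
    fun_prop

lemma convex_latticeHexagon : Convex ℝ (latticeHexagon b l h) := by
  intro p hp q hq α β hα hβ hαβ i
  rw [latticeCoord_smul_add_smul hαβ]
  exact convex_Icc (l i : ℝ) (h i) (hp i) (hq i) hα hβ hαβ

lemma isOpen_openTriangle : IsOpen (openTriangle b c) := by
  simp only [openTriangle, Set.ofPred_forall]
  refine isOpen_iInter_of_finite fun i => ?_
  have hi : Continuous fun p => latticeCoord b p i :=
    (continuous_apply i).comp continuous_latticeCoord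
  exact (isOpen_lt continuous_const hi).inter (isOpen_lt hi continuous_const)

lemma mem_latticeHexagon_iff_of_mem_openTriangle (hp : p ∈ openTriangle b c) :
    p ∈ latticeHexagon b l h ↔ l ≤ Cell.coord c ∧ Cell.coord c + 1 ≤ h := by
  rw [Pi.le_def, Pi.le_def, ← forall_and]
  refine forall_congr' fun i => ?_
  obtain ⟨h₁, h₂⟩ := hp i
  have hfloor : ⌊latticeCoord b p i⌋ = Cell.coord c i := Int.floor_eq_iff.2 ⟨h₁.le, h₂⟩
  have hceil : ⌈latticeCoord b p i⌉ = Cell.coord c i + 1 :=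
    Int.ceil_eq_iff.2 ⟨by push_cast; linarith, by push_cast; linarith⟩
  rw [← Int.le_floor, ← Int.ceil_le, hfloor, hceil, Pi.add_apply, Pi.one_apply]

lemma openTriangle_subset_triangle : openTriangle b c ⊆ triangle b c := fun _ hp =>
  (mem_latticeHexagon_iff_of_mem_openTriangle hp).2 ⟨le_rfl, le_rfl⟩

lemma Cell.coord_injective : Function.Injective Cell.coord := by
  rintro ⟨m, y⟩ ⟨m', y'⟩ h
  have h₀ := congrFun h 0
  have h₁ := congrFun h 1
  have h₂ := congrFun h 2
  simp only [Cell.coord, Matrix.cons_val] at h₀ h₁ h₂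
  rw [Prod.mk.injEq]
  lia

lemma mem_triangle_iff_of_mem_openTriangle (hp : p ∈ openTriangle b c) :
    p ∈ triangle b d ↔ c = d := by
  rw [triangle, mem_latticeHexagon_iff_of_mem_openTriangle hp, add_le_add_iff_right,
    and_comm, ← le_antisymm_iff, Cell.coord_injective.eq_iff]

lemma mem_interior_latticeHexagon_iff_of_mem_openTriangle (hp : p ∈ openTriangle b c) :
    p ∈ interior (latticeHexagon b l h) ↔ l ≤ Cell.coord c ∧ Cell.coord c + 1 ≤ h := by
  rw [← mem_latticeHexagon_iff_of_mem_openTriangle hp]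
  refine ⟨fun h => interior_subset h, fun h => mem_interior.2 ⟨_, fun q hq => ?_,
    isOpen_openTriangle, hp⟩⟩
  rw [mem_latticeHexagon_iff_of_mem_openTriangle hp] at h
  exact (mem_latticeHexagon_iff_of_mem_openTriangle hq).2 h

end Coordinates

section Density

variable {b : ℕ} {p : Pt}

lemma Cell.coord_even (m i : ℤ) : Cell.coord (m, 2 * i + m) = ![m, i - 1, i + m] := by
  funext j
  fin_cases j <;>
    simp only [Cell.coord, Fin.mk_one, Fin.zero_eta, Fin.reduceFinMk, Matrix.cons_val] <;> lia

lemma Cell.coord_odd (m i : ℤ) : Cell.coord (m, 2 * i + m + 1) = ![m, i, i + m] := by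
  funext j
  fin_cases j <;>
    simp only [Cell.coord, Fin.mk_one, Fin.zero_eta, Fin.reduceFinMk, Matrix.cons_val] <;> lia

lemma Cell.exists_eq_even_or_odd (c : Cell) :
    ∃ m i : ℤ, c = ((m : ℤ), 2 * i + m) ∨ c = ((m : ℤ), 2 * i + m + 1) :=
  ⟨c.1, (c.2 - c.1) / 2, by rw [Prod.ext_iff, Prod.ext_iff]; lia⟩

lemma openTriangle_nonempty (b : ℕ) (c : Cell) : (openTriangle b c).Nonempty := by
  obtain ⟨m, i, rfl | rfl⟩ := c.exists_eq_even_or_odd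
  · refine ⟨latticePoint b (m + 2 / 3) (i - 1 / 3), fun j => ?_⟩
    rw [latticeCoord_latticePoint, Cell.coord_even]
    fin_cases j <;> constructor <;> simp <;> linarith
  · refine ⟨latticePoint b (m + 1 / 3) (i + 1 / 3), fun j => ?_⟩
    rw [latticeCoord_latticePoint, Cell.coord_odd]
    fin_cases j <;> constructor <;> simp <;> linarith

lemma exists_mem_openTriangle (h : ∀ i, ∀ n : ℤ, (n : ℝ) ≠ latticeCoord b p i) :
    ∃ c, p ∈ openTriangle b c := by
  have hlt (i : Fin 3) : (⌊latticeCoord b p i⌋ : ℝ) < latticeCoord b p i :=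
    lt_of_le_of_ne (Int.floor_le _) (h i _)
  have hlt' (i : Fin 3) : latticeCoord b p i < ⌊latticeCoord b p i⌋ + 1 := Int.lt_floor_add_one _
  set f : Fin 3 → ℤ := fun i => ⌊latticeCoord b p i⌋
  have hf₁ : f 0 + f 1 < f 2 + 1 := by
    exact_mod_cast (by linarith [hlt 0, hlt 1, hlt' 2, latticeCoord_two (b := b) (p := p)] :
      (f 0 + f 1 : ℝ) < f 2 + 1)
  have hf₂ : f 2 < f 0 + f 1 + 2 := by
    exact_mod_cast (by linarith [hlt' 0, hlt' 1, hlt 2, latticeCoord_two (b := b) (p := p)] :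
      (f 2 : ℝ) < f 0 + f 1 + 2)
  have hcoord : Cell.coord (f 0, f 1 + f 2 + 1) = f := by
    funext i
    fin_cases i <;>
      simp only [Cell.coord, Fin.mk_one, Fin.zero_eta, Fin.reduceFinMk, Matrix.cons_val] <;> lia
  exact ⟨(f 0, f 1 + f 2 + 1), fun i => by rw [hcoord]; exact ⟨hlt i, hlt' i⟩⟩

lemma exists_mem_openTriangle_of_isOpen {O : Set Pt} (hO : IsOpen O) (hne : O.Nonempty) :
    ∃ p ∈ O, ∃ c, p ∈ openTriangle b c := by
  obtain ⟨p, hp⟩ := hne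
  let q (t : ℝ) : Pt := latticePoint b (latticeCoord b p 0 + t) (latticeCoord b p 1 + t)
  let v : Fin 3 → ℝ := ![1, 1, 2]
  have hq_coord (t : ℝ) (i : Fin 3) : latticeCoord b (q t) i = latticeCoord b p i + v i * t := by
    simp only [q, latticeCoord_latticePoint]
    fin_cases i <;> simp [v, latticeCoord_two]
    ring
  have hq : Continuous q := by
    simp only [q, latticePoint]
    fun_prop
  have hcount : (⋃ i, Set.range fun n : ℤ => (n - latticeCoord b p i) / v i).Countable :=
    Set.countable_iUnion fun i => Set.countable_range _
  obtain ⟨t, ht, htv⟩ := (hcount.dense_compl ℝ).inter_open_nonempty (q ⁻¹' O) (hO.preimage hq)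
    ⟨0, by simpa [q, latticePoint_latticeCoord] using hp⟩
  refine ⟨q t, ht, exists_mem_openTriangle fun i n hn => htv (Set.mem_iUnion.2 ⟨i, n, ?_⟩)⟩
  have hv : v i ≠ 0 := by fin_cases i <;> simp [v]
  rw [hq_coord] at hn
  field_simp
  linarith

end Density

section Hull

variable {b : ℕ} {S : Set Pt} {l h : Fin 3 → ℤ}

/-- The corners of `latticeHexagon b l h`, if all six bounds are attained. -/
def hexagonVertices (b : ℕ) (l h : Fin 3 → ℤ) : Set Pt :=
  {latticePoint b (l 0) (l 2 - l 0), latticePoint b (l 0) (h 1),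
    latticePoint b (h 2 - h 1) (h 1), latticePoint b (h 0) (h 2 - h 0),
    latticePoint b (h 0) (l 1), latticePoint b (l 2 - l 1) (l 1)}

lemma latticePoint_mem_of_convex (hS : Convex ℝ S) (x u α β : ℝ) {r s t : ℝ}
    (hr : latticePoint b (x + α * r) (u + β * r) ∈ S)
    (ht : latticePoint b (x + α * t) (u + β * t) ∈ S) (hrs : r ≤ s) (hst : s ≤ t) :
    latticePoint b (x + α * s) (u + β * s) ∈ S := by
  have hconvex : Convex ℝ {t : ℝ | latticePoint b (x + α * t) (u + β * t) ∈ S} := by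
    intro r hr t ht v w hv hw hvw
    have hmem := hS hr ht hv hw hvw
    rw [smul_latticePoint_add_smul hvw] at hmem
    obtain rfl : w = 1 - v := by linarith
    rw [Set.mem_ofPred_eq]
    convert hmem using 2 <;> simp only [smul_eq_mul] <;> ring
  exact hconvex.ordConnected.out hr ht ⟨hrs, hst⟩

/-- Each point of the hexagon lies on a vertical segment between two boundary points. -/
lemma latticeHexagon_subset_of_convex (hS : Convex ℝ S) (hV : hexagonVertices b l h ⊆ S) :
    latticeHexagon b l h ⊆ S := by
  intro p hp
  have hvert (X : ℝ) {U₁ U U₂ : ℝ} (h₁ : latticePoint b X U₁ ∈ S) (h₂ : latticePoint b X U₂ ∈ S) :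
      U₁ ≤ U → U ≤ U₂ → latticePoint b X U ∈ S := by
    simpa using latticePoint_mem_of_convex (s := U) hS X 0 0 1 (by simpa) (by simpa)
  have hrise (U : ℝ) {X₁ X X₂ : ℝ} (h₁ : latticePoint b X₁ U ∈ S) (h₂ : latticePoint b X₂ U ∈ S) :
      X₁ ≤ X → X ≤ X₂ → latticePoint b X U ∈ S := by
    simpa using latticePoint_mem_of_convex (s := X) hS 0 U 1 0 (by simpa) (by simpa)
  have hfall (V : ℝ) {X₁ X X₂ : ℝ} (h₁ : latticePoint b X₁ (V - X₁) ∈ S)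
      (h₂ : latticePoint b X₂ (V - X₂) ∈ S) :
      X₁ ≤ X → X ≤ X₂ → latticePoint b X (V - X) ∈ S := by
    simpa [← sub_eq_add_neg] using latticePoint_mem_of_convex (s := X) hS 0 V 1 (-1)
      (by simpa [← sub_eq_add_neg]) (by simpa [← sub_eq_add_neg])
  simp only [hexagonVertices, Set.insert_subset_iff, Set.singleton_subset_iff] at hV
  obtain ⟨h₁, h₂, h₃, h₄, h₅, h₆⟩ := hV
  obtain ⟨hX, hX'⟩ := hp 0
  obtain ⟨hU, hU'⟩ := hp 1
  obtain ⟨hV, hV'⟩ := hp 2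
  rw [latticeCoord_two] at hV hV'
  rw [← latticePoint_latticeCoord (b := b) (p := p)]
  generalize latticeCoord b p 0 = X at *
  generalize latticeCoord b p 1 = U at *
  obtain ⟨U₁, hU₁, hmem₁⟩ : ∃ U₁ ≤ U, latticePoint b X U₁ ∈ S := by
    rcases le_total X (l 2 - l 1) with hle | hle
    · exact ⟨l 2 - X, by linarith, hfall _ h₁ (by simpa using h₆) hX hle⟩
    · exact ⟨l 1, hU, hrise _ h₆ h₅ hle hX'⟩
  obtain ⟨U₂, hU₂, hmem₂⟩ : ∃ U₂ ≥ U, latticePoint b X U₂ ∈ S := by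
    rcases le_total X (h 2 - h 1) with hle | hle
    · exact ⟨h 1, hU', hrise _ h₂ h₃ hX hle⟩
    · exact ⟨h 2 - X, by linarith, hfall _ (by simpa using h₃) h₄ hle hX'⟩
  exact hvert X hmem₁ hmem₂ hU₁ hU₂

lemma convexHull_eq_latticeHexagon (hV : hexagonVertices b l h ⊆ S)
    (hS : S ⊆ latticeHexagon b l h) : convexHull ℝ S = latticeHexagon b l h :=
  (convexHull_min hS convex_latticeHexagon).antisymm <|
    latticeHexagon_subset_of_convex (convex_convexHull ℝ S) (hV.trans (subset_convexHull ℝ S))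

lemma mem_latticeHexagon_iff {p : Pt} : p ∈ latticeHexagon b l h ↔
    ((l 0 : ℝ) ≤ latticeCoord b p 0 ∧ latticeCoord b p 0 ≤ h 0) ∧
      ((l 1 : ℝ) ≤ latticeCoord b p 1 ∧ latticeCoord b p 1 ≤ h 1) ∧
      (l 2 : ℝ) ≤ latticeCoord b p 2 ∧ latticeCoord b p 2 ≤ h 2 := by
  simp [latticeHexagon, Fin.forall_fin_succ]

end Hull

section Regions

variable (A b k : ℕ)

lemma hexagon_eq_latticeHexagon :
    hexagon A b = latticeHexagon b ![0, -A - b, -b] ![2 * A, b, A + b] := by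
  have := s3_pos
  have := mul_nonneg s3_pos.le (Nat.cast_nonneg (α := ℝ) A)
  have := mul_nonneg s3_pos.le (Nat.cast_nonneg (α := ℝ) b)
  refine convexHull_eq_latticeHexagon ?_ ?_ <;>
    simp only [hexagonVertices, latticePoint, Set.insert_subset_iff, Set.singleton_subset_iff,
      Set.mem_insert_iff, Set.mem_singleton_iff, Prod.mk.injEq, mem_latticeHexagon_iff,
      latticeCoord, Matrix.cons_val] <;>
    push_cast
  · grind
  · field_simp
    have := Nat.cast_nonneg (α := ℝ) A
    have := Nat.cast_nonneg (α := ℝ) b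
    grind (splits := 50)

lemma leftHole_eq_latticeHexagon :
    leftHole b k = latticeHexagon b ![2 * k - 2, -k - 1, k - 1] ![2 * k, 1 - k, k + 1] := by
  have := s3_pos
  refine convexHull_eq_latticeHexagon ?_ ?_ <;>
    simp only [hexagonVertices, latticePoint, Set.insert_subset_iff, Set.singleton_subset_iff,
      Set.mem_insert_iff, Set.mem_singleton_iff, Prod.mk.injEq, mem_latticeHexagon_iff,
      latticeCoord, Matrix.cons_val] <;>
    push_cast
  · grind
  · field_simp
    grind

lemma rightHole_eq_latticeHexagon :
    rightHole A b k = latticeHexagon b ![2 * (A - k), -(A - k) - 1, (A - k) - 1]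
      ![2 * (A - k) + 2, 1 - (A - k), (A - k) + 1] := by
  have := s3_pos
  refine convexHull_eq_latticeHexagon ?_ ?_ <;>
    simp only [hexagonVertices, latticePoint, Set.insert_subset_iff, Set.singleton_subset_iff,
      Set.mem_insert_iff, Set.mem_singleton_iff, Prod.mk.injEq, mem_latticeHexagon_iff,
      latticeCoord, Matrix.cons_val] <;>
    push_cast
  · grind
  · field_simp
    grind

lemma centralRhombus_eq_latticeHexagon (c t : ℕ) : centralRhombus (2 * c + t) b t =
    latticeHexagon b ![2 * c, -(c + t), c] ![2 * (c + t), -c, c + t] := by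
  have := s3_pos
  refine convexHull_eq_latticeHexagon ?_ ?_ <;>
    simp only [hexagonVertices, latticePoint, Set.insert_subset_iff, Set.singleton_subset_iff,
      Set.mem_insert_iff, Set.mem_singleton_iff, Prod.mk.injEq, mem_latticeHexagon_iff,
      latticeCoord, Matrix.cons_val] <;>
    push_cast
  · grind
  · field_simp
    have := Nat.cast_nonneg (α := ℝ) t
    grind

end Regions

section Lozenges

variable {b : ℕ} {p q u v : Pt} {m i : ℤ} {j k : Fin 3} {c d : Cell} {L : Set Pt}

/-- The lozenge with one corner `p` and the two sides `u`, `v` at `p`. -/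
def parallelogram (p u v : Pt) : Set Pt := convexHull ℝ {p, p + u, p + v, p + u + v}

/-- Representatives of the unit vectors in the lattice directions up to sign. -/
def unitVec : Fin 3 → Pt := ![(0, 1), (s3 / 2, 1 / 2), (s3 / 2, -(1 / 2))]

/-- The lozenge, for adjacent cells, which is the union of the triangles of `c` and `d`. -/
def lozenge (b : ℕ) (c d : Cell) : Set Pt := triangle b c ∪ triangle b d

lemma lozenge_comm (b : ℕ) (c d : Cell) : lozenge b c d = lozenge b d c := Set.union_comm _ _

lemma parallelogram_comm (p u v : Pt) : parallelogram p u v = parallelogram p v u := by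
  rw [parallelogram, parallelogram, Set.insert_comm (p + u), add_right_comm]

lemma parallelogram_neg_left (p u v : Pt) : parallelogram p (-u) v = parallelogram (p - u) u v := by
  rw [parallelogram, parallelogram, ← sub_eq_add_neg, sub_add_cancel, Set.insert_comm p,
    Set.pair_comm (p + v), sub_add_eq_add_sub]

lemma mem_unitVecs_iff : u ∈ unitVecs ↔ ∃ j, u = unitVec j ∨ u = -unitVec j := by
  simp [unitVecs, unitVec, Fin.exists_fin_succ, or_assoc]

lemma unitVec_injective : Function.Injective unitVec := by
  have := s3_pos
  intro j k
  fin_cases j <;> fin_cases k <;> simp [unitVec] <;> grind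

lemma unitVec_ne_neg (j k : Fin 3) : unitVec j ≠ -unitVec k := by
  have := s3_pos
  fin_cases j <;> fin_cases k <;> simp [unitVec] <;> grind

lemma mem_triLattice_iff (b : ℕ) : p ∈ triLattice ↔ ∃ m i : ℤ, p = latticePoint b m i := by
  refine exists_congr fun m => ⟨fun ⟨n, hn⟩ => ⟨n - b, ?_⟩, fun ⟨i, hi⟩ => ⟨i + b, ?_⟩⟩
  · rw [hn, latticePoint]
    push_cast
    ring_nf
  · rw [hi, latticePoint]
    push_cast
    ring_nf

lemma latticePoint_add_unitVec (X U : ℝ) (j : Fin 3) : latticePoint b X U + unitVec j =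
    latticePoint b (X + (![0, 1, 1] j : ℤ)) (U + (![1, 0, -1] j : ℤ)) := by
  fin_cases j <;> ext <;> simp [latticePoint, unitVec] <;> ring

lemma sub_unitVec_mem_triLattice (hp : p ∈ triLattice) (j : Fin 3) :
    p - unitVec j ∈ triLattice := by
  obtain ⟨m, i, rfl⟩ := (mem_triLattice_iff 0).1 hp
  refine (mem_triLattice_iff 0).2 ⟨m - (![0, 1, 1] j : ℤ), i - (![1, 0, -1] j : ℤ), ?_⟩
  rw [sub_eq_iff_eq_add, latticePoint_add_unitVec]
  push_cast
  ring_nf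

lemma exists_parallelogram_eq (hp : p ∈ triLattice) (hu : u ∈ unitVecs) :
    ∃ q ∈ triLattice, ∃ j, (u = unitVec j ∨ u = -unitVec j) ∧
      ∀ v, parallelogram p u v = parallelogram q (unitVec j) v := by
  obtain ⟨j, rfl | rfl⟩ := mem_unitVecs_iff.1 hu
  · exact ⟨p, hp, j, .inl rfl, fun v => rfl⟩
  · exact ⟨_, sub_unitVec_mem_triLattice hp j, j, .inr rfl, parallelogram_neg_left p _⟩

lemma isLozenge_iff_parallelogram (b : ℕ) : IsLozenge L ↔ ∃ m i : ℤ, ∃ j k, j < k ∧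
    L = parallelogram (latticePoint b m i) (unitVec j) (unitVec k) := by
  refine ⟨?_, ?_⟩
  · rintro ⟨p, u, v, hp, hu, hv, hne, hne', rfl⟩
    obtain ⟨q, hq, j, huj, hpq⟩ := exists_parallelogram_eq hp hu
    obtain ⟨r, hr, k, hvk, hqr⟩ := exists_parallelogram_eq hq hv
    obtain ⟨m, i, rfl⟩ := (mem_triLattice_iff b).1 hr
    have heq : parallelogram p u v =
        parallelogram (latticePoint b m i) (unitVec k) (unitVec j) := by
      rw [hpq, parallelogram_comm, hqr]
    have hjk : j ≠ k := by
      rintro rfl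
      rcases huj with rfl | rfl <;> rcases hvk with rfl | rfl <;> simp at hne hne'
    rcases hjk.lt_or_gt with hlt | hlt
    · exact ⟨m, i, j, k, hlt, heq.trans (parallelogram_comm ..)⟩
    · exact ⟨m, i, k, j, hlt, heq⟩
  · rintro ⟨m, i, j, k, hjk, rfl⟩
    exact ⟨_, _, _, (mem_triLattice_iff b).2 ⟨m, i, rfl⟩, mem_unitVecs_iff.2 ⟨j, .inl rfl⟩,
      mem_unitVecs_iff.2 ⟨k, .inl rfl⟩, unitVec_injective.ne hjk.ne, unitVec_ne_neg j k, rfl⟩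

lemma mem_triangle_even : p ∈ triangle b (m, 2 * i + m) ↔
    ((m : ℝ) ≤ latticeCoord b p 0 ∧ latticeCoord b p 0 ≤ m + 1) ∧
      ((i : ℝ) - 1 ≤ latticeCoord b p 1 ∧ latticeCoord b p 1 ≤ i) ∧
      (i : ℝ) + m ≤ latticeCoord b p 2 ∧ latticeCoord b p 2 ≤ i + m + 1 := by
  simp only [triangle, mem_latticeHexagon_iff, Cell.coord_even, Pi.add_apply, Pi.one_apply,
    Matrix.cons_val]
  push_cast
  rw [sub_add_cancel]

lemma mem_triangle_odd : p ∈ triangle b (m, 2 * i + m + 1) ↔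
    ((m : ℝ) ≤ latticeCoord b p 0 ∧ latticeCoord b p 0 ≤ m + 1) ∧
      ((i : ℝ) ≤ latticeCoord b p 1 ∧ latticeCoord b p 1 ≤ i + 1) ∧
      (i : ℝ) + m ≤ latticeCoord b p 2 ∧ latticeCoord b p 2 ≤ i + m + 1 := by
  simp only [triangle, mem_latticeHexagon_iff, Cell.coord_odd, Pi.add_apply, Pi.one_apply,
    Matrix.cons_val]
  push_cast
  rfl

lemma latticePoint_inj {X U X' U' : ℝ} :
    latticePoint b X U = latticePoint b X' U' ↔ X = X' ∧ U = U' := by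
  refine ⟨fun h => ?_, fun ⟨hX, hU⟩ => by rw [hX, hU]⟩
  have hcoord := congrArg (latticeCoord b) h
  simp only [latticeCoord_latticePoint] at hcoord
  exact ⟨congrFun hcoord 0, congrFun hcoord 1⟩

lemma parallelogram_unitVec_zero_one (b : ℕ) (m i : ℤ) :
    parallelogram (latticePoint b m i) (unitVec 0) (unitVec 1) =
      lozenge b (m, 2 * i + m + 1) (m, 2 * (i + 1) + m) := by
  have hhull : parallelogram (latticePoint b m i) (unitVec 0) (unitVec 1) =
      latticeHexagon b ![m, i, i + m] ![m + 1, i + 1, i + m + 2] := by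
    simp only [parallelogram, latticePoint_add_unitVec]
    refine convexHull_eq_latticeHexagon ?_ ?_
    · simp [hexagonVertices, Set.insert_subset_iff, latticePoint_inj]
      grind
    · simp [Set.insert_subset_iff, mem_latticeHexagon_iff, latticeCoord_latticePoint]
      grind
  ext p
  rw [hhull, lozenge, Set.mem_union, mem_triangle_odd, mem_triangle_even, mem_latticeHexagon_iff]
  simp only [Matrix.cons_val]
  push_cast
  have := latticeCoord_two (b := b) (p := p)
  grind

lemma parallelogram_unitVec_zero_two (b : ℕ) (m i : ℤ) :
    parallelogram (latticePoint b m i) (unitVec 0) (unitVec 2) =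
      lozenge b (m, 2 * i + m) (m, 2 * i + m + 1) := by
  have hhull : parallelogram (latticePoint b m i) (unitVec 0) (unitVec 2) =
      latticeHexagon b ![m, i - 1, i + m] ![m + 1, i + 1, i + m + 1] := by
    simp only [parallelogram, latticePoint_add_unitVec]
    refine convexHull_eq_latticeHexagon ?_ ?_
    · simp [hexagonVertices, Set.insert_subset_iff, latticePoint_inj]
      grind
    · simp [Set.insert_subset_iff, mem_latticeHexagon_iff, latticeCoord_latticePoint]
      grind
  ext p
  rw [hhull, lozenge, Set.mem_union, mem_triangle_odd, mem_triangle_even, mem_latticeHexagon_iff]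
  simp only [Matrix.cons_val]
  push_cast
  have := latticeCoord_two (b := b) (p := p)
  grind

lemma parallelogram_unitVec_one_two (b : ℕ) (m i : ℤ) :
    parallelogram (latticePoint b m i) (unitVec 1) (unitVec 2) =
      lozenge b (m, 2 * i + m) (m + 1, 2 * (i - 1) + (m + 1) + 1) := by
  have hhull : parallelogram (latticePoint b m i) (unitVec 1) (unitVec 2) =
      latticeHexagon b ![m, i - 1, i + m] ![m + 2, i, i + m + 1] := by
    simp only [parallelogram, latticePoint_add_unitVec]
    refine convexHull_eq_latticeHexagon ?_ ?_
    · simp [hexagonVertices, Set.insert_subset_iff, latticePoint_inj]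
      grind
    · simp [Set.insert_subset_iff, mem_latticeHexagon_iff, latticeCoord_latticePoint]
      grind
  ext p
  rw [hhull, lozenge, Set.mem_union, mem_triangle_odd, mem_triangle_even, mem_latticeHexagon_iff]
  simp only [Matrix.cons_val]
  push_cast
  have := latticeCoord_two (b := b) (p := p)
  grind

lemma exists_adj_parallelogram_eq (b : ℕ) (m i : ℤ) (hjk : j < k) :
    ∃ c d : Cell, c.Adj d ∧
      parallelogram (latticePoint b m i) (unitVec j) (unitVec k) = lozenge b c d := by
  obtain ⟨rfl, rfl⟩ | ⟨rfl, rfl⟩ | ⟨rfl, rfl⟩ :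
      (j = 0 ∧ k = 1) ∨ (j = 0 ∧ k = 2) ∨ (j = 1 ∧ k = 2) := by lia
  · exact ⟨_, _, by simp only [Cell.Adj]; lia, parallelogram_unitVec_zero_one b m i⟩
  · exact ⟨_, _, by simp only [Cell.Adj]; lia, parallelogram_unitVec_zero_two b m i⟩
  · exact ⟨_, _, by simp only [Cell.Adj]; lia, parallelogram_unitVec_one_two b m i⟩

lemma isLozenge_lozenge_of_even (h : c.Adj d) (hc : (c.2 - c.1) % 2 = 0) :
    IsLozenge (lozenge b c d) := by
  obtain ⟨m, y⟩ := c
  obtain ⟨i, rfl⟩ : ∃ i, y = 2 * i + m := ⟨(y - m) / 2, by lia⟩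
  rcases h.of_even hc with (rfl | rfl) | rfl
  · refine (isLozenge_iff_parallelogram b).2 ⟨m, i - 1, 0, 1, by decide, ?_⟩
    rw [parallelogram_unitVec_zero_one, lozenge_comm]
    ring_nf
  · refine (isLozenge_iff_parallelogram b).2 ⟨m, i, 0, 2, by decide, ?_⟩
    rw [parallelogram_unitVec_zero_two]
  · refine (isLozenge_iff_parallelogram b).2 ⟨m, i, 1, 2, by decide, ?_⟩
    rw [parallelogram_unitVec_one_two]
    ring_nf

lemma isLozenge_iff (b : ℕ) : IsLozenge L ↔ ∃ c d : Cell, c.Adj d ∧ L = lozenge b c d := by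
  constructor
  · rw [isLozenge_iff_parallelogram b]
    rintro ⟨m, i, j, k, hjk, rfl⟩
    exact exists_adj_parallelogram_eq b m i hjk
  · rintro ⟨c, d, h, rfl⟩
    rcases Int.emod_two_eq_zero_or_one (c.2 - c.1) with hc | hc
    · exact isLozenge_lozenge_of_even h hc
    · rw [lozenge_comm]
      exact isLozenge_lozenge_of_even h.symm (by rw [h.emod_two, hc]; rfl)

end Lozenges

section Symmetries

variable (S : HalfRegion) (b : ℕ) (c d : Cell)

lemma image_rot180_triangle : rot180 S.width b '' triangle b c = triangle b (S.rot c) := by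
  have hinv : Function.Involutive (rot180 S.width b) := fun p => by simp [rot180]
  rw [Set.image_eq_preimage_of_inverse hinv.leftInverse hinv.rightInverse]
  ext p
  have hp : latticeCoord b (rot180 S.width b p) = ![2 * S.width - latticeCoord b p 0,
      -S.width - latticeCoord b p 1, S.width - latticeCoord b p 2] := by
    have := s3_pos
    funext i
    fin_cases i <;> simp [latticeCoord, rot180] <;> field_simp <;> ring
  have hc : Cell.coord (S.rot c) = ![2 * S.width - 1 - Cell.coord c 0,
      -S.width - 1 - Cell.coord c 1, S.width - 1 - Cell.coord c 2] := by
    funext i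
    fin_cases i <;> simp [Cell.coord, HalfRegion.rot] <;> lia
  simp only [Set.mem_preimage, triangle, mem_latticeHexagon_iff, hp, hc, Pi.add_apply,
    Pi.one_apply, Matrix.cons_val]
  push_cast
  grind

lemma image_reflV_triangle : reflV S.width '' triangle b c = triangle b (S.mirror c) := by
  have hinv : Function.Involutive (reflV S.width) := fun p => by simp [reflV]
  rw [Set.image_eq_preimage_of_inverse hinv.leftInverse hinv.rightInverse]
  ext p
  have hp : latticeCoord b (reflV S.width p) = ![2 * S.width - latticeCoord b p 0,
      latticeCoord b p 2 - S.width, latticeCoord b p 1 + S.width] := by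
    have := s3_pos
    funext i
    fin_cases i <;> simp [latticeCoord, reflV] <;> field_simp <;> ring
  have hc : Cell.coord (S.mirror c) = ![2 * S.width - 1 - Cell.coord c 0,
      Cell.coord c 2 - S.width, Cell.coord c 1 + S.width] := by
    funext i
    fin_cases i <;> simp [Cell.coord, HalfRegion.mirror] <;> lia
  simp only [Set.mem_preimage, triangle, mem_latticeHexagon_iff, hp, hc, Pi.add_apply,
    Pi.one_apply, Matrix.cons_val]
  push_cast
  grind

lemma image_rot180_lozenge :
    rot180 S.width b '' lozenge b c d = lozenge b (S.rot c) (S.rot d) := by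
  simp only [lozenge, Set.image_union, image_rot180_triangle]

lemma image_reflV_lozenge :
    reflV S.width '' lozenge b c d = lozenge b (S.mirror c) (S.mirror d) := by
  simp only [lozenge, Set.image_union, image_reflV_triangle]

end Symmetries

lemma mem_lozenge_iff_of_mem_openTriangle {b : ℕ} {p : Pt} {c d e : Cell}
    (hp : p ∈ openTriangle b e) : p ∈ lozenge b c d ↔ e = c ∨ e = d := by
  rw [lozenge, Set.mem_union, mem_triangle_iff_of_mem_openTriangle hp,
    mem_triangle_iff_of_mem_openTriangle hp]

lemma openTriangle_subset_interior_lozenge {b : ℕ} {c d : Cell} :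
    openTriangle b c ⊆ interior (lozenge b c d) :=
  interior_maximal (openTriangle_subset_triangle.trans Set.subset_union_left) isOpen_openTriangle

lemma lozenge_eq_lozenge_iff {b : ℕ} {c d e f : Cell} :
    lozenge b c d = lozenge b e f ↔ c = e ∧ d = f ∨ c = f ∧ d = e := by
  rw [← Set.pair_eq_pair_iff]
  refine ⟨fun h => Set.ext fun g => ?_, fun h => ?_⟩
  · obtain ⟨p, hp⟩ := openTriangle_nonempty b g
    simp only [Set.mem_insert_iff, Set.mem_singleton_iff]
    rw [← mem_lozenge_iff_of_mem_openTriangle hp, h, mem_lozenge_iff_of_mem_openTriangle hp]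
  · rcases Set.pair_eq_pair_iff.1 h with ⟨rfl, rfl⟩ | ⟨rfl, rfl⟩
    · rfl
    · exact lozenge_comm b c d

/-- The matching of the cells by the lozenges of the tiling `T`. -/
def matchingOf (b : ℕ) (T : Set (Set Pt)) (c d : Cell) : Prop := c.Adj d ∧ lozenge b c d ∈ T

/-- The lozenges which correspond to the pairs of matched cells. -/
def tilingOf (b : ℕ) (M : Cell → Cell → Prop) : Set (Set Pt) :=
  {L | ∃ c d, M c d ∧ L = lozenge b c d}

section Tilings

variable {b : ℕ} {D : Set Cell} {R : Set Pt} {T : Set (Set Pt)} {M : Cell → Cell → Prop}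

lemma isPerfectMatching_matchingOf (hR : ∀ c, ∀ p ∈ openTriangle b c, p ∈ R ↔ c ∈ D)
    (hT : IsLozengeTiling R T) : IsPerfectMatching D (matchingOf b T) := by
  obtain ⟨hlozenge, hunion, hdisj⟩ := hT
  have hsymm {c d : Cell} (h : matchingOf b T c d) : matchingOf b T d c :=
    ⟨h.1.symm, lozenge_comm b c d ▸ h.2⟩
  refine ⟨And.left, hsymm, fun {c d} h => ?_, fun {c} hc => ?_, fun {c d e} hd he => ?_⟩
  all_goals obtain ⟨p, hp⟩ := openTriangle_nonempty b c
  · rw [← hR c p hp, ← hunion]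
    exact ⟨_, h.2, (mem_lozenge_iff_of_mem_openTriangle hp).2 (.inl rfl)⟩
  · rw [← hR c p hp, ← hunion] at hc
    obtain ⟨L, hL, hpL⟩ := hc
    obtain ⟨e, f, hef, rfl⟩ := (isLozenge_iff b).1 (hlozenge L hL)
    rcases (mem_lozenge_iff_of_mem_openTriangle hp).1 hpL with rfl | rfl
    · exact ⟨f, hef, hL⟩
    · exact ⟨e, hsymm ⟨hef, hL⟩⟩
  · have heq : lozenge b c d = lozenge b c e := by
      by_contra hne
      exact Set.disjoint_iff_inter_eq_empty.2 (hdisj _ hd.2 _ he.2 hne) |>.notMem_of_mem_left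
        (openTriangle_subset_interior_lozenge hp) (openTriangle_subset_interior_lozenge hp)
    rcases lozenge_eq_lozenge_iff.1 heq with ⟨-, h⟩ | ⟨h, h'⟩
    · exact h
    · exact h'.trans h

lemma eq_biUnion_triangle (hR : ∀ c, ∀ p ∈ openTriangle b c, p ∈ R ↔ c ∈ D)
    (hT : IsLozengeTiling R T) : R = ⋃ c ∈ D, triangle b c := by
  have hM := isPerfectMatching_matchingOf hR hT
  obtain ⟨hlozenge, hunion, -⟩ := hT
  ext p
  rw [← hunion, Set.mem_iUnion₂]
  constructor
  · rintro ⟨L, hL, hp⟩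
    obtain ⟨c, d, hcd, rfl⟩ := (isLozenge_iff b).1 (hlozenge L hL)
    have hcdM : matchingOf b T c d := ⟨hcd, hL⟩
    rcases hp with hp | hp
    · exact ⟨c, hM.mem hcdM, hp⟩
    · exact ⟨d, hM.mem (hM.symm hcdM), hp⟩
  · rintro ⟨c, hc, hp⟩
    obtain ⟨d, hcd⟩ := hM.exists_partner hc
    exact ⟨_, hcd.2, .inl hp⟩

lemma exists_lozenge_eq_of_mem_openTriangle (hM : IsPerfectMatching D M) {L : Set Pt}
    (hL : L ∈ tilingOf b M) {c : Cell} {p : Pt} (hp : p ∈ openTriangle b c) (hpL : p ∈ L) :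
    ∃ d, M c d ∧ L = lozenge b c d := by
  obtain ⟨e, f, hef, rfl⟩ := hL
  rcases (mem_lozenge_iff_of_mem_openTriangle hp).1 hpL with rfl | rfl
  · exact ⟨f, hef, rfl⟩
  · exact ⟨e, hM.symm hef, lozenge_comm b e c⟩

lemma isLozengeTiling_tilingOf (hM : IsPerfectMatching D M) :
    IsLozengeTiling (⋃ c ∈ D, triangle b c) (tilingOf b M) := by
  refine ⟨?_, ?_, fun L hL L' hL' hne => ?_⟩
  · rintro L ⟨c, d, h, rfl⟩
    exact (isLozenge_iff b).2 ⟨c, d, hM.adj h, rfl⟩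
  · ext p
    rw [Set.mem_iUnion₂]
    constructor
    · rintro ⟨L, ⟨c, d, h, rfl⟩, hp | hp⟩
      · exact ⟨c, hM.mem h, hp⟩
      · exact ⟨d, hM.mem (hM.symm h), hp⟩
    · rintro ⟨c, hc, hp⟩
      obtain ⟨d, h⟩ := hM.exists_partner hc
      exact ⟨_, ⟨c, d, h, rfl⟩, .inl hp⟩
  · by_contra hinter
    obtain ⟨p, ⟨hpL, hpL'⟩, c, hp⟩ := exists_mem_openTriangle_of_isOpen (b := b)
      (isOpen_interior.inter isOpen_interior) (Set.nonempty_iff_ne_empty.2 hinter)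
    obtain ⟨d, hd, rfl⟩ := exists_lozenge_eq_of_mem_openTriangle hM hL hp (interior_subset hpL)
    obtain ⟨e, he, rfl⟩ := exists_lozenge_eq_of_mem_openTriangle hM hL' hp (interior_subset hpL')
    exact hne (by rw [hM.unique hd he])

lemma tilingOf_matchingOf (hT : ∀ L ∈ T, IsLozenge L) : tilingOf b (matchingOf b T) = T := by
  ext L
  constructor
  · rintro ⟨c, d, h, rfl⟩
    exact h.2
  · intro hL
    obtain ⟨c, d, hcd, rfl⟩ := (isLozenge_iff b).1 (hT L hL)
    exact ⟨c, d, ⟨hcd, hL⟩, rfl⟩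

lemma matchingOf_tilingOf (hM : IsPerfectMatching D M) : matchingOf b (tilingOf b M) = M := by
  funext c d
  refine propext ⟨?_, fun h => ⟨hM.adj h, c, d, h, rfl⟩⟩
  rintro ⟨-, e, f, h, heq⟩
  rcases lozenge_eq_lozenge_iff.1 heq with ⟨rfl, rfl⟩ | ⟨rfl, rfl⟩
  · exact h
  · exact hM.symm h

lemma card_isLozengeTiling_eq (hR : ∀ c, ∀ p ∈ openTriangle b c, p ∈ R ↔ c ∈ D)
    (hT : IsLozengeTiling R T) {P : Set (Set Pt) → Prop} {Q : (Cell → Cell → Prop) → Prop}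
    (hPQ : ∀ T, IsLozengeTiling R T → (P T ↔ Q (matchingOf b T))) :
    Nat.card {T // IsLozengeTiling R T ∧ P T} = Nat.card {M // IsPerfectMatching D M ∧ Q M} := by
  have htiling {M : Cell → Cell → Prop} (hM : IsPerfectMatching D M) :
      IsLozengeTiling R (tilingOf b M) :=
    eq_biUnion_triangle hR hT ▸ isLozengeTiling_tilingOf hM
  exact Nat.card_congr
    { toFun T := ⟨matchingOf b T, isPerfectMatching_matchingOf hR T.2.1, (hPQ _ T.2.1).1 T.2.2⟩
      invFun M := ⟨tilingOf b M, htiling M.2.1, (hPQ _ (htiling M.2.1)).2 <| by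
        rw [matchingOf_tilingOf M.2.1]
        exact M.2.2⟩
      left_inv T := Subtype.ext (tilingOf_matchingOf T.2.1.1)
      right_inv M := Subtype.ext (matchingOf_tilingOf M.2.1) }

lemma forall_image_mem_iff {f : Pt → Pt} {g : Cell → Cell} (hT : ∀ L ∈ T, IsLozenge L)
    (hg : ∀ {c d : Cell}, c.Adj d → (g c).Adj (g d))
    (hf : ∀ c d, f '' lozenge b c d = lozenge b (g c) (g d)) :
    (∀ L ∈ T, f '' L ∈ T) ↔ ∀ c d, matchingOf b T c d → matchingOf b T (g c) (g d) := by
  constructor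
  · rintro h c d ⟨hadj, hmem⟩
    exact ⟨hg hadj, hf c d ▸ h _ hmem⟩
  · intro h L hL
    obtain ⟨c, d, hcd, rfl⟩ := (isLozenge_iff b).1 (hT L hL)
    rw [hf]
    exact (h c d ⟨hcd, hL⟩).2

lemma rotInvariant_iff (S : HalfRegion) (hT : ∀ L ∈ T, IsLozenge L) :
    RotInvariant S.width b T ↔ S.IsRotInvariant (matchingOf b T) :=
  forall_image_mem_iff hT HalfRegion.adj_rot (image_rot180_lozenge S b)

lemma reflInvariant_iff (S : HalfRegion) (hT : ∀ L ∈ T, IsLozenge L) :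
    ReflInvariant S.width T ↔ S.IsMirrorInvariant (matchingOf b T) :=
  forall_image_mem_iff hT HalfRegion.adj_mirror (image_reflV_lozenge S b)

lemma Mrot_eq_MrotRefl_sq_of_card (S : HalfRegion)
    (hR : ∀ c, ∀ p ∈ openTriangle b c, p ∈ R ↔ c ∈ S.cells)
    (hcard : Nat.card {M // IsPerfectMatching S.cells M ∧ S.IsRotInvariant M} =
      Nat.card {M // IsPerfectMatching S.cells M ∧ S.IsRotInvariant M ∧
        S.IsMirrorInvariant M} ^ 2) :
    Mrot S.width b R = MrotRefl S.width b R ^ 2 := by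
  by_cases hex : ∃ T, IsLozengeTiling R T
  · obtain ⟨T, hT⟩ := hex
    rw [Mrot, MrotRefl, card_isLozengeTiling_eq hR hT fun T hT => rotInvariant_iff S hT.1,
      card_isLozengeTiling_eq (Q := fun M => S.IsRotInvariant M ∧ S.IsMirrorInvariant M) hR hT
        fun T hT => and_congr (rotInvariant_iff S hT.1) (reflInvariant_iff S hT.1)]
    exact hcard
  · have : IsEmpty {T // IsLozengeTiling R T ∧ RotInvariant S.width b T} :=
      ⟨fun T => hex ⟨T, T.2.1⟩⟩
    have : IsEmpty {T // IsLozengeTiling R T ∧ RotInvariant S.width b T ∧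
        ReflInvariant S.width T} := ⟨fun T => hex ⟨T, T.2.1⟩⟩
    simp [Mrot, MrotRefl]

end Tilings

section Region

variable {A a b k x : ℕ} {p : Pt} {c : Cell}

lemma le_coord_and_coord_add_one_le_iff {l₀ l₁ l₂ h₀ h₁ h₂ : ℤ} :
    ![l₀, l₁, l₂] ≤ Cell.coord c ∧ Cell.coord c + 1 ≤ ![h₀, h₁, h₂] ↔
      (l₀ ≤ c.1 ∧ c.1 < h₀) ∧ (2 * l₁ < c.2 - c.1 ∧ c.2 - c.1 ≤ 2 * h₁) ∧
        2 * l₂ ≤ c.2 + c.1 ∧ c.2 + c.1 < 2 * h₂ := by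
  simp only [Pi.le_def, Fin.forall_fin_succ, Cell.coord, Pi.add_apply, Pi.one_apply,
    Fin.succ_zero_eq_one, Fin.succ_one_eq_two, Matrix.cons_val, IsEmpty.forall_iff, and_true]
  lia

lemma mem_hexagon_iff (hp : p ∈ openTriangle b c) : p ∈ hexagon A b ↔
    (0 ≤ c.1 ∧ -(2 * b + c.1) ≤ c.2 ∧ c.2 ≤ 2 * b + c.1) ∧
      c.1 < 2 * A ∧ c.2 + c.1 < 2 * (A + b) ∧ c.1 - c.2 < 2 * (A + b) := by
  rw [hexagon_eq_latticeHexagon, mem_latticeHexagon_iff_of_mem_openTriangle hp,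
    le_coord_and_coord_add_one_le_iff]
  lia

lemma mem_interior_leftHole_iff (hp : p ∈ openTriangle b c) : p ∈ interior (leftHole b k) ↔
    (c.1 = 2 * k - 2 ∧ c.2 = 0) ∨ (c.1 = 2 * k - 1 ∧ -1 ≤ c.2 ∧ c.2 ≤ 1) := by
  rw [leftHole_eq_latticeHexagon, mem_interior_latticeHexagon_iff_of_mem_openTriangle hp,
    le_coord_and_coord_add_one_le_iff]
  lia

lemma mem_interior_rightHole_iff (hp : p ∈ openTriangle b c) : p ∈ interior (rightHole A b k) ↔
    (2 * A - 1 - c.1 = 2 * k - 2 ∧ c.2 = 0) ∨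
      (2 * A - 1 - c.1 = 2 * k - 1 ∧ -1 ≤ c.2 ∧ c.2 ≤ 1) := by
  rw [rightHole_eq_latticeHexagon, mem_interior_latticeHexagon_iff_of_mem_openTriangle hp,
    le_coord_and_coord_add_one_le_iff]
  lia

lemma mem_interior_centralRhombus_iff (hx : 0 < x) (hxa : x ≤ a) (hp : p ∈ openTriangle b c) :
    p ∈ interior (centralRhombus (2 * a - 1) b (2 * x - 1)) ↔
      (c.2 + 2 * a ≤ c.1 + 2 * x ∧ -c.2 + 2 * a ≤ c.1 + 2 * x) ∧
      c.2 + c.1 + 3 ≤ 2 * a + 2 * x ∧ c.1 - c.2 + 3 ≤ 2 * a + 2 * x := by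
  obtain ⟨n, rfl⟩ := Nat.exists_eq_add_of_le hxa
  rw [show 2 * (x + n) - 1 = 2 * n + (2 * x - 1) by lia, centralRhombus_eq_latticeHexagon,
    mem_interior_latticeHexagon_iff_of_mem_openTriangle hp,
    le_coord_and_coord_add_one_le_iff]
  lia

lemma add_le_of_disjoint_interior (hx : 0 < x) (hxa : x ≤ a) (hka : 2 * k ≤ 2 * a - 1)
    (h : Disjoint (interior (leftHole b k))
      (interior (centralRhombus (2 * a - 1) b (2 * x - 1)))) : k + x ≤ a := by
  by_contra hlt
  obtain ⟨p, hp⟩ := openTriangle_nonempty b (2 * k - 1, 0)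
  refine Set.disjoint_left.1 h ((mem_interior_leftHole_iff hp).2 ?_)
    ((mem_interior_centralRhombus_iff hx hxa hp).2 ?_) <;> dsimp only <;> lia

lemma mem_leftCells_holeyHalfHexagon {ks : Finset ℕ} {ha : 0 < a}
    {hk : ∀ k ∈ ks, 0 < k ∧ k + x ≤ a} : c ∈ (holeyHalfHexagon ks a b x ha hk).leftCells ↔
      (0 ≤ c.1 ∧ -(2 * b + c.1) ≤ c.2 ∧ c.2 ≤ 2 * b + c.1) ∧ c.1 < 2 * a - 1 ∧
        ¬ IsRemoved ks a x c := by
  have hwidth : (holeyHalfHexagon ks a b x ha hk).width = 2 * a - 1 := rfl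
  have hcolumn (m : ℕ) : c.2 ∈ (holeyHalfHexagon ks a b x ha hk).black m ∨
      c.2 ∈ (holeyHalfHexagon ks a b x ha hk).white m ↔
        (-(2 * b + m : ℤ) ≤ c.2 ∧ c.2 ≤ 2 * b + m) ∧ ¬ IsRemoved ks a x (m, c.2) := by
    have := Int.emod_two_eq_zero_or_one (c.2 - m)
    change c.2 ∈ columnCells .. ∨ c.2 ∈ columnCells .. ↔ _
    rw [mem_columnCells, mem_columnCells]
    tauto
  obtain ⟨m, y⟩ := c
  constructor
  · rintro ⟨m, hm, rfl, hy⟩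
    obtain ⟨hbound, hrem⟩ := (hcolumn m).1 hy
    exact ⟨⟨by lia, hbound⟩, by dsimp only; lia, hrem⟩
  · rintro ⟨⟨hm, hbound⟩, hlt, hrem⟩
    lift m to ℕ using hm
    exact ⟨m, by dsimp only at *; lia, rfl, (hcolumn m).2 ⟨hbound, hrem⟩⟩

lemma mem_HregC_iff {s : ℕ} {k : Fin s → ℕ} (hx : 0 < x) (hxa : x ≤ a) (ha : 0 < a)
    (hk : ∀ i ∈ univ.image k, 0 < i ∧ i + x ≤ a) (hp : p ∈ openTriangle b c) :
    p ∈ HregC (2 * a - 1) b s k (2 * x - 1) ↔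
      c ∈ (holeyHalfHexagon (univ.image k) a b x ha hk).cells := by
  have hwidth : (holeyHalfHexagon (univ.image k) a b x ha hk).width = 2 * a - 1 := rfl
  have hk' (i : Fin s) : 0 < k i ∧ k i + x ≤ a := hk _ (mem_image_of_mem k (mem_univ i))
  rw [HregC, Hreg, Set.mem_sdiff, Set.mem_sdiff, Set.mem_iUnion, mem_hexagon_iff hp,
    mem_interior_centralRhombus_iff hx hxa hp, HalfRegion.cells, Set.mem_ofPred_eq,
    mem_leftCells_holeyHalfHexagon, mem_leftCells_holeyHalfHexagon]
  simp only [Set.mem_union, mem_interior_leftHole_iff hp, mem_interior_rightHole_iff hp,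
    IsRemoved, mem_image, mem_univ, true_and, exists_exists_eq_and, HalfRegion.rot, hwidth,
    not_or, not_exists]
  constructor
  · rintro ⟨⟨hhex, hholes⟩, hrhombus⟩
    rcases lt_or_ge c.1 (2 * a - 1) with hlt | hge
    · exact Or.inl ⟨hhex.1, hlt, fun i => (hholes i).1, by lia⟩
    · exact Or.inr ⟨by lia, by lia, fun i => by have := hholes i; lia, by lia⟩
  · rintro (⟨hhex, hlt, hholes, hrhombus⟩ | ⟨hhex, hlt, hholes, hrhombus⟩) <;>
      refine ⟨⟨by lia, fun i => ?_⟩, by lia⟩ <;>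
      have := hholes i <;> have := hk' i <;> lia

end Region

end HoleyHexagon

open PP in
/-- Theorem 2.1, equation (2.4):
`M_⊙(H_{2a−1,2b}(k_1,…,k_s; 2x−1)) = M_{⊙,|}(H_{2a−1,2b}(k_1,…,k_s; 2x−1))²`,
under the hypothesis that the `2s` triangular holes and the central rhombus of side
`2x−1` are pairwise disjoint (their interiors do not meet pairwise). -/
theorem Mrot_HregC_eq_MrotRefl_sq (a b s x : ℕ) (ha : 0 < a) (hb : 0 < b) (hs : 0 < s)
    (hx : 0 < x) (hxa : x ≤ a)
    (k : Fin s → ℕ) (hmono : StrictMono k) (hpos : ∀ i, 0 < k i)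
    (hbound : ∀ i, 2 * k i ≤ 2 * a - 1)
    (hdisj : Set.univ.Pairwise (Function.onFun Disjoint
      (fun j : Fin s ⊕ Fin s ⊕ Unit =>
        interior (Sum.elim (fun i => leftHole b (k i))
          (Sum.elim (fun i => rightHole (2 * a - 1) b (k i))
            (fun _ => centralRhombus (2 * a - 1) b (2 * x - 1))) j)))) :
    Mrot (2 * a - 1) b (HregC (2 * a - 1) b s k (2 * x - 1))
      = MrotRefl (2 * a - 1) b (HregC (2 * a - 1) b s k (2 * x - 1)) ^ 2 := by
  have hk : ∀ κ ∈ Finset.univ.image k, 0 < κ ∧ κ + x ≤ a := by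
    rw [Finset.forall_mem_image]
    intro i _
    have hrhombus : Disjoint (interior (leftHole b (k i)))
        (interior (centralRhombus (2 * a - 1) b (2 * x - 1))) :=
      hdisj (Set.mem_univ (Sum.inl i)) (Set.mem_univ (Sum.inr (Sum.inr ()))) Sum.inl_ne_inr
    exact ⟨hpos i, HoleyHexagon.add_le_of_disjoint_interior hx hxa (hbound i) hrhombus⟩
  exact HoleyHexagon.Mrot_eq_MrotRefl_sq_of_card
    (HoleyHexagon.holeyHalfHexagon (Finset.univ.image k) a b x ha hk)
    (fun c p => HoleyHexagon.mem_HregC_iff hx hxa ha hk)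
    (HoleyHexagon.card_isPerfectMatching_holeyHalfHexagon _ a b x ha hx hxa hk)
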